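/- Let n ∈ ℕ, n ≥ 2, and c ∈ ℝ. The operator ((−Δ)³ + c|x|⁻⁶) with domain C₀^∞(ℝⁿ∖{0}) is essentially self-adjoint in L²(ℝⁿ; dⁿx) if and only if c ≥ (64/27)·(7112 + 504n − 126n² + (236 + 12n − 3n²)·√(964 + 60n − 15n²)) when 2 ≤ n ≤ 9, and c ≥ −(n+8)(n+4)n(n−4)(n−8)(n−12)/64 when n ≥ 10. -/

import Mathlib

open MeasureTheory

noncomputable section

/-- A densely defined operator `T` in a complex Hilbert space is *essentially self-adjoint*
if its adjoint `T*` is self-adjoint (equivalently, its closure is self-adjoint). -/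
def EssentiallySelfAdjoint {H : Type*} [NormedAddCommGroup H] [InnerProductSpace ℂ H]
    [CompleteSpace H] (T : H →ₗ.[ℂ] H) : Prop :=
  Dense (T.domain : Set H) ∧ IsSelfAdjoint T.adjoint

/-- The Laplacian of `f : ℝⁿ → ℂ`. -/
def laplacian {n : ℕ} (f : EuclideanSpace ℝ (Fin n) → ℂ) (x : EuclideanSpace ℝ (Fin n)) : ℂ :=
  ∑ i : Fin n, fderiv ℝ (fun y => fderiv ℝ f y (EuclideanSpace.single i (1:ℝ))) x
    (EuclideanSpace.single i (1:ℝ))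

/-- The graph of the operator given by the formal differential expression `L` with domain
`C₀^∞(ℝⁿ \ {0})`, as a subspace of `L²(ℝⁿ) × L²(ℝⁿ)`. -/
def graphOf (n : ℕ) (L : (EuclideanSpace ℝ (Fin n) → ℂ) → (EuclideanSpace ℝ (Fin n) → ℂ)) :
    Submodule ℂ (Lp ℂ 2 (volume : Measure (EuclideanSpace ℝ (Fin n))) ×
      Lp ℂ 2 (volume : Measure (EuclideanSpace ℝ (Fin n)))) :=
  Submodule.span ℂ {p | ∃ φ : EuclideanSpace ℝ (Fin n) → ℂ,
    ContDiff ℝ (⊤ : ℕ∞) φ ∧ HasCompactSupport φ ∧ (0 : EuclideanSpace ℝ (Fin n)) ∉ tsupport φ ∧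
    (p.1 : EuclideanSpace ℝ (Fin n) → ℂ) =ᵐ[volume] φ ∧
    (p.2 : EuclideanSpace ℝ (Fin n) → ℂ) =ᵐ[volume] L φ}

/-- The operator in `L²(ℝⁿ)` given by the formal differential expression `L` with domain
`C₀^∞(ℝⁿ \ {0})`. -/
def opOn (n : ℕ) (L : (EuclideanSpace ℝ (Fin n) → ℂ) → (EuclideanSpace ℝ (Fin n) → ℂ)) :
    Lp ℂ 2 (volume : Measure (EuclideanSpace ℝ (Fin n))) →ₗ.[ℂ]
      Lp ℂ 2 (volume : Measure (EuclideanSpace ℝ (Fin n))) :=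
  (graphOf n L).toLinearPMap

/-- The negative Laplacian `-Δ`. -/
def negLap {n : ℕ} (f : EuclideanSpace ℝ (Fin n) → ℂ) : EuclideanSpace ℝ (Fin n) → ℂ :=
  fun x => -laplacian f x

/-- The operator `(-Δ)³ + c|x|⁻⁶` with domain `C₀^∞(ℝⁿ \ {0})` in `L²(ℝⁿ)`. -/
def T3op (n : ℕ) (c : ℝ) :
    Lp ℂ 2 (volume : Measure (EuclideanSpace ℝ (Fin n))) →ₗ.[ℂ]
      Lp ℂ 2 (volume : Measure (EuclideanSpace ℝ (Fin n))) :=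
  opOn n (fun φ x => negLap^[3] φ x + ((c * (‖x‖ ^ 6)⁻¹ : ℝ) : ℂ) * φ x)

section Abstract

open scoped InnerProductSpace
open Filter Topology LinearPMap

variable {H : Type*} [NormedAddCommGroup H] [InnerProductSpace ℂ H]

/-- A self-adjoint adjoint is symmetric. -/
theorem adjoint_symmetric_of_isSelfAdjoint [CompleteSpace H] {T : H →ₗ.[ℂ] H}
    (h : IsSelfAdjoint T.adjoint)
    (x y : T.adjoint.domain) : ⟪T.adjoint x, (y : H)⟫_ℂ = ⟪(x : H), T.adjoint y⟫_ℂ := by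
  have hd := h.dense_domain
  have := adjoint_isFormalAdjoint hd
  rw [isSelfAdjoint_def.1 h] at this
  exact this x y

theorem norm_le_norm_add_I_smul {T : H →ₗ.[ℂ] H}
    (hs : ∀ x y : T.domain, ⟪T x, (y : H)⟫_ℂ = ⟪(x : H), T y⟫_ℂ) (x : T.domain) :
    ‖(x : H)‖ ≤ ‖T x + Complex.I • (x : H)‖ := by
  have h1 : (⟪(x : H), T x⟫_ℂ).im = 0 := by
    have h2 := hs x x
    rw [← inner_conj_symm] at h2
    exact Complex.conj_eq_iff_im.1 h2
  have h3 : (⟪(x : H), T x + Complex.I • (x : H)⟫_ℂ).im = ‖(x : H)‖ ^ 2 := by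
    rw [inner_add_right, inner_smul_right, inner_self_eq_norm_sq_to_K]
    simp only [Complex.add_im, h1, zero_add, Complex.mul_im, Complex.I_re, Complex.I_im,
      zero_mul, one_mul]
    norm_cast
  have h4 : ‖(x : H)‖ ^ 2 ≤ ‖(x : H)‖ * ‖T x + Complex.I • (x : H)‖ := by
    rw [← h3]
    exact (Complex.abs_im_le_norm _ |> (le_abs_self _).trans).trans (norm_inner_le_norm _ _)
  by_contra! hc
  have : 0 ≤ ‖T x + Complex.I • (x : H)‖ := norm_nonneg _
  nlinarith

/-- The basic criterion for essential self-adjointness. -/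
theorem essentiallySelfAdjoint_of_symmetric [CompleteSpace H] {T : H →ₗ.[ℂ] H}
     (hd : Dense (T.domain : Set H))
    (hs : ∀ x y : T.domain, ⟪T x, (y : H)⟫_ℂ = ⟪(x : H), T y⟫_ℂ)
    (hp : ∀ u : H, (∀ x : T.domain, ⟪u, T x + Complex.I • (x : H)⟫_ℂ = 0) → u = 0)
    (hm : ∀ u : H, (∀ x : T.domain, ⟪u, T x - Complex.I • (x : H)⟫_ℂ = 0) → u = 0) :
    EssentiallySelfAdjoint T := by
  refine ⟨hd, ?_⟩
  have hF : T.adjoint.IsFormalAdjoint T := adjoint_isFormalAdjoint hd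
  have hle : T ≤ T.adjoint := IsFormalAdjoint.le_adjoint hd hs
  have hd' : Dense (T.adjoint.domain : Set H) := hd.mono hle.1
  -- the range of `T + i` is dense
  let R : Submodule ℂ H := LinearMap.range (T.toFun + Complex.I • T.domain.subtype)
  have hR : Dense (R : Set H) := by
    rw [Submodule.dense_iff_topologicalClosure_eq_top, Submodule.topologicalClosure_eq_top_iff,
      Submodule.eq_bot_iff]
    intro u hu
    refine hp u fun x => ?_
    rw [Submodule.mem_orthogonal'] at hu
    exact hu _ ⟨x, rfl⟩
  have happrox : ∀ u : T.adjoint.domain, ∃ x : ℕ → T.domain,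
      Tendsto (fun k => (x k : H)) atTop (𝓝 (u : H)) ∧
      Tendsto (fun k => T (x k)) atTop (𝓝 (T.adjoint u)) := by
    intro u
    obtain ⟨s, hs1, hs2⟩ := mem_closure_iff_seq_limit.1
      (hR (T.adjoint u + Complex.I • (u : H)))
    choose x hx using hs1
    have hx' : ∀ k, T (x k) + Complex.I • (x k : H) = s k := hx
    have hc : CauchySeq fun k => (x k : H) := by
      have := hs2.cauchySeq
      rw [Metric.cauchySeq_iff] at this ⊢
      intro ε hε
      obtain ⟨N, hN⟩ := this ε hε
      refine ⟨N, fun m hmN k hkN => lt_of_le_of_lt ?_ (hN m hmN k hkN)⟩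
      rw [dist_eq_norm, dist_eq_norm, ← hx', ← hx']
      have := norm_le_norm_add_I_smul hs (x m - x k)
      rw [LinearPMap.map_sub] at this
      simp only [Submodule.coe_sub, smul_sub] at this
      rwa [sub_add_sub_comm] at this
    obtain ⟨x₀, hx₀⟩ := cauchySeq_tendsto_of_complete hc
    have hT : Tendsto (fun k => T (x k)) atTop (𝓝 (T.adjoint u + Complex.I • (u : H) -
        Complex.I • x₀)) := by
      refine (hs2.sub (hx₀.const_smul Complex.I)).congr fun k => ?_
      rw [← hx']; abel
    have hz : (u : H) - x₀ = 0 := by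
      refine hm _ fun z => ?_
      have e1 : ⟪x₀, T z⟫_ℂ = ⟪T.adjoint u + Complex.I • (u : H) - Complex.I • x₀, (z : H)⟫_ℂ :=
        tendsto_nhds_unique ((hx₀.inner tendsto_const_nhds).congr fun k => (hs (x k) z).symm)
          (hT.inner tendsto_const_nhds)
      rw [inner_sub_left, inner_sub_right, inner_sub_right, e1, ← hF u z, inner_sub_left,
        inner_add_left]
      simp only [inner_smul_left, inner_smul_right, Complex.conj_I]
      ring
    have hux : x₀ = u := (sub_eq_zero.1 hz).symm
    subst hux
    exact ⟨x, hx₀, by simpa using hT⟩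
  rw [isSelfAdjoint_def]
  refine le_antisymm ?_ ?_
  · have h : T.adjoint.adjoint.IsFormalAdjoint T := fun x y => by
      have := adjoint_isFormalAdjoint hd' x ⟨y, hle.1 y.2⟩
      rw [this, ← hle.2 (x := y) (y := ⟨y, hle.1 y.2⟩) rfl]
    exact IsFormalAdjoint.le_adjoint hd h.symm
  · refine IsFormalAdjoint.le_adjoint hd' fun u v => ?_
    obtain ⟨x, hx1, hx2⟩ := happrox u
    exact tendsto_nhds_unique (hx2.inner tendsto_const_nhds)
      ((hx1.inner tendsto_const_nhds).congr fun k => (hF.symm (x k) v).symm)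

end Abstract

section SmoothFunctions

open Polynomial Filter Topology
open scoped ContDiff

/-- The algebra of smooth complex-valued functions on the line. -/
def smoothAlgebra : Subalgebra ℂ (ℝ → ℂ) where
  carrier := {f | ContDiff ℝ ∞ f}
  mul_mem' := fun {f g} (hf : ContDiff ℝ ∞ f) (hg : ContDiff ℝ ∞ g) => ContDiff.mul hf hg
  add_mem' := fun {f g} (hf : ContDiff ℝ ∞ f) (hg : ContDiff ℝ ∞ g) => ContDiff.add hf hg
  algebraMap_mem' c := show ContDiff ℝ ∞ fun _ : ℝ => c from contDiff_const

/-- Smooth complex-valued functions on the line. -/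
abbrev SmoothFn : Type := smoothAlgebra

instance : CoeFun SmoothFn (fun _ => ℝ → ℂ) := ⟨Subtype.val⟩

theorem SmoothFn.contDiff (f : SmoothFn) : ContDiff ℝ ∞ (f : ℝ → ℂ) := f.2

theorem SmoothFn.differentiable (f : SmoothFn) : Differentiable ℝ (f : ℝ → ℂ) :=
  f.contDiff.differentiable (by simp)

theorem SmoothFn.continuous (f : SmoothFn) : Continuous (f : ℝ → ℂ) := f.contDiff.continuous

theorem SmoothFn.ext' {f g : SmoothFn} (h : ∀ t, (f : ℝ → ℂ) t = (g : ℝ → ℂ) t) : f = g :=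
  Subtype.ext (funext h)

/-- Differentiation of smooth functions. -/
def smoothDeriv : Module.End ℂ SmoothFn where
  toFun f := ⟨deriv (f : ℝ → ℂ), (contDiff_infty_iff_deriv.1 f.2).2⟩
  map_add' f g := SmoothFn.ext' fun t => by
    simpa using deriv_add (f.differentiable t) (g.differentiable t)
  map_smul' c f := SmoothFn.ext' fun t => by
    simpa using deriv_const_smul c (f.differentiable t)

theorem SmoothFn.hasDerivAt (f : SmoothFn) (t : ℝ) :
    HasDerivAt (f : ℝ → ℂ) ((smoothDeriv f : ℝ → ℂ) t) t :=
  (f.differentiable t).hasDerivAt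

theorem smoothDeriv_eq {f g : SmoothFn} (h : ∀ t, HasDerivAt (f : ℝ → ℂ) ((g : ℝ → ℂ) t) t) :
    smoothDeriv f = g :=
  SmoothFn.ext' fun t => (h t).deriv

theorem smoothDeriv_mul (f g : SmoothFn) :
    smoothDeriv (f * g) = smoothDeriv f * g + f * smoothDeriv g :=
  smoothDeriv_eq fun t => by simpa using (f.hasDerivAt t).mul (g.hasDerivAt t)

/-- The constant coefficient differential operator `P(∂)`. -/
def diffOp (P : ℂ[X]) : Module.End ℂ SmoothFn := aeval smoothDeriv P

theorem diffOp_mul (P Q : ℂ[X]) (f : SmoothFn) : diffOp (P * Q) f = diffOp P (diffOp Q f) := by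
  simp [diffOp]

theorem diffOp_add (P Q : ℂ[X]) (f : SmoothFn) : diffOp (P + Q) f = diffOp P f + diffOp Q f := by
  simp [diffOp]

theorem diffOp_sub (P Q : ℂ[X]) (f : SmoothFn) : diffOp (P - Q) f = diffOp P f - diffOp Q f := by
  simp [diffOp]

theorem diffOp_neg (P : ℂ[X]) (f : SmoothFn) : diffOp (-P) f = -diffOp P f := by
  simp [diffOp]

@[simp] theorem diffOp_C (c : ℂ) (f : SmoothFn) : diffOp (C c) f = c • f := by
  simp [diffOp, Module.algebraMap_end_apply]

@[simp] theorem diffOp_X (f : SmoothFn) : diffOp X f = smoothDeriv f := by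
  simp [diffOp]

@[simp] theorem diffOp_one (f : SmoothFn) : diffOp 1 f = f := by
  simp [diffOp]

theorem diffOp_induction {p : ℂ[X] → Prop} (hC : ∀ c, p (C c))
    (hadd : ∀ P Q, p P → p Q → p (P + Q)) (hX : ∀ P, p P → p (P * X)) (P : ℂ[X]) : p P := by
  induction P using Polynomial.induction_on with
  | C c => exact hC c
  | add P Q hP hQ => exact hadd P Q hP hQ
  | monomial k c h => rw [pow_succ, ← mul_assoc]; exact hX _ h

theorem diffOp_eventuallyEq (P : ℂ[X]) {f g : SmoothFn} {t : ℝ}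
    (h : (f : ℝ → ℂ) =ᶠ[𝓝 t] g) : (diffOp P f : ℝ → ℂ) =ᶠ[𝓝 t] diffOp P g := by
  induction P using diffOp_induction generalizing f g with
  | hC c => simpa using h.const_smul c
  | hadd P Q hP hQ => simpa [diffOp_add] using (hP h).add (hQ h)
  | hX P hP =>
    simp only [diffOp_mul, diffOp_X]
    exact hP h.deriv

theorem diffOp_tsupport (P : ℂ[X]) (f : SmoothFn) :
    tsupport (diffOp P f : ℝ → ℂ) ⊆ tsupport (f : ℝ → ℂ) := by
  intro t ht
  contrapose! ht
  rw [notMem_tsupport_iff_eventuallyEq] at ht ⊢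
  have := diffOp_eventuallyEq P (f := f) (g := 0) ht
  simpa using this

theorem diffOp_hasCompactSupport (P : ℂ[X]) {f : SmoothFn}
    (h : HasCompactSupport (f : ℝ → ℂ)) : HasCompactSupport (diffOp P f : ℝ → ℂ) :=
  IsCompact.of_isClosed_subset h (isClosed_tsupport _) (diffOp_tsupport P f)

/-- The exponential `t ↦ exp (z t)`. -/
def expFn (z : ℂ) : SmoothFn :=
  ⟨fun t => Complex.exp (z * t), show ContDiff ℝ ∞ fun t : ℝ => Complex.exp (z * t) from
    (contDiff_const.mul Complex.ofRealCLM.contDiff).cexp⟩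

theorem expFn_apply (z : ℂ) (t : ℝ) : (expFn z : ℝ → ℂ) t = Complex.exp (z * t) := rfl

theorem expFn_mul (z w : ℂ) : expFn z * expFn w = expFn (z + w) :=
  SmoothFn.ext' fun t => by simp [expFn_apply, ← Complex.exp_add, add_mul]

@[simp] theorem expFn_zero : expFn 0 = 1 := SmoothFn.ext' fun t => by simp [expFn_apply]

theorem norm_expFn (z : ℂ) (t : ℝ) : ‖(expFn z : ℝ → ℂ) t‖ = Real.exp (z.re * t) := by
  simp [expFn_apply, Complex.norm_exp]

theorem smoothDeriv_expFn (z : ℂ) : smoothDeriv (expFn z) = z • expFn z :=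
  smoothDeriv_eq fun t => by
    have h : HasDerivAt (fun t : ℝ => z * (t : ℂ)) z t := by
      simpa using (Complex.ofRealCLM.hasDerivAt (x := t)).const_mul z
    have h2 := h.cexp
    rw [mul_comm] at h2
    exact h2

theorem diffOp_expFn_mul (P : ℂ[X]) (z : ℂ) (f : SmoothFn) :
    diffOp P (expFn z * f) = expFn z * diffOp (P.comp (X + C z)) f := by
  induction P using diffOp_induction generalizing f with
  | hC c => simp
  | hadd P Q hP hQ => simp [diffOp_add, hP, hQ, mul_add]
  | hX P hP =>
    rw [diffOp_mul, diffOp_X, smoothDeriv_mul, smoothDeriv_expFn, mul_comp, diffOp_mul, X_comp,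
      diffOp_add, diffOp_X, diffOp_C, ← hP]
    congr 1
    rw [mul_add, add_comm, smul_mul_assoc, mul_smul_comm]

theorem diffOp_expFn (P : ℂ[X]) (z : ℂ) : diffOp P (expFn z) = P.eval z • expFn z := by
  induction P using diffOp_induction with
  | hC c => simp
  | hadd P Q hP hQ => simp [diffOp_add, hP, hQ, add_smul]
  | hX P hP => simp [diffOp_mul, smoothDeriv_expFn, hP, smul_smul, mul_comm]

/-- Integration by parts for two classes of functions whose products are integrable. -/
theorem integral_diffOp_mul_of_integrable {A B : SmoothFn → Prop}
    (hA : ∀ Q f, A f → A (diffOp Q f)) (hB : ∀ Q f, B f → B (diffOp Q f))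
    (hAB : ∀ f g, A f → B g → Integrable fun t => (f : ℝ → ℂ) t * (g : ℝ → ℂ) t)
    (P : ℂ[X]) {k y : SmoothFn} (hk : A k) (hy : B y) :
    ∫ t, (diffOp P k : ℝ → ℂ) t * (y : ℝ → ℂ) t =
      ∫ t, (k : ℝ → ℂ) t * (diffOp (P.comp (-X)) y : ℝ → ℂ) t := by
  induction P using diffOp_induction generalizing k y with
  | hC c => simp [mul_assoc, mul_left_comm]
  | hadd P Q hP hQ =>
    simp only [diffOp_add, add_comp]
    simp only [AddMemClass.coe_add, Pi.add_apply, add_mul, mul_add]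
    rw [integral_add (hAB _ _ (hA P _ hk) hy) (hAB _ _ (hA Q _ hk) hy),
      integral_add (hAB _ _ hk (hB _ _ hy)) (hAB _ _ hk (hB _ _ hy)), hP hk hy, hQ hk hy]
  | hX P hP =>
    have h1 : ∀ f, A f → A (smoothDeriv f) := fun f hf => by simpa using hA X f hf
    have h2 : ∀ f, B f → B (smoothDeriv f) := fun f hf => by simpa using hB X f hf
    have := integral_mul_deriv_eq_deriv_mul_of_integrable (u := (k : ℝ → ℂ))
      (fun t _ => k.hasDerivAt t) (fun t _ => (diffOp (P.comp (-X)) y).hasDerivAt t)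
      (hAB _ _ hk (h2 _ (hB _ _ hy))) (hAB _ _ (h1 _ hk) (hB _ _ hy)) (hAB _ _ hk (hB _ _ hy))
    rw [diffOp_mul, diffOp_X, hP (h1 _ hk) hy, ← neg_eq_iff_eq_neg.2 this, mul_comp, X_comp,
      mul_neg,
      ← integral_neg]
    congr 1
    ext t
    rw [← neg_one_mul (P.comp (-X) * X), mul_comm _ X, ← C_1, ← C_neg, diffOp_mul, diffOp_C,
      diffOp_mul, diffOp_X]
    simp

theorem integral_diffOp_mul (P : ℂ[X]) {k y : SmoothFn} (hk : HasCompactSupport (k : ℝ → ℂ)) :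
    ∫ t, (diffOp P k : ℝ → ℂ) t * (y : ℝ → ℂ) t =
      ∫ t, (k : ℝ → ℂ) t * (diffOp (P.comp (-X)) y : ℝ → ℂ) t :=
  integral_diffOp_mul_of_integrable (A := fun f => HasCompactSupport (f : ℝ → ℂ))
    (B := fun _ => True) (fun Q _ hf => diffOp_hasCompactSupport Q hf) (fun _ _ _ => trivial)
    (fun f g hf _ => (f.continuous.mul g.continuous).integrable_of_hasCompactSupport hf.mul_right)
    P hk trivial

/-- The complex conjugate of a smooth function. -/
def conjFn (f : SmoothFn) : SmoothFn :=
  ⟨fun t => star ((f : ℝ → ℂ) t), Complex.conjCLE.contDiff.comp f.contDiff⟩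

theorem conjFn_apply (f : SmoothFn) (t : ℝ) : (conjFn f : ℝ → ℂ) t = star ((f : ℝ → ℂ) t) := rfl

theorem smoothDeriv_conjFn (f : SmoothFn) : smoothDeriv (conjFn f) = conjFn (smoothDeriv f) :=
  smoothDeriv_eq fun t => (f.hasDerivAt t).star

theorem diffOp_conjFn (P : ℂ[X]) (f : SmoothFn) :
    diffOp P (conjFn f) = conjFn (diffOp (P.map (starRingEnd ℂ)) f) := by
  induction P using diffOp_induction generalizing f with
  | hC c => exact SmoothFn.ext' fun t => by simp [conjFn_apply]
  | hadd P Q hP hQ =>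
    exact SmoothFn.ext' fun t => by simp [diffOp_add, hP, hQ, conjFn_apply]
  | hX P hP => simp [diffOp_mul, smoothDeriv_conjFn, hP]

/-- The reflection `s ↦ f (t - s)`. -/
def reflectFn (t : ℝ) (f : SmoothFn) : SmoothFn :=
  ⟨fun s => (f : ℝ → ℂ) (t - s), f.contDiff.comp (contDiff_const.sub contDiff_id)⟩

theorem reflectFn_apply (t s : ℝ) (f : SmoothFn) :
    (reflectFn t f : ℝ → ℂ) s = (f : ℝ → ℂ) (t - s) := rfl

theorem reflectFn_hasCompactSupport (t : ℝ) {f : SmoothFn}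
    (h : HasCompactSupport (f : ℝ → ℂ)) : HasCompactSupport (reflectFn t f : ℝ → ℂ) :=
  h.comp_homeomorph (Homeomorph.subLeft t)

theorem smoothDeriv_reflectFn (t : ℝ) (f : SmoothFn) :
    smoothDeriv (reflectFn t f) = -reflectFn t (smoothDeriv f) :=
  smoothDeriv_eq fun s => by
    have h : HasDerivAt (fun s => t - s) (-1) s := by
      simpa using (hasDerivAt_id s).const_sub t
    have := (f.hasDerivAt (t - s)).scomp s h
    refine HasDerivAt.congr_deriv (f := (reflectFn t f : ℝ → ℂ)) this ?_
    simp [reflectFn_apply]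

theorem diffOp_reflectFn (P : ℂ[X]) (t : ℝ) (f : SmoothFn) :
    diffOp P (reflectFn t f) = reflectFn t (diffOp (P.comp (-X)) f) := by
  induction P using diffOp_induction generalizing f with
  | hC c => exact SmoothFn.ext' fun s => by simp [reflectFn_apply]
  | hadd P Q hP hQ =>
    exact SmoothFn.ext' fun s => by simp [diffOp_add, hP, hQ, reflectFn_apply]
  | hX P hP =>
    rw [diffOp_mul, diffOp_X, smoothDeriv_reflectFn, map_neg, hP, mul_comp, X_comp,
      ← neg_one_mul (X : ℂ[X]), ← C_1, ← C_neg, mul_left_comm, diffOp_mul, diffOp_C,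
      diffOp_mul, diffOp_X]
    exact SmoothFn.ext' fun s => by simp [reflectFn_apply]

end SmoothFunctions

section Decay

open Polynomial Filter Topology Asymptotics
open scoped ContDiff

/-- A solution of a first order equation `D y - z y = q` inherits the decay `O(exp t)` of the right
hand side at `-∞` if `|Re z| ≥ 3` and `y = o(exp (-3 t))`. -/
theorem isBigO_exp_of_hasDerivAt {y q : ℝ → ℂ} {z : ℂ} (hz : 3 ≤ |z.re|)
    (hy : ∀ t, HasDerivAt y (z * y t + q t) t) (hq : q =O[atBot] Real.exp)
    (h0 : Tendsto (fun t => Real.exp (3 * t) * ‖y t‖) atBot (𝓝 0)) : y =O[atBot] Real.exp := by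
  obtain ⟨C, hC0, hC⟩ := hq.exists_nonneg
  rw [IsBigOWith] at hC
  obtain ⟨T, hT⟩ := eventually_atBot.1 (hC.and (eventually_le_atBot (0 : ℝ)))
  set a := z.re with ha
  set g : ℝ → ℂ := fun t => Complex.exp (-z * t) * y t with hg
  have hg' : ∀ t : ℝ, HasDerivAt g (Complex.exp (-z * t) * q t) t := by
    intro t
    have h1 := (expFn (-z)).hasDerivAt t
    rw [smoothDeriv_expFn] at h1
    have := h1.mul (hy t)
    refine this.congr_deriv ?_
    simp only [SetLike.val_smul, Pi.smul_apply, expFn_apply, smul_eq_mul]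
    ring
  have hgn : ∀ t, ‖g t‖ = Real.exp (-a * t) * ‖y t‖ := fun t => by
    rw [hg, norm_mul, ← expFn_apply, norm_expFn, Complex.neg_re]
  have ha1 : 1 - a ≠ 0 := by
    intro h
    have : a = 1 := by linarith
    rw [this] at hz
    norm_num at hz
  have key : ∀ s t, s ≤ t → t ≤ T →
      ‖g t - g s‖ ≤ C / (1 - a) * (Real.exp ((1 - a) * t) - Real.exp ((1 - a) * s)) := by
    intro s t hst htT
    have hB : ∀ x : ℝ, HasDerivAt
        (fun x => C / (1 - a) * (Real.exp ((1 - a) * x) - Real.exp ((1 - a) * s)))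
        (C * Real.exp ((1 - a) * x)) x := by
      intro x
      have h1 : HasDerivAt (fun x => (1 - a) * x) (1 - a) x := by
        simpa using (hasDerivAt_id x).const_mul (1 - a)
      refine ((h1.exp.sub_const _).const_mul (C / (1 - a))).congr_deriv ?_
      field_simp
    refine image_norm_le_of_norm_deriv_right_le_deriv_boundary'
      (f := fun x => g x - g s) (f' := fun x => Complex.exp (-z * x) * q x) (a := s) (b := t)
      (B := fun x => C / (1 - a) * (Real.exp ((1 - a) * x) - Real.exp ((1 - a) * s)))
      (B' := fun x => C * Real.exp ((1 - a) * x)) ?_ ?_ ?_ ?_ ?_ ?_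
      (Set.right_mem_Icc.2 hst)
    · exact fun x _ => ((hg' x).sub_const _).continuousAt.continuousWithinAt
    · exact fun x _ => ((hg' x).sub_const _).hasDerivWithinAt
    · simp
    · exact fun x _ => (hB x).continuousAt.continuousWithinAt
    · exact fun x _ => (hB x).hasDerivWithinAt
    · intro x hx
      have h2 := (hT x (hx.2.le.trans htT)).1
      rw [Real.norm_eq_abs, Real.abs_exp] at h2
      rw [norm_mul, ← expFn_apply, norm_expFn, Complex.neg_re, ← ha]
      calc Real.exp (-a * x) * ‖q x‖ ≤ Real.exp (-a * x) * (C * Real.exp x) := by gcongr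
        _ = C * Real.exp ((1 - a) * x) := by
          rw [show (1 - a) * x = -a * x + x by ring, Real.exp_add]; ring
  have hyn : ∀ t, ‖y t‖ = Real.exp (a * t) * ‖g t‖ := fun t => by
    rw [hgn, ← mul_assoc, ← Real.exp_add]; simp
  rcases le_abs'.1 hz with h | h
  · -- the case of a negative real part
    have hlim : Tendsto (fun s => ‖g s‖) atBot (𝓝 0) := by
      refine squeeze_zero' (Eventually.of_forall fun _ => norm_nonneg _) ?_ h0
      filter_upwards [eventually_le_atBot (0 : ℝ)] with s hs
      rw [hgn]
      refine mul_le_mul_of_nonneg_right (Real.exp_le_exp.2 ?_) (norm_nonneg _)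
      nlinarith [mul_nonneg_of_nonpos_of_nonpos (by linarith : a + 3 ≤ 0) hs]
    refine IsBigO.of_bound (C / (1 - a)) (eventually_atBot.2 ⟨T, fun t ht => ?_⟩)
    have h3 : ‖g t‖ ≤ C / (1 - a) * Real.exp ((1 - a) * t) + 0 := by
      refine ge_of_tendsto (tendsto_const_nhds.add hlim) ?_
      filter_upwards [eventually_le_atBot t] with s hs
      have h4 := key s t hs ht
      have h5 : 0 ≤ C / (1 - a) * Real.exp ((1 - a) * s) :=
        mul_nonneg (div_nonneg hC0 (by linarith)) (Real.exp_pos _).le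
      have h6 := norm_le_norm_sub_add (g t) (g s)
      linarith
    rw [hyn, Real.norm_eq_abs, Real.abs_exp]
    calc Real.exp (a * t) * ‖g t‖
        ≤ Real.exp (a * t) * (C / (1 - a) * Real.exp ((1 - a) * t) + 0) := by gcongr
      _ = C / (1 - a) * Real.exp t := by
        rw [show t = a * t + (1 - a) * t by ring, Real.exp_add]; ring_nf
  · refine IsBigO.of_bound (‖g T‖ + C / (a - 1)) (eventually_atBot.2 ⟨T, fun t ht => ?_⟩)
    have hT0 := (hT t ht).2
    have h4 := key t T ht le_rfl
    have h3 : ‖g t‖ ≤ ‖g T‖ + C / (a - 1) * Real.exp ((1 - a) * t) := by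
      have h5 : 0 ≤ C / (a - 1) * Real.exp ((1 - a) * T) :=
        mul_nonneg (div_nonneg hC0 (by linarith)) (Real.exp_pos _).le
      have h6 := norm_le_norm_sub_add (g t) (g T)
      rw [norm_sub_rev] at h6
      have h7 : C / (1 - a) = - (C / (a - 1)) := by
        rw [← neg_sub a 1, div_neg]
      rw [h7] at h4
      linarith
    rw [hyn, Real.norm_eq_abs, Real.abs_exp]
    calc Real.exp (a * t) * ‖g t‖
        ≤ Real.exp (a * t) * (‖g T‖ + C / (a - 1) * Real.exp ((1 - a) * t)) := by gcongr
      _ = ‖g T‖ * Real.exp (a * t) + C / (a - 1) * Real.exp t := by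
        conv_rhs => rw [show Real.exp t = Real.exp (a * t + (1 - a) * t) by ring_nf, Real.exp_add]
        ring
      _ ≤ ‖g T‖ * Real.exp t + C / (a - 1) * Real.exp t := by
        gcongr
        nlinarith
      _ = _ := by ring

/-- Regularity at `-∞` for solutions of constant coefficient equations. -/
theorem isBigO_exp_of_diffOp {P : ℂ[X]} (hP0 : P ≠ 0) (hP : ∀ z, P.IsRoot z → 3 ≤ |z.re|)
    {f : SmoothFn}
    (hf : ∀ Q, Tendsto (fun t => Real.exp (3 * t) * ‖(diffOp Q f : ℝ → ℂ) t‖) atBot (𝓝 0))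
    (hPf : (diffOp P f : ℝ → ℂ) =O[atBot] Real.exp) : (f : ℝ → ℂ) =O[atBot] Real.exp := by
  have main : ∀ s : Multiset ℂ, (∀ z ∈ s, 3 ≤ |z.re|) →
      (diffOp (s.map fun z => X - C z).prod f : ℝ → ℂ) =O[atBot] Real.exp →
      (f : ℝ → ℂ) =O[atBot] Real.exp := by
    intro s
    induction s using Multiset.induction_on with
    | empty => intro _ h; simpa using h
    | cons z s ih =>
      intro hs h
      refine ih (fun w hw => hs w (Multiset.mem_cons_of_mem hw)) ?_
      rw [Multiset.map_cons, Multiset.prod_cons, diffOp_mul] at h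
      refine isBigO_exp_of_hasDerivAt (hs z (Multiset.mem_cons_self _ _)) (fun t => ?_) h (hf _)
      refine (SmoothFn.hasDerivAt _ t).congr_deriv ?_
      simp [diffOp_sub]
  refine main P.roots (fun z hz => hP z (Polynomial.isRoot_of_mem_roots hz)) ?_
  have hsp := (IsAlgClosed.splits P).eq_prod_roots
  rw [hsp, diffOp_mul, diffOp_C] at hPf
  have hl : P.leadingCoeff ≠ 0 := by simpa using hP0
  have h2 := hPf.const_mul_left (P.leadingCoeff⁻¹)
  refine h2.congr_left fun t => ?_
  simp [← mul_assoc, inv_mul_cancel₀ hl]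

end Decay

section Mollification

open Polynomial Filter Topology Asymptotics
open scoped ContDiff ENNReal

/-- The convolution of a locally integrable function with a test function. -/
def convFn {w : ℝ → ℂ} (hw : LocallyIntegrable w) (κ : SmoothFn)
    (hκ : HasCompactSupport (κ : ℝ → ℂ)) : SmoothFn :=
  ⟨convolution w (κ : ℝ → ℂ) (ContinuousLinearMap.mul ℝ ℂ) volume,
    HasCompactSupport.contDiff_convolution_right _ hκ hw κ.contDiff⟩

theorem convFn_apply {w : ℝ → ℂ} (hw : LocallyIntegrable w) (κ : SmoothFn)
    (hκ : HasCompactSupport (κ : ℝ → ℂ)) (t : ℝ) :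
    (convFn hw κ hκ : ℝ → ℂ) t = ∫ s, w s * (κ : ℝ → ℂ) (t - s) := rfl

theorem smoothDeriv_convFn {w : ℝ → ℂ} (hw : LocallyIntegrable w) (κ : SmoothFn)
    (hκ : HasCompactSupport (κ : ℝ → ℂ)) :
    smoothDeriv (convFn hw κ hκ) = convFn hw (smoothDeriv κ) hκ.deriv :=
  smoothDeriv_eq fun t => HasCompactSupport.hasDerivAt_convolution_right
    (ContinuousLinearMap.mul ℝ ℂ) hw hκ (κ.contDiff.of_le (by exact_mod_cast le_top)) t

theorem integrable_mul_translate {w : ℝ → ℂ} (hw : LocallyIntegrable w) (κ : SmoothFn)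
    (hκ : HasCompactSupport (κ : ℝ → ℂ)) (t : ℝ) :
    Integrable fun s => w s * (κ : ℝ → ℂ) (t - s) :=
  hκ.convolutionExists_right (ContinuousLinearMap.mul ℝ ℂ) hw κ.continuous t

theorem diffOp_convFn {w : ℝ → ℂ} (hw : LocallyIntegrable w) (P : ℂ[X]) (κ : SmoothFn)
    (hκ : HasCompactSupport (κ : ℝ → ℂ)) :
    diffOp P (convFn hw κ hκ) = convFn hw (diffOp P κ) (diffOp_hasCompactSupport P hκ) := by
  induction P using diffOp_induction generalizing κ with
  | hC c =>
    refine SmoothFn.ext' fun t => ?_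
    simp only [diffOp_C, SetLike.val_smul, Pi.smul_apply, convFn_apply, smul_eq_mul]
    rw [← integral_const_mul]
    simp only [mul_left_comm]
  | hadd P Q hP hQ =>
    refine SmoothFn.ext' fun t => ?_
    simp only [diffOp_add, hP, hQ, AddMemClass.coe_add, Pi.add_apply, convFn_apply, mul_add]
    rw [integral_add (integrable_mul_translate hw _ (diffOp_hasCompactSupport P hκ) t)
      (integrable_mul_translate hw _ (diffOp_hasCompactSupport Q hκ) t)]
  | hX P hP =>
    have hκ' : HasCompactSupport (smoothDeriv κ : ℝ → ℂ) := hκ.deriv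
    have h := hP (smoothDeriv κ) hκ'
    rw [diffOp_mul, diffOp_X, smoothDeriv_convFn, h]
    congr 1
    rw [diffOp_mul, diffOp_X]

/-- Young's inequality for the convolution with an integrable function. -/
theorem lintegral_sq_convolution_le {f k : ℝ → ℝ≥0∞} (hf : AEMeasurable f) (hk : Measurable k) :
    ∫⁻ t, (∫⁻ s, f s * k (t - s)) ^ 2 ≤ (∫⁻ s, k s) ^ 2 * ∫⁻ s, f s ^ 2 := by
  have hsq : ∀ x : ℝ≥0∞, (x ^ (1 / 2 : ℝ)) ^ 2 = x := fun x => by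
    rw [← ENNReal.rpow_natCast, ← ENNReal.rpow_mul]; norm_num
  have h1 : ∀ t, (∫⁻ s, f s * k (t - s)) ^ 2 ≤ (∫⁻ s, k s) * ∫⁻ s, f s ^ 2 * k (t - s) := by
    intro t
    have hm : AEMeasurable fun s => k (t - s) :=
      (hk.comp (measurable_const.sub measurable_id)).aemeasurable
    have := ENNReal.lintegral_mul_le_Lp_mul_Lq volume Real.HolderConjugate.two_two
      (f := fun s => k (t - s) ^ (1 / 2 : ℝ)) (g := fun s => f s * k (t - s) ^ (1 / 2 : ℝ))
      (hm.pow_const _) (hf.mul (hm.pow_const _))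
    have e1 : ∀ s, ((fun s => k (t - s) ^ (1 / 2 : ℝ)) * fun s => f s * k (t - s) ^ (1 / 2 : ℝ)) s
        = f s * k (t - s) := fun s => by
      simp only [Pi.mul_apply]
      rw [mul_left_comm, ← sq, hsq]
    simp only [e1] at this
    have h2 := pow_le_pow_left₀ zero_le this 2
    refine h2.trans (le_of_eq ?_)
    rw [mul_pow, hsq, hsq]
    simp only [ENNReal.rpow_ofNat, mul_pow, hsq]
    rw [lintegral_sub_left_eq_self]
  calc ∫⁻ t, (∫⁻ s, f s * k (t - s)) ^ 2
      ≤ ∫⁻ t, (∫⁻ s, k s) * ∫⁻ s, f s ^ 2 * k (t - s) := lintegral_mono h1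
    _ = (∫⁻ s, k s) * ∫⁻ t, ∫⁻ s, f s ^ 2 * k (t - s) := by
      rw [lintegral_const_mul'']
      exact AEMeasurable.lintegral_prod_right' (f := fun p : ℝ × ℝ => f p.2 ^ 2 * k (p.1 - p.2))
        (((hf.comp_snd).pow_const 2).mul
          (hk.comp (measurable_fst.sub measurable_snd)).aemeasurable)
    _ = (∫⁻ s, k s) * ∫⁻ s, ∫⁻ t, f s ^ 2 * k (t - s) := by
      rw [lintegral_lintegral_swap]
      exact (((hf.comp_snd).pow_const 2).mul
          (hk.comp (measurable_fst.sub measurable_snd)).aemeasurable)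
    _ = (∫⁻ s, k s) * ∫⁻ s, f s ^ 2 * ∫⁻ t, k t := by
      congr 1
      refine lintegral_congr fun s => ?_
      rw [lintegral_const_mul _
        (show Measurable fun t => k (t - s) from hk.comp (measurable_id.sub measurable_const)),
        lintegral_sub_right_eq_self]
    _ = _ := by
      rw [lintegral_mul_const'' _ (hf.pow_const 2)]
      ring

theorem enorm_convFn_le {w : ℝ → ℂ} (hw : LocallyIntegrable w) (κ : SmoothFn)
    (hκ : HasCompactSupport (κ : ℝ → ℂ)) (t : ℝ) :
    ‖(convFn hw κ hκ : ℝ → ℂ) t‖ₑ ≤ ∫⁻ s, ‖w s‖ₑ * ‖(κ : ℝ → ℂ) (t - s)‖ₑ := by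
  rw [convFn_apply]
  refine (enorm_integral_le_lintegral_enorm _).trans (le_of_eq ?_)
  simp only [enorm_mul]

theorem memLp_two_iff_lintegral_sq {f : ℝ → ℂ} (hf : AEStronglyMeasurable f) :
    MemLp f 2 ↔ ∫⁻ t, ‖f t‖ₑ ^ 2 < ⊤ := by
  rw [MemLp, and_iff_right hf, eLpNorm_lt_top_iff_lintegral_rpow_enorm_lt_top (by simp) (by simp)]
  simp

theorem memLp_convFn {w : ℝ → ℂ} (hw2 : MemLp w 2) (hw : LocallyIntegrable w) (κ : SmoothFn)
    (hκ : HasCompactSupport (κ : ℝ → ℂ)) : MemLp (convFn hw κ hκ : ℝ → ℂ) 2 := by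
  rw [memLp_two_iff_lintegral_sq (convFn hw κ hκ).continuous.aestronglyMeasurable]
  calc ∫⁻ t, ‖(convFn hw κ hκ : ℝ → ℂ) t‖ₑ ^ 2
      ≤ ∫⁻ t, (∫⁻ s, ‖w s‖ₑ * ‖(κ : ℝ → ℂ) (t - s)‖ₑ) ^ 2 :=
        lintegral_mono fun t => pow_le_pow_left₀ zero_le (enorm_convFn_le hw κ hκ t) 2
    _ ≤ (∫⁻ s, ‖(κ : ℝ → ℂ) s‖ₑ) ^ 2 * ∫⁻ s, ‖w s‖ₑ ^ 2 :=
      lintegral_sq_convolution_le hw2.1.enorm κ.continuous.enorm.measurable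
    _ < ⊤ := by
      refine ENNReal.mul_lt_top (ENNReal.pow_lt_top ?_)
        ((memLp_two_iff_lintegral_sq hw2.1).1 hw2)
      exact (κ.continuous.integrable_of_hasCompactSupport hκ).hasFiniteIntegral

theorem tendsto_convFn {w : ℝ → ℂ} (hw2 : MemLp w 2) (hw : LocallyIntegrable w) (κ : SmoothFn)
    (hκ : HasCompactSupport (κ : ℝ → ℂ)) :
    Tendsto (convFn hw κ hκ : ℝ → ℂ) atBot (𝓝 0) ∧
      Tendsto (convFn hw κ hκ : ℝ → ℂ) atTop (𝓝 0) := by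
  set g := convFn hw κ hκ with hg
  have h1 : MemLp (g : ℝ → ℂ) 2 := memLp_convFn hw2 hw κ hκ
  have h2 : MemLp (smoothDeriv g : ℝ → ℂ) 2 := by
    rw [hg, smoothDeriv_convFn]
    exact memLp_convFn hw2 hw _ _
  have hs : ∀ t, HasDerivAt (fun t => star ((g : ℝ → ℂ) t)) (star ((smoothDeriv g : ℝ → ℂ) t)) t :=
    fun t => (g.hasDerivAt t).star
  have hd : ∀ t, HasDerivAt (fun t => (g : ℝ → ℂ) t * star ((g : ℝ → ℂ) t))
      ((smoothDeriv g : ℝ → ℂ) t * star ((g : ℝ → ℂ) t) +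
        (g : ℝ → ℂ) t * star ((smoothDeriv g : ℝ → ℂ) t)) t := fun t =>
    (g.hasDerivAt t).mul (hs t)
  have i1 : Integrable fun t => (g : ℝ → ℂ) t * star ((g : ℝ → ℂ) t) := h1.integrable_mul h1.star
  have i2 : Integrable fun t => ((smoothDeriv g : ℝ → ℂ) t * star ((g : ℝ → ℂ) t) +
        (g : ℝ → ℂ) t * star ((smoothDeriv g : ℝ → ℂ) t)) :=
    (h2.integrable_mul h1.star).add (h1.integrable_mul h2.star)
  have key : ∀ l : Filter ℝ, Tendsto (fun t => (g : ℝ → ℂ) t * star ((g : ℝ → ℂ) t)) l (𝓝 0) →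
      Tendsto (g : ℝ → ℂ) l (𝓝 0) := by
    intro l hl
    rw [tendsto_zero_iff_norm_tendsto_zero] at hl ⊢
    have := hl.sqrt
    simpa [Real.sqrt_mul_self] using this
  exact ⟨key _ (tendsto_zero_of_hasDerivAt_of_integrableOn_Iic (a := 0) (fun t _ => hd t)
    i2.integrableOn i1.integrableOn),
    key _ (tendsto_zero_of_hasDerivAt_of_integrableOn_Ioi (a := 0) (fun t _ => hd t)
    i2.integrableOn i1.integrableOn)⟩

end Mollification

section Uniqueness

open Polynomial Filter Topology Asymptotics
open scoped ContDiff ENNReal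

/-- Smooth functions all of whose derivatives decay at least like `exp (-|t|)`. -/
def ExpDecay (f : SmoothFn) : Prop :=
  ∀ Q, (diffOp Q f : ℝ → ℂ) =O[atBot] Real.exp ∧
    (diffOp Q f : ℝ → ℂ) =O[atTop] fun t => Real.exp (-t)

theorem ExpDecay.diffOp {f : SmoothFn} (hf : ExpDecay f) (P : ℂ[X]) : ExpDecay (diffOp P f) :=
  fun Q => by simpa only [diffOp_mul] using hf (Q * P)

theorem ExpDecay.conjFn {f : SmoothFn} (hf : ExpDecay f) : ExpDecay (conjFn f) := fun Q => by
  rw [diffOp_conjFn]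
  have h := hf (Q.map (starRingEnd ℂ))
  have e : ∀ t, ‖(_root_.diffOp (Q.map (starRingEnd ℂ)) f : ℝ → ℂ) t‖ =
      ‖(_root_.conjFn (_root_.diffOp (Q.map (starRingEnd ℂ)) f) : ℝ → ℂ) t‖ := fun t =>
    (norm_star _).symm
  exact ⟨(h.1.norm_left.congr_left e).of_norm_left, (h.2.norm_left.congr_left e).of_norm_left⟩

theorem ExpDecay.integrable_mul {f g : SmoothFn} (hf : ExpDecay f) (hg : ExpDecay g) :
    Integrable fun t => (f : ℝ → ℂ) t * (g : ℝ → ℂ) t := by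
  have h1 := hf 1
  have h2 := hg 1
  simp only [diffOp_one] at h1 h2
  refine (f.continuous.mul g.continuous).locallyIntegrable.integrable_of_isBigO_atBot_atTop
    (h1.1.mul h2.1) ?_ (h1.2.mul h2.2) ?_
  · refine ⟨Set.Iic 0, Iic_mem_atBot 0, ?_⟩
    refine (integrableOn_exp_mul_Iic (a := 2) (by norm_num) 0).congr_fun (fun t _ => ?_)
      measurableSet_Iic
    simp only [← Real.exp_add]; ring_nf
  · refine ⟨Set.Ioi 0, Ioi_mem_atTop 0, ?_⟩
    refine (integrableOn_exp_mul_Ioi (a := -2) (by norm_num) 0).congr_fun (fun t _ => ?_)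
      measurableSet_Ioi
    simp only [← Real.exp_add]; ring_nf

theorem ExpDecay.integral_diffOp_mul {f g : SmoothFn} (hf : ExpDecay f) (hg : ExpDecay g)
    (P : ℂ[X]) : ∫ t, (_root_.diffOp P f : ℝ → ℂ) t * (g : ℝ → ℂ) t =
      ∫ t, (f : ℝ → ℂ) t * (_root_.diffOp (P.comp (-X)) g : ℝ → ℂ) t :=
  integral_diffOp_mul_of_integrable (A := ExpDecay) (B := ExpDecay) (fun Q _ h => h.diffOp Q)
    (fun Q _ h => h.diffOp Q) (fun _ _ h h' => h.integrable_mul h') P hf hg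

/-- The weighted mollification `exp (-z t) (w * (exp (z s) ρ))`. -/
def mollify (z : ℂ) {w : ℝ → ℂ} (hw : LocallyIntegrable w) (ρ : SmoothFn)
    (hρ : HasCompactSupport (ρ : ℝ → ℂ)) : SmoothFn :=
  expFn (-z) * convFn hw (expFn z * ρ) hρ.mul_left

theorem mollify_apply (z : ℂ) {w : ℝ → ℂ} (hw : LocallyIntegrable w) (ρ : SmoothFn)
    (hρ : HasCompactSupport (ρ : ℝ → ℂ)) (t : ℝ) :
    (mollify z hw ρ hρ : ℝ → ℂ) t =
      ∫ s, w s * ((expFn (-z) : ℝ → ℂ) s * (ρ : ℝ → ℂ) (t - s)) := by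
  change (expFn (-z) : ℝ → ℂ) t * (convFn hw (expFn z * ρ) _ : ℝ → ℂ) t = _
  rw [convFn_apply, ← integral_const_mul]
  congr 1
  ext s
  change (expFn (-z) : ℝ → ℂ) t * (w s * ((expFn z : ℝ → ℂ) (t - s) * (ρ : ℝ → ℂ) (t - s))) = _
  have : (expFn (-z) : ℝ → ℂ) s = (expFn (-z) : ℝ → ℂ) t * (expFn z : ℝ → ℂ) (t - s) := by
    simp only [expFn_apply, ← Complex.exp_add]
    congr 1
    push_cast
    ring
  rw [this]
  ring

theorem diffOp_mollify (z : ℂ) {w : ℝ → ℂ} (hw : LocallyIntegrable w) (ρ : SmoothFn)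
    (hρ : HasCompactSupport (ρ : ℝ → ℂ)) (P : ℂ[X]) :
    diffOp P (mollify z hw ρ hρ) =
      mollify z hw (diffOp P ρ) (diffOp_hasCompactSupport P hρ) := by
  rw [mollify, diffOp_expFn_mul, diffOp_convFn, mollify]
  congr 2
  rw [diffOp_expFn_mul, comp_assoc]
  simp

theorem tendsto_exp_mul_mollify (a : ℝ) {w : ℝ → ℂ} (hw2 : MemLp w 2) (hw : LocallyIntegrable w)
    (ρ : SmoothFn) (hρ : HasCompactSupport (ρ : ℝ → ℂ)) :
    Tendsto (fun t => Real.exp (a * t) * ‖(mollify a hw ρ hρ : ℝ → ℂ) t‖) atBot (𝓝 0) ∧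
      Tendsto (fun t => Real.exp (a * t) * ‖(mollify a hw ρ hρ : ℝ → ℂ) t‖) atTop (𝓝 0) := by
  have h := tendsto_convFn hw2 hw (expFn a * ρ) hρ.mul_left
  have e : ∀ t : ℝ, Real.exp (a * t) * ‖(mollify a hw ρ hρ : ℝ → ℂ) t‖ =
      ‖(convFn hw (expFn a * ρ) hρ.mul_left : ℝ → ℂ) t‖ := by
    intro t
    rw [mollify]
    simp only [MulMemClass.coe_mul, Pi.mul_apply, norm_mul]
    rw [norm_expFn, ← mul_assoc, ← Real.exp_add]
    simp
  simp only [e]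
  exact ⟨by simpa using h.1.norm, by simpa using h.2.norm⟩

/-- The weak equation `P(∂)(exp (-3 t) w) = ν exp (3 t) w`. -/
def WeakSolution (P : ℂ[X]) (ν : ℂ) (w : ℝ → ℂ) : Prop :=
  ∀ φ : SmoothFn, HasCompactSupport (φ : ℝ → ℂ) →
    ∫ t, w t * ((expFn (-3) : ℝ → ℂ) t * (diffOp P φ : ℝ → ℂ) t) =
      ν * ∫ t, w t * ((expFn 3 : ℝ → ℂ) t * (φ : ℝ → ℂ) t)

theorem WeakSolution.diffOp_mollify {P : ℂ[X]} (hP : P.comp (-X) = P) {ν : ℂ} {w : ℝ → ℂ}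
    (hw : LocallyIntegrable w) (h : WeakSolution P ν w) (ρ : SmoothFn)
    (hρ : HasCompactSupport (ρ : ℝ → ℂ)) :
    diffOp P (mollify 3 hw ρ hρ) = ν • mollify (-3) hw ρ hρ := by
  refine SmoothFn.ext' fun t => ?_
  rw [_root_.diffOp_mollify]
  change (mollify 3 hw _ _ : ℝ → ℂ) t = ν * (mollify (-3) hw ρ hρ : ℝ → ℂ) t
  have h1 := h (reflectFn t ρ) (reflectFn_hasCompactSupport t hρ)
  rw [diffOp_reflectFn, hP] at h1
  simp only [reflectFn_apply] at h1
  rw [mollify_apply, mollify_apply, h1, neg_neg]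

theorem WeakSolution.expDecay {P : ℂ[X]} (hP0 : P ≠ 0) (hP : P.comp (-X) = P)
    (hroot : ∀ z, P.IsRoot z → 3 ≤ |z.re|) {ν : ℂ} {w : ℝ → ℂ} (hw2 : MemLp w 2)
    (hw : LocallyIntegrable w) (h : WeakSolution P ν w) (ρ : SmoothFn)
    (hρ : HasCompactSupport (ρ : ℝ → ℂ)) : ExpDecay (mollify 3 hw ρ hρ) := by
  have h3 : ∀ (ρ : SmoothFn) (hρ : HasCompactSupport (ρ : ℝ → ℂ)),
      (mollify 3 hw ρ hρ : ℝ → ℂ) =O[atBot] Real.exp ∧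
      (mollify 3 hw ρ hρ : ℝ → ℂ) =O[atTop] fun t => Real.exp (-t) := by
    intro ρ hρ
    constructor
    · refine isBigO_exp_of_diffOp hP0 hroot (fun Q => ?_) ?_
      · rw [_root_.diffOp_mollify]
        exact_mod_cast (tendsto_exp_mul_mollify 3 hw2 hw _ _).1
      · rw [h.diffOp_mollify hP]
        have h4 := (tendsto_exp_mul_mollify (-3) hw2 hw ρ hρ).1
        have h5 := h4.eventually_lt_const (u := 1) one_pos
        refine IsBigO.of_bound ‖ν‖ ?_
        filter_upwards [h5, eventually_le_atBot (0 : ℝ)] with t ht ht0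
        push_cast at ht
        change ‖ν * (mollify (-3) hw ρ hρ : ℝ → ℂ) t‖ ≤ _
        rw [norm_mul, Real.norm_eq_abs, Real.abs_exp]
        gcongr
        calc ‖(mollify (-3) hw ρ hρ : ℝ → ℂ) t‖
            = Real.exp (3 * t) * (Real.exp (-3 * t) * ‖(mollify (-3) hw ρ hρ : ℝ → ℂ) t‖) := by
              rw [← mul_assoc, ← Real.exp_add]; simp
          _ ≤ Real.exp (3 * t) * 1 := by gcongr
          _ ≤ Real.exp t := by
            rw [mul_one, Real.exp_le_exp]; linarith
    · have h4 := (tendsto_exp_mul_mollify 3 hw2 hw ρ hρ).2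
      have h5 := h4.eventually_lt_const (u := 1) one_pos
      refine IsBigO.of_bound 1 ?_
      filter_upwards [h5, eventually_ge_atTop (0 : ℝ)] with t ht ht0
      push_cast at ht
      rw [Real.norm_eq_abs, Real.abs_exp, one_mul]
      calc ‖(mollify 3 hw ρ hρ : ℝ → ℂ) t‖
          = Real.exp (-3 * t) * (Real.exp (3 * t) * ‖(mollify 3 hw ρ hρ : ℝ → ℂ) t‖) := by
            rw [← mul_assoc, ← Real.exp_add]; simp
        _ ≤ Real.exp (-3 * t) * 1 := by gcongr
        _ ≤ Real.exp (-t) := by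
          rw [mul_one, Real.exp_le_exp]; linarith
  intro Q
  rw [_root_.diffOp_mollify]
  exact h3 _ _

/-- The quadratic form identity behind uniqueness. -/
theorem WeakSolution.integral_eq_zero {P : ℂ[X]} (hP0 : P ≠ 0) (hP : P.comp (-X) = P)
    (hreal : P.map (starRingEnd ℂ) = P) (hroot : ∀ z, P.IsRoot z → 3 ≤ |z.re|) {ν : ℂ}
    (hν : star ν = -ν) (hν0 : ν ≠ 0) {w : ℝ → ℂ} (hw2 : MemLp w 2)
    (hw : LocallyIntegrable w) (h : WeakSolution P ν w) (ρ : SmoothFn)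
    (hρ : HasCompactSupport (ρ : ℝ → ℂ)) :
    ∫ t, ((convFn hw (expFn (-3) * ρ) hρ.mul_left : ℝ → ℂ) t *
        star ((convFn hw (expFn 3 * ρ) hρ.mul_left : ℝ → ℂ) t) +
      (convFn hw (expFn 3 * ρ) hρ.mul_left : ℝ → ℂ) t *
        star ((convFn hw (expFn (-3) * ρ) hρ.mul_left : ℝ → ℂ) t)) = 0 := by
  set A := convFn hw (expFn (-3) * ρ) hρ.mul_left
  set B := convFn hw (expFn 3 * ρ) hρ.mul_left
  have hf := h.expDecay hP0 hP hroot hw2 hw ρ hρ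
  have h1 := hf.integral_diffOp_mul hf.conjFn P
  rw [hP, diffOp_conjFn, hreal, h.diffOp_mollify hP] at h1
  have hA : MemLp (A : ℝ → ℂ) 2 := memLp_convFn hw2 hw _ _
  have hB : MemLp (B : ℝ → ℂ) 2 := memLp_convFn hw2 hw _ _
  have e0 : ∀ t : ℝ, (expFn 3 : ℝ → ℂ) t * star ((expFn (-3) : ℝ → ℂ) t) = 1 := by
    intro t
    simp only [expFn_apply, RCLike.star_def, ← Complex.exp_conj, ← Complex.exp_add]
    simp [show (starRingEnd ℂ) (3 : ℂ) = 3 from Complex.conj_ofNat 3]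
  have e0' : ∀ t : ℝ, (expFn (-3) : ℝ → ℂ) t * star ((expFn 3 : ℝ → ℂ) t) = 1 := by
    intro t
    simp only [expFn_apply, RCLike.star_def, ← Complex.exp_conj, ← Complex.exp_add]
    simp [show (starRingEnd ℂ) (3 : ℂ) = 3 from Complex.conj_ofNat 3]
  have e1 : ∀ t, ((ν • mollify (-3) hw ρ hρ : SmoothFn) : ℝ → ℂ) t *
      (conjFn (mollify 3 hw ρ hρ) : ℝ → ℂ) t = ν * ((A : ℝ → ℂ) t * star ((B : ℝ → ℂ) t)) := by
    intro t
    change (ν * ((expFn (- -3) : ℝ → ℂ) t * (A : ℝ → ℂ) t)) *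
      star ((expFn (-3) : ℝ → ℂ) t * (B : ℝ → ℂ) t) = _
    rw [star_mul', neg_neg]
    linear_combination (ν * (A : ℝ → ℂ) t * star ((B : ℝ → ℂ) t)) * e0 t
  have e2 : ∀ t, (mollify 3 hw ρ hρ : ℝ → ℂ) t *
      (conjFn (ν • mollify (-3) hw ρ hρ) : ℝ → ℂ) t =
      -ν * ((B : ℝ → ℂ) t * star ((A : ℝ → ℂ) t)) := by
    intro t
    change ((expFn (-3) : ℝ → ℂ) t * (B : ℝ → ℂ) t) *
      star (ν * ((expFn (- -3) : ℝ → ℂ) t * (A : ℝ → ℂ) t)) = _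
    rw [star_mul', star_mul', neg_neg, hν]
    linear_combination (-ν * (B : ℝ → ℂ) t * star ((A : ℝ → ℂ) t)) * e0' t
  simp only [e1, e2] at h1
  rw [integral_const_mul, integral_const_mul, neg_mul, eq_neg_iff_add_eq_zero, ← mul_add] at h1
  have i1 : Integrable fun t => (A : ℝ → ℂ) t * star ((B : ℝ → ℂ) t) := hA.integrable_mul hB.star
  have i2 : Integrable fun t => (B : ℝ → ℂ) t * star ((A : ℝ → ℂ) t) := hB.integrable_mul hA.star
  rw [integral_add i1 i2]
  exact (mul_eq_zero.1 h1).resolve_left hν0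

end Uniqueness

section UniquenessLimit

open Polynomial Filter Topology Asymptotics
open scoped ContDiff ENNReal

theorem convFn_add {w : ℝ → ℂ} (hw : LocallyIntegrable w) {f g : SmoothFn}
    (hf : HasCompactSupport (f : ℝ → ℂ)) (hg : HasCompactSupport (g : ℝ → ℂ))
    (hfg : HasCompactSupport ((f + g : SmoothFn) : ℝ → ℂ)) :
    convFn hw (f + g) hfg = convFn hw f hf + convFn hw g hg :=
  SmoothFn.ext' fun t => by
    simp only [AddMemClass.coe_add, Pi.add_apply, convFn_apply, mul_add]
    exact integral_add (integrable_mul_translate hw f hf t) (integrable_mul_translate hw g hg t)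

theorem convFn_sub {w : ℝ → ℂ} (hw : LocallyIntegrable w) {f g : SmoothFn}
    (hf : HasCompactSupport (f : ℝ → ℂ)) (hg : HasCompactSupport (g : ℝ → ℂ))
    (hfg : HasCompactSupport ((f - g : SmoothFn) : ℝ → ℂ)) :
    convFn hw (f - g) hfg = convFn hw f hf - convFn hw g hg :=
  SmoothFn.ext' fun t => by
    simp only [AddSubgroupClass.coe_sub, Pi.sub_apply, convFn_apply, mul_sub]
    exact integral_sub (integrable_mul_translate hw f hf t) (integrable_mul_translate hw g hg t)

theorem lintegral_enorm_convFn_sq_le {w : ℝ → ℂ} (hw2 : MemLp w 2) (hw : LocallyIntegrable w)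
    (κ : SmoothFn) (hκ : HasCompactSupport (κ : ℝ → ℂ)) :
    ∫⁻ t, ‖(convFn hw κ hκ : ℝ → ℂ) t‖ₑ ^ 2 ≤
      (∫⁻ s, ‖(κ : ℝ → ℂ) s‖ₑ) ^ 2 * ∫⁻ s, ‖w s‖ₑ ^ 2 :=
  (lintegral_mono fun t => pow_le_pow_left₀ zero_le (enorm_convFn_le hw κ hκ t) 2).trans
    (lintegral_sq_convolution_le hw2.1.enorm κ.continuous.enorm.measurable)

theorem WeakSolution.lintegral_le {P : ℂ[X]} (hP0 : P ≠ 0) (hP : P.comp (-X) = P)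
    (hreal : P.map (starRingEnd ℂ) = P) (hroot : ∀ z, P.IsRoot z → 3 ≤ |z.re|) {ν : ℂ}
    (hν : star ν = -ν) (hν0 : ν ≠ 0) {w : ℝ → ℂ} (hw2 : MemLp w 2)
    (hw : LocallyIntegrable w) (h : WeakSolution P ν w) (φ : ContDiffBump (0 : ℝ)) :
    ∫⁻ t, ‖convolution (φ.normed volume) w (ContinuousLinearMap.lsmul ℝ ℝ) volume t‖ₑ ^ 2 ≤
      ENNReal.ofReal (Real.sinh (3 * φ.rOut)) ^ 2 * ∫⁻ s, ‖w s‖ₑ ^ 2 := by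
  let κ : SmoothFn := ⟨fun t => ((φ.normed volume t : ℝ) : ℂ),
    Complex.ofRealCLM.contDiff.comp φ.contDiff_normed⟩
  have hκ_apply : ∀ t, (κ : ℝ → ℂ) t = ((φ.normed volume t : ℝ) : ℂ) := fun _ => rfl
  have hκ : HasCompactSupport (κ : ℝ → ℂ) :=
    φ.hasCompactSupport_normed.comp_left (g := fun x : ℝ => (x : ℂ)) (by simp)
  have hch : ContDiff ℝ ∞ fun t : ℝ => Real.cosh (3 * t) :=
    Real.contDiff_cosh.comp (contDiff_const.mul contDiff_id)
  have hsh : ContDiff ℝ ∞ fun t : ℝ => Real.sinh (3 * t) :=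
    Real.contDiff_sinh.comp (contDiff_const.mul contDiff_id)
  let σ : SmoothFn := ⟨fun t => (((Real.cosh (3 * t))⁻¹ : ℝ) : ℂ),
    Complex.ofRealCLM.contDiff.comp (hch.inv fun t => (Real.cosh_pos _).ne')⟩
  let s : SmoothFn := ⟨fun t => ((Real.sinh (3 * t) : ℝ) : ℂ), Complex.ofRealCLM.contDiff.comp hsh⟩
  let τ : SmoothFn := s * σ * κ
  have hτ : HasCompactSupport (τ : ℝ → ℂ) := hκ.mul_left
  have hσκ : HasCompactSupport ((σ * κ : SmoothFn) : ℝ → ℂ) := hκ.mul_left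
  have hτ_apply : ∀ t, (τ : ℝ → ℂ) t =
      ((Real.sinh (3 * t) * (Real.cosh (3 * t))⁻¹ * φ.normed volume t : ℝ) : ℂ) := fun t => by
    change ((Real.sinh (3 * t) : ℝ) : ℂ) * (((Real.cosh (3 * t))⁻¹ : ℝ) : ℂ) *
      ((φ.normed volume t : ℝ) : ℂ) = _
    push_cast; ring
  have e1 : expFn 3 * (σ * κ) = κ + τ := SmoothFn.ext' fun t => by
    change (expFn 3 : ℝ → ℂ) t * ((((Real.cosh (3 * t))⁻¹ : ℝ) : ℂ) * (κ : ℝ → ℂ) t) =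
      (κ : ℝ → ℂ) t + (τ : ℝ → ℂ) t
    have : (expFn 3 : ℝ → ℂ) t = ((Real.cosh (3 * t) + Real.sinh (3 * t) : ℝ) : ℂ) := by
      rw [Real.cosh_add_sinh, expFn_apply]; push_cast; rfl
    rw [hτ_apply, hκ_apply, this]
    have h0 := (Real.cosh_pos (3 * t)).ne'
    rw [← Complex.ofReal_mul, ← Complex.ofReal_mul, ← Complex.ofReal_add]
    congr 1
    field_simp
  have e2 : expFn (-3) * (σ * κ) = κ - τ := SmoothFn.ext' fun t => by
    change (expFn (-3) : ℝ → ℂ) t * ((((Real.cosh (3 * t))⁻¹ : ℝ) : ℂ) * (κ : ℝ → ℂ) t) =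
      (κ : ℝ → ℂ) t - (τ : ℝ → ℂ) t
    have : (expFn (-3) : ℝ → ℂ) t = ((Real.cosh (3 * t) - Real.sinh (3 * t) : ℝ) : ℂ) := by
      rw [Real.cosh_sub_sinh, expFn_apply]; push_cast; rw [neg_mul]
    rw [hτ_apply, hκ_apply, this]
    have h0 := (Real.cosh_pos (3 * t)).ne'
    rw [← Complex.ofReal_mul, ← Complex.ofReal_mul, ← Complex.ofReal_sub]
    congr 1
    field_simp
  have key := h.integral_eq_zero hP0 hP hreal hroot hν hν0 hw2 hw (σ * κ) hσκ
  simp only [e1, e2] at key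
  rw [convFn_add hw hκ hτ, convFn_sub hw hκ hτ] at key
  set S := convFn hw κ hκ with hS
  set D := convFn hw τ hτ with hD
  have hS2 : MemLp (S : ℝ → ℂ) 2 := memLp_convFn hw2 hw κ hκ
  have hD2 : MemLp (D : ℝ → ℂ) 2 := memLp_convFn hw2 hw τ hτ
  have e3 : ∀ t, ((S - D : SmoothFn) : ℝ → ℂ) t * star (((S + D : SmoothFn) : ℝ → ℂ) t) +
      ((S + D : SmoothFn) : ℝ → ℂ) t * star (((S - D : SmoothFn) : ℝ → ℂ) t) =
      ((2 * (‖(S : ℝ → ℂ) t‖ ^ 2 - ‖(D : ℝ → ℂ) t‖ ^ 2) : ℝ) : ℂ) := by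
    intro t
    simp only [AddSubgroupClass.coe_sub, Pi.sub_apply, AddMemClass.coe_add, Pi.add_apply,
      star_add, star_sub]
    push_cast
    rw [← Complex.mul_conj', ← Complex.mul_conj']
    simp only [RCLike.star_def]
    ring
  simp only [e3] at key
  rw [integral_complex_ofReal, Complex.ofReal_eq_zero, integral_const_mul] at key
  have iS : Integrable fun t => ‖(S : ℝ → ℂ) t‖ ^ 2 :=
    (memLp_two_iff_integrable_sq_norm hS2.1).1 hS2
  have iD : Integrable fun t => ‖(D : ℝ → ℂ) t‖ ^ 2 :=
    (memLp_two_iff_integrable_sq_norm hD2.1).1 hD2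
  rw [integral_sub iS iD] at key
  have key2 : ∫ t, ‖(S : ℝ → ℂ) t‖ ^ 2 = ∫ t, ‖(D : ℝ → ℂ) t‖ ^ 2 := by linarith
  have toL : ∀ f : SmoothFn, (Integrable fun t => ‖(f : ℝ → ℂ) t‖ ^ 2) →
      ∫⁻ t, ‖(f : ℝ → ℂ) t‖ₑ ^ 2 = ENNReal.ofReal (∫ t, ‖(f : ℝ → ℂ) t‖ ^ 2) := by
    intro f hf
    rw [ofReal_integral_eq_lintegral_ofReal hf (Eventually.of_forall fun t => by positivity)]
    refine lintegral_congr fun t => ?_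
    rw [ENNReal.ofReal_pow (norm_nonneg _), ofReal_norm]
  have hconv : ∀ t, convolution (φ.normed volume) w (ContinuousLinearMap.lsmul ℝ ℝ) volume t =
      (S : ℝ → ℂ) t := fun t => by
    rw [convolution_lsmul_swap, hS, convFn_apply]
    refine integral_congr_ae (Eventually.of_forall fun s => ?_)
    simp only [hκ_apply, Complex.real_smul]
    ring
  simp only [hconv]
  rw [toL S iS, key2, ← toL D iD]
  refine (lintegral_enorm_convFn_sq_le hw2 hw τ hτ).trans ?_
  gcongr
  calc ∫⁻ s, ‖(τ : ℝ → ℂ) s‖ₑ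
      ≤ ∫⁻ s, ENNReal.ofReal (Real.sinh (3 * φ.rOut)) * ENNReal.ofReal (φ.normed volume s) := by
        refine lintegral_mono fun s => ?_
        rw [hτ_apply, ← ofReal_norm, ← ENNReal.ofReal_mul
          (Real.sinh_nonneg_iff.2 (by linarith [φ.rOut_pos]))]
        refine ENNReal.ofReal_le_ofReal ?_
        rw [Complex.norm_real, Real.norm_eq_abs, abs_mul, abs_of_nonneg (φ.nonneg_normed s)]
        by_cases hs : s ∈ Function.support (φ.normed volume)
        · refine mul_le_mul_of_nonneg_right ?_ (φ.nonneg_normed s)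
          rw [φ.support_normed_eq, mem_ball_zero_iff, Real.norm_eq_abs] at hs
          rw [abs_mul, abs_inv, abs_of_pos (Real.cosh_pos _), Real.abs_sinh, abs_mul]
          calc Real.sinh (|3| * |s|) * (Real.cosh (3 * s))⁻¹ ≤ Real.sinh (|3| * |s|) * 1 := by
                have h3 : 0 ≤ Real.sinh (|3| * |s|) := Real.sinh_nonneg_iff.2 (by positivity)
                exact mul_le_mul_of_nonneg_left (inv_le_one_of_one_le₀ (Real.one_le_cosh _)) h3
            _ ≤ Real.sinh (3 * φ.rOut) := by
                rw [mul_one, Real.sinh_le_sinh, abs_of_pos (by norm_num : (0:ℝ) < 3)]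
                linarith
        · rw [Function.notMem_support] at hs
          simp [hs]
    _ = ENNReal.ofReal (Real.sinh (3 * φ.rOut)) := by
        rw [lintegral_const_mul _ (by exact φ.continuous_normed.measurable.ennreal_ofReal),
          ← ofReal_integral_eq_lintegral_ofReal φ.integrable_normed
            (Eventually.of_forall φ.nonneg_normed), φ.integral_normed, ENNReal.ofReal_one, mul_one]

/-- If no root of `P` lies in the strip `|Re z| < 3`, square integrable weak solutions of
`P(∂)(exp (-3 t) w) = ± i exp (3 t) w` vanish. -/
theorem WeakSolution.ae_eq_zero {P : ℂ[X]} (hP0 : P ≠ 0) (hP : P.comp (-X) = P)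
    (hreal : P.map (starRingEnd ℂ) = P) (hroot : ∀ z, P.IsRoot z → 3 ≤ |z.re|) {ν : ℂ}
    (hν : star ν = -ν) (hν0 : ν ≠ 0) {w : ℝ → ℂ} (hw2 : MemLp w 2)
    (h : WeakSolution P ν w) : w =ᵐ[volume] 0 := by
  have hw : LocallyIntegrable w := hw2.locallyIntegrable (by norm_num)
  let φ : ℕ → ContDiffBump (0 : ℝ) := fun j =>
    ⟨1 / ((j : ℝ) + 1), 2 * (1 / ((j : ℝ) + 1)), by positivity, by
      have : (0 : ℝ) < 1 / ((j : ℝ) + 1) := by positivity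
      linarith⟩
  have hr : Tendsto (fun j => (φ j).rOut) atTop (𝓝 0) := by
    have := (tendsto_one_div_add_atTop_nhds_zero_nat (𝕜 := ℝ)).const_mul (2 : ℝ)
    rwa [mul_zero] at this
  have hae := ContDiffBump.ae_convolution_tendsto_right_of_locallyIntegrable (μ := volume) (K := 2)
    hr (Eventually.of_forall fun j => le_rfl) hw
  have hK := (memLp_two_iff_lintegral_sq hw2.1).1 hw2
  have hmeas : ∀ j, Measurable fun t => ‖convolution ((φ j).normed volume) w
      (ContinuousLinearMap.lsmul ℝ ℝ) volume t‖ₑ ^ 2 := by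
    intro j
    have hc : Continuous (convolution ((φ j).normed volume) w
        (ContinuousLinearMap.lsmul ℝ ℝ) volume) :=
      HasCompactSupport.continuous_convolution_left _
        (φ j).hasCompactSupport_normed (φ j).continuous_normed hw
    exact (hc.enorm.measurable).pow_const 2
  have hlim : Tendsto (fun j => ENNReal.ofReal (Real.sinh (3 * (φ j).rOut)) ^ 2 *
      ∫⁻ s, ‖w s‖ₑ ^ 2) atTop (𝓝 0) := by
    have h1 : Tendsto (fun j => Real.sinh (3 * (φ j).rOut)) atTop (𝓝 0) := by
      have := (Real.continuous_sinh.tendsto (3 * 0)).comp (hr.const_mul 3)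
      rwa [mul_zero, Real.sinh_zero] at this
    have h2 := ((ENNReal.continuous_pow 2).tendsto _).comp (ENNReal.tendsto_ofReal h1)
    have h3 := ENNReal.Tendsto.mul_const h2 (Or.inr hK.ne)
    simpa [Function.comp_def] using h3
  have hfatou : ∫⁻ t, ‖w t‖ₑ ^ 2 ≤ 0 := by
    calc ∫⁻ t, ‖w t‖ₑ ^ 2 = ∫⁻ t, liminf (fun j => ‖convolution ((φ j).normed volume) w
          (ContinuousLinearMap.lsmul ℝ ℝ) volume t‖ₑ ^ 2) atTop := by
          refine lintegral_congr_ae ?_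
          filter_upwards [hae] with t ht
          exact ((ENNReal.continuous_pow 2).tendsto _ |>.comp ht.enorm).liminf_eq.symm
      _ ≤ liminf (fun j => ∫⁻ t, ‖convolution ((φ j).normed volume) w
          (ContinuousLinearMap.lsmul ℝ ℝ) volume t‖ₑ ^ 2) atTop := lintegral_liminf_le hmeas
      _ ≤ liminf (fun j => ENNReal.ofReal (Real.sinh (3 * (φ j).rOut)) ^ 2 *
          ∫⁻ s, ‖w s‖ₑ ^ 2) atTop := liminf_le_liminf (Eventually.of_forall fun j =>
            h.lintegral_le hP0 hP hreal hroot hν hν0 hw2 hw (φ j))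
      _ = 0 := hlim.liminf_eq
  have h0 := (lintegral_eq_zero_iff' (hw2.1.enorm.pow_const 2)).1 (le_antisymm hfatou zero_le)
  filter_upwards [h0] with t ht
  simpa using ht

end UniquenessLimit

section CharacteristicPolynomial

open Polynomial

/-- The characteristic polynomial of the radial part of `(-Δ)³ + c|x|⁻⁶` in logarithmic
coordinates, on a space of spherical harmonics with angular parameter `m`. -/
def radialPoly (m c : ℝ) : ℂ[X] :=
  C (c : ℂ) - ((X + 2) ^ 2 - C (m : ℂ)) * (X ^ 2 - C (m : ℂ)) * ((X - 2) ^ 2 - C (m : ℂ))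

/-- The cubic polynomial whose level sets describe the roots of `radialPoly`. -/
def cubicFn (m w : ℝ) : ℝ :=
  w ^ 3 - (8 + 3 * m) * w ^ 2 + (3 * m ^ 2 + 16) * w - m * (4 - m) ^ 2

theorem continuous_cubicFn (m : ℝ) : Continuous (cubicFn m) := by
  unfold cubicFn; fun_prop

theorem isRoot_radialPoly_iff {m c : ℝ} {z : ℂ} : (radialPoly m c).IsRoot z ↔
    (c = cubicFn m (z ^ 2).re - (z ^ 2).im ^ 2 * (3 * (z ^ 2).re - (8 + 3 * m))) ∧
    ((z ^ 2).im = 0 ∨ (z ^ 2).im ^ 2 =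
      3 * (z ^ 2).re ^ 2 - 2 * (8 + 3 * m) * (z ^ 2).re + (3 * m ^ 2 + 16)) := by
  have h1 : (radialPoly m c).eval z = (c : ℂ) - ((z ^ 2) ^ 3 - (8 + 3 * (m : ℂ)) * (z ^ 2) ^ 2 +
      (3 * (m : ℂ) ^ 2 + 16) * z ^ 2 - (m : ℂ) * (4 - m) ^ 2) := by
    simp [radialPoly]; ring
  rw [IsRoot.def, h1]
  generalize z ^ 2 = w
  obtain ⟨u, v⟩ := w
  have h2 : ((c : ℂ) - ((⟨u, v⟩ : ℂ) ^ 3 - (8 + 3 * (m : ℂ)) * (⟨u, v⟩ : ℂ) ^ 2 +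
      (3 * (m : ℂ) ^ 2 + 16) * (⟨u, v⟩ : ℂ) - (m : ℂ) * (4 - m) ^ 2)) =
      ⟨c - (cubicFn m u - v ^ 2 * (3 * u - (8 + 3 * m))),
        v * (v ^ 2 - (3 * u ^ 2 - 2 * (8 + 3 * m) * u + (3 * m ^ 2 + 16)))⟩ := by
    apply Complex.ext
    · simp [pow_succ, cubicFn]; ring
    · simp [pow_succ]; ring
  rw [h2, Complex.ext_iff]
  simp only [Complex.zero_re, Complex.zero_im, mul_eq_zero, sub_eq_zero]

theorem abs_re_lt_three_iff {z : ℂ} : |z.re| < 3 ↔ (z ^ 2).im ^ 2 < 324 - 36 * (z ^ 2).re := by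
  obtain ⟨x, y⟩ := z
  have h1 : ((⟨x, y⟩ : ℂ) ^ 2).re = x ^ 2 - y ^ 2 := by simp [sq]
  have h2 : ((⟨x, y⟩ : ℂ) ^ 2).im = 2 * x * y := by simp [sq]; ring
  rw [h1, h2, show |x| < 3 ↔ x ^ 2 < 3 ^ 2 from by
    rw [sq_lt_sq, abs_of_pos (by norm_num : (0:ℝ) < 3)]]
  have h3 : 324 - 36 * (x ^ 2 - y ^ 2) - (2 * x * y) ^ 2 = 4 * ((3 ^ 2 - x ^ 2) * (9 + y ^ 2)) := by
    ring
  rw [← sub_pos, ← sub_pos (b := (2 * x * y) ^ 2), h3]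
  constructor
  · intro h; positivity
  · intro h
    have h5 : 0 < 9 + y ^ 2 := by positivity
    have h4 : 0 < (3 ^ 2 - x ^ 2) * (9 + y ^ 2) := by linarith
    exact (mul_pos_iff_of_pos_right h5).1 h4

theorem exists_isRoot_of_le_cubicFn {m c w₀ : ℝ} (hm : 0 ≤ m) (hw : w₀ < 9)
    (h : c ≤ cubicFn m w₀) : ∃ z, (radialPoly m c).IsRoot z ∧ |z.re| < 3 := by
  have hW : ∃ W ≤ w₀, cubicFn m W ≤ c := by
    refine ⟨min w₀ (-|c|), min_le_left _ _, ?_⟩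
    set W := min w₀ (-|c|)
    have h0 : W ≤ 0 := (min_le_right _ _).trans (by simp)
    have h1 : W ≤ c := (min_le_right _ _).trans (neg_abs_le c)
    have h2 : W ^ 3 ≤ 0 := by nlinarith [sq_nonneg W]
    have h3 : 0 ≤ (8 + 3 * m) * W ^ 2 := by positivity
    have h4 : (3 * m ^ 2 + 16) * W ≤ W := by nlinarith [sq_nonneg m]
    have h5 : 0 ≤ m * (4 - m) ^ 2 := by positivity
    unfold cubicFn
    linarith
  obtain ⟨W, hW0, hWc⟩ := hW
  obtain ⟨w, hw1, hw2⟩ := intermediate_value_Icc hW0 (continuous_cubicFn m).continuousOn ⟨hWc, h⟩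
  obtain ⟨z, hz⟩ := IsAlgClosed.exists_pow_nat_eq (w : ℂ) (n := 2) (by norm_num)
  refine ⟨z, ?_, ?_⟩
  · rw [isRoot_radialPoly_iff, hz]
    simp [hw2]
  · rw [abs_re_lt_three_iff, hz]
    simp only [Complex.ofReal_im, Complex.ofReal_re]
    linarith [hw1.2]

/-- The critical coupling for small angular parameter. -/
def criticalCoupling (m : ℝ) : ℝ :=
  512 / 27 * (952 - 63 * m + (62 - 3 * m) * √(256 - 15 * m))

theorem cubicFn_criticalPoint {m s : ℝ} (hs : s ^ 2 = 256 - 15 * m) :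
    cubicFn m ((44 + 3 * m + 4 * s) / 3) = 512 / 27 * (952 - 63 * m + (62 - 3 * m) * s) := by
  have h3 : s ^ 3 = (256 - 15 * m) * s := by rw [pow_succ, hs]
  unfold cubicFn
  linear_combination (64 / 27) * h3 + (64 : ℝ) * hs

theorem exists_isRoot_of_lt_criticalCoupling {m c : ℝ} (hm : 0 ≤ m) (hm1 : m ≤ 49 / 4)
    (h : c < criticalCoupling m) : ∃ z, (radialPoly m c).IsRoot z ∧ |z.re| < 3 := by
  set r := √(1 + 3 * m) with hr
  have hr2 : r ^ 2 = 1 + 3 * m := Real.sq_sqrt (by linarith)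
  have hr0 : 1 ≤ r := by rw [hr]; exact Real.one_le_sqrt.2 (by linarith)
  have hr1 : r ≤ 7 := by nlinarith
  have hs2 : √(256 - 15 * m) ^ 2 = 256 - 15 * m := Real.sq_sqrt (by linarith)
  rw [criticalCoupling, ← cubicFn_criticalPoint hs2] at h
  set s := √(256 - 15 * m) with hs
  have hs0 : 17 / 2 ≤ s := by
    rw [hs]; exact Real.le_sqrt_of_sq_le (by linarith)
  set u₀ := (3 * m + 8 - 4 * r) / 3 with hu₀
  have hu₀9 : u₀ < 9 := by
    rw [hu₀]
    rcases le_or_gt m (19 / 3) with h1 | h1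
    · linarith
    · have : 3 * m - 19 < 4 * r := by nlinarith
      linarith
  by_cases hc : c ≤ cubicFn m u₀
  · exact exists_isRoot_of_le_cubicFn hm hu₀9 hc
  push Not at hc
  set u₁ := (3 * m - 10 - 2 * s) / 3 with hu₁
  have hle : u₁ ≤ u₀ := by rw [hu₀, hu₁]; linarith
  have e1 : cubicFn m (8 + 3 * m - 2 * u₁) = cubicFn m ((44 + 3 * m + 4 * s) / 3) := by
    rw [hu₁]; congr 1; ring
  have e0 : cubicFn m (8 + 3 * m - 2 * u₀) = cubicFn m u₀ := by
    rw [hu₀]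
    have h3 : r ^ 3 = (1 + 3 * m) * r := by rw [pow_succ, hr2]
    unfold cubicFn
    linear_combination (64 / 3) * h3
  have hcont : ContinuousOn (fun u => cubicFn m (8 + 3 * m - 2 * u)) (Set.Icc u₁ u₀) :=
    ((continuous_cubicFn m).comp (by fun_prop)).continuousOn
  obtain ⟨u, hu, huc⟩ := intermediate_value_Icc' hle hcont
    (show c ∈ Set.Icc (cubicFn m (8 + 3 * m - 2 * u₀)) (cubicFn m (8 + 3 * m - 2 * u₁)) by
      rw [e0, e1]; exact ⟨hc.le, h.le⟩)
  have hu1 : u₁ < u := lt_of_le_of_ne hu.1 fun he => by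
    subst he
    have h6 : cubicFn m (8 + 3 * m - 2 * u₁) = c := huc
    rw [e1] at h6
    exact h.ne h6.symm
  have hv : 0 ≤ 3 * u ^ 2 - 2 * (8 + 3 * m) * u + (3 * m ^ 2 + 16) := by
    have h5 : 3 * u ^ 2 - 2 * (8 + 3 * m) * u + (3 * m ^ 2 + 16) =
        3 * ((u₀ - u) * ((3 * m + 8 + 4 * r) / 3 - u)) := by
      rw [hu₀]; linear_combination (16 / 3) * hr2
    rw [h5]
    have h6 := hu.2
    have h7 : u ≤ (3 * m + 8 + 4 * r) / 3 := by rw [hu₀] at h6; linarith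
    exact mul_nonneg (by norm_num) (mul_nonneg (by linarith) (by linarith))
  have hstrip : 3 * u ^ 2 - 2 * (8 + 3 * m) * u + (3 * m ^ 2 + 16) < 324 - 36 * u := by
    have h5 : 324 - 36 * u - (3 * u ^ 2 - 2 * (8 + 3 * m) * u + (3 * m ^ 2 + 16)) =
        3 * ((u - u₁) * ((3 * m - 10 + 2 * s) / 3 - u)) := by
      rw [hu₁]; linear_combination (-4 / 3) * hs2
    have h6 := hu.2
    have h7 : u < (3 * m - 10 + 2 * s) / 3 := by rw [hu₀] at h6; linarith
    have h8 : 0 < (u - u₁) * ((3 * m - 10 + 2 * s) / 3 - u) :=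
      mul_pos (by linarith) (by linarith)
    linarith
  obtain ⟨z, hz⟩ := IsAlgClosed.exists_pow_nat_eq
    (⟨u, √(3 * u ^ 2 - 2 * (8 + 3 * m) * u + (3 * m ^ 2 + 16))⟩ : ℂ) (n := 2) (by norm_num)
  refine ⟨z, ?_, ?_⟩
  · rw [isRoot_radialPoly_iff, hz]
    refine ⟨?_, Or.inr (Real.sq_sqrt hv)⟩
    simp only [Real.sq_sqrt hv, ← huc]
    unfold cubicFn
    ring
  · rw [abs_re_lt_three_iff, hz]
    simp only [Real.sq_sqrt hv]
    exact hstrip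

theorem exists_isRoot_of_lt_cubicFn_nine {m c : ℝ} (hm : 0 ≤ m)
    (h : c < cubicFn m 9) : ∃ z, (radialPoly m c).IsRoot z ∧ |z.re| < 3 := by
  have h1 : ∀ᶠ w in nhdsWithin 9 (Set.Iio 9), c < cubicFn m w :=
    ((continuous_cubicFn m).continuousAt.eventually_const_lt h).filter_mono nhdsWithin_le_nhds
  obtain ⟨w, hw, hw9⟩ := (h1.and self_mem_nhdsWithin).exists
  exact exists_isRoot_of_le_cubicFn hm hw9 hw.le

theorem cubicFn_lt_of_lt_nine {m w : ℝ} (hm : 0 ≤ m) (hw : w < 9) : cubicFn m w < 7488 := by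
  obtain ⟨d, rfl⟩ : ∃ d, m = w - d := ⟨w - m, by ring⟩
  have e : cubicFn (w - d) w = d * (d ^ 2 + 8 * d + 16 - 16 * w) := by unfold cubicFn; ring
  rw [e]
  rcases le_or_gt 0 d with hd | hd
  · have h1 : d * (d ^ 2 + 8 * d + 16 - 16 * w) ≤ d * (d - 4) ^ 2 :=
      mul_le_mul_of_nonneg_left (by nlinarith) hd
    have h2 : d < 9 := by linarith
    have h3 : (d - 4) ^ 2 ≤ 25 := by nlinarith
    nlinarith
  · obtain ⟨D, rfl⟩ : ∃ D, d = -D := ⟨-d, by ring⟩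
    have hD : 0 < D := by linarith
    have h1 : -D * ((-D) ^ 2 + 8 * -D + 16 - 16 * w) ≤ D * (144 - (D - 4) ^ 2) := by
      have : -D * ((-D) ^ 2 + 8 * -D + 16 - 16 * w) = D * (16 * w - (D - 4) ^ 2) := by ring
      rw [this]
      exact mul_le_mul_of_nonneg_left (by linarith) hD.le
    have h2 : D * (144 - (D - 4) ^ 2) < 7488 := by
      rcases le_or_gt D 16 with h3 | h3
      · nlinarith [sq_nonneg (D - 4)]
      · have : 144 - (D - 4) ^ 2 ≤ 0 := by nlinarith
        nlinarith
    linarith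

theorem criticalCoupling_antitone {m m' : ℝ} (hmm : m ≤ m') (hm' : m' ≤ 49 / 4) :
    criticalCoupling m' ≤ criticalCoupling m := by
  unfold criticalCoupling
  have h1 : √(256 - 15 * m') ≤ √(256 - 15 * m) := Real.sqrt_le_sqrt (by linarith)
  have h2 : (62 - 3 * m') * √(256 - 15 * m') ≤ (62 - 3 * m) * √(256 - 15 * m) :=
    mul_le_mul (by linarith) h1 (Real.sqrt_nonneg _) (by linarith)
  linarith

theorem le_criticalCoupling {m : ℝ} (hm : m ≤ 49 / 4) : 7488 ≤ criticalCoupling m := by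
  refine le_trans (le_of_eq ?_) (criticalCoupling_antitone hm le_rfl)
  unfold criticalCoupling
  rw [show (256 - 15 * (49 / 4) : ℝ) = (17 / 2) ^ 2 by norm_num, Real.sqrt_sq (by norm_num)]
  norm_num

theorem cubicFn_lt_criticalCoupling {m u : ℝ} (hm1 : m ≤ 49 / 4)
    (hstrip : 3 * u ^ 2 - 2 * (8 + 3 * m) * u + (3 * m ^ 2 + 16) < 324 - 36 * u) :
    cubicFn m (8 + 3 * m - 2 * u) < criticalCoupling m := by
  have hs2 : √(256 - 15 * m) ^ 2 = 256 - 15 * m := Real.sq_sqrt (by linarith)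
  rw [criticalCoupling, ← cubicFn_criticalPoint hs2]
  set s := √(256 - 15 * m) with hs
  have hs0 : 17 / 2 ≤ s := by
    rw [hs]; exact Real.le_sqrt_of_sq_le (by linarith)
  have hu : 3 * m - 10 - 2 * s < 3 * u := by
    by_contra! hc
    have h5 : 324 - 36 * u - (3 * u ^ 2 - 2 * (8 + 3 * m) * u + (3 * m ^ 2 + 16)) =
        (3 * u - (3 * m - 10 - 2 * s)) * ((3 * m - 10 + 2 * s) - 3 * u) / 3 := by
      linear_combination (-4 / 3) * hs2
    have h6 : (3 * u - (3 * m - 10 - 2 * s)) * ((3 * m - 10 + 2 * s) - 3 * u) ≤ 0 :=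
      mul_nonpos_of_nonpos_of_nonneg (by linarith) (by linarith)
    linarith
  set t := 8 + 3 * m - 2 * u with ht
  set u₁ := (3 * m - 10 - 2 * s) / 3 with hu₁
  have key : cubicFn m ((44 + 3 * m + 4 * s) / 3) - cubicFn m t =
      ((44 + 3 * m + 4 * s) / 3 - t) * ((t - u₁) ^ 2 + (324 - 36 * u₁)) := by
    unfold cubicFn
    rw [hu₁]
    linear_combination ((16 / 9 * s + 16/3 * m + 176 / 9 - 4 / 3 * t) -
      (4 * s + 44 + 3 * m - 3 * t) * (4/9) +
      (16 / 9 * s - 4 / 3 * t - 8 / 3 * m + 176 / 9)) * hs2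
  have h1 : 0 < (44 + 3 * m + 4 * s) / 3 - t := by rw [ht]; linarith
  have h2 : 0 < 324 - 36 * u₁ := by rw [hu₁]; linarith
  have h3 : 0 < ((44 + 3 * m + 4 * s) / 3 - t) * ((t - u₁) ^ 2 + (324 - 36 * u₁)) := by positivity
  linarith

theorem exists_cubicFn_eq_of_sixteen_le {m c : ℝ} {z : ℂ} (hm : 16 ≤ m)
    (hz : (radialPoly m c).IsRoot z) (h : |z.re| < 3) : ∃ u < 9, c = cubicFn m u := by
  rw [isRoot_radialPoly_iff] at hz
  rw [abs_re_lt_three_iff] at h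
  generalize (z ^ 2).re = u at hz h
  generalize (z ^ 2).im = v at hz h
  have hu : u < 9 := by nlinarith [sq_nonneg v]
  obtain ⟨h1, h2 | h2⟩ := hz
  · exact ⟨u, hu, by simpa [h2] using h1⟩
  · have h3 : 0 < (10 - u) * (46 - 3 * u) := mul_pos (by linarith) (by linarith)
    have h4 : 0 ≤ (m - 16) * (m + 16 - 2 * u) := mul_nonneg (by linarith) (by linarith)
    nlinarith

theorem three_le_abs_re_of_criticalCoupling_le {m c : ℝ} {z : ℂ} (hm : 0 ≤ m) (hm1 : m ≤ 49 / 4)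
    (hc : criticalCoupling m ≤ c) (hz : (radialPoly m c).IsRoot z) : 3 ≤ |z.re| := by
  by_contra! h
  rw [isRoot_radialPoly_iff] at hz
  rw [abs_re_lt_three_iff] at h
  generalize (z ^ 2).re = u at hz h
  generalize (z ^ 2).im = v at hz h
  have hu : u < 9 := by nlinarith [sq_nonneg v]
  obtain ⟨h1, h2 | h2⟩ := hz
  · rw [h2] at h1
    linarith [cubicFn_lt_of_lt_nine hm hu, le_criticalCoupling hm1]
  · rw [h2] at h h1
    have h3 := cubicFn_lt_criticalCoupling hm1 h
    have h4 : c = cubicFn m (8 + 3 * m - 2 * u) := by rw [h1]; unfold cubicFn; ring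
    linarith

theorem cubicFn_nine (m : ℝ) : cubicFn m 9 = (1 - m) * (9 - m) * (25 - m) := by
  unfold cubicFn; ring

theorem cubicFn_lt_cubicFn_nine {m u : ℝ} (hm : 16 ≤ m) (hu : u < 9) :
    cubicFn m u < cubicFn m 9 := by
  have e : cubicFn m 9 - cubicFn m u =
      (9 - u) * ((9 - u) * (3 * m - 10 - u) + (3 * m ^ 2 - 54 * m + 115)) := by
    unfold cubicFn; ring
  have h1 : 0 < (9 - u) * (3 * m - 10 - u) := mul_pos (by linarith) (by linarith)
  have h2 : 0 < 3 * m ^ 2 - 54 * m + 115 := by nlinarith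
  have h3 : 0 < (9 - u) * ((9 - u) * (3 * m - 10 - u) + (3 * m ^ 2 - 54 * m + 115)) :=
    mul_pos (by linarith) (by linarith)
  linarith

theorem cubicFn_nine_antitone {m m' : ℝ} (hm : 81 / 4 ≤ m) (hmm : m ≤ m') :
    cubicFn m' 9 ≤ cubicFn m 9 := by
  rw [cubicFn_nine, cubicFn_nine]
  have e : (1 - m) * (9 - m) * (25 - m) - (1 - m') * (9 - m') * (25 - m') =
      (m' - m) * (m' ^ 2 + m' * m + m ^ 2 - 35 * (m' + m) + 259) := by ring
  have h1 : 0 ≤ m' ^ 2 + m' * m + m ^ 2 - 35 * (m' + m) + 259 := by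
    nlinarith [mul_nonneg (sub_nonneg.2 hm) (sub_nonneg.2 hmm), sq_nonneg (m' - m)]
  nlinarith [mul_nonneg (sub_nonneg.2 hmm) h1]

/-- The coupling constants for which all roots of the characteristic polynomials lie outside
the open strip `|Re z| < 3`. -/
def CouplingBound (n : ℕ) (c : ℝ) : Prop :=
  (n ≤ 9 →
    (64/27) * (7112 + 504 * (n : ℝ) - 126 * (n : ℝ) ^ 2 +
      (236 + 12 * (n : ℝ) - 3 * (n : ℝ) ^ 2) *
        Real.sqrt (964 + 60 * (n : ℝ) - 15 * (n : ℝ) ^ 2)) ≤ c) ∧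
  (10 ≤ n →
    -(((n : ℝ) + 8) * ((n : ℝ) + 4) * (n : ℝ) * ((n : ℝ) - 4) * ((n : ℝ) - 8) *
      ((n : ℝ) - 12)) / 64 ≤ c)

/-- The angular parameter on spherical harmonics of degree `ℓ` in dimension `n`. -/
def angularParam (n ℓ : ℕ) : ℝ := ((ℓ : ℝ) + ((n : ℝ) - 2) / 2) ^ 2

theorem criticalCoupling_angularParam {n : ℕ} :
    criticalCoupling (angularParam n 0) =
      (64/27) * (7112 + 504 * (n : ℝ) - 126 * (n : ℝ) ^ 2 +
        (236 + 12 * (n : ℝ) - 3 * (n : ℝ) ^ 2) *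
          Real.sqrt (964 + 60 * (n : ℝ) - 15 * (n : ℝ) ^ 2)) := by
  have h : √(964 + 60 * (n : ℝ) - 15 * (n : ℝ) ^ 2) = 2 * √(256 - 15 * angularParam n 0) := by
    rw [show (964 + 60 * (n : ℝ) - 15 * (n : ℝ) ^ 2) = 2 ^ 2 * (256 - 15 * angularParam n 0) by
      unfold angularParam; push_cast; ring, Real.sqrt_mul (by norm_num),
      Real.sqrt_sq (by norm_num)]
  rw [h, criticalCoupling]
  generalize √(256 - 15 * angularParam n 0) = s
  unfold angularParam
  push_cast
  ring

theorem cubicFn_nine_angularParam {n : ℕ} :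
    cubicFn (angularParam n 0) 9 =
      -(((n : ℝ) + 8) * ((n : ℝ) + 4) * (n : ℝ) * ((n : ℝ) - 4) * ((n : ℝ) - 8) *
      ((n : ℝ) - 12)) / 64 := by
  rw [cubicFn_nine]
  unfold angularParam
  push_cast
  ring

theorem angularParam_eq {n ℓ k : ℕ} (h : n + 2 * ℓ = k + 2) :
    angularParam n ℓ = (k : ℝ) ^ 2 / 4 := by
  have : (n : ℝ) + 2 * ℓ = k + 2 := by exact_mod_cast h
  rw [angularParam, show (ℓ : ℝ) + ((n : ℝ) - 2) / 2 = k / 2 by linarith]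
  ring

theorem couplingBound_of_three_le {n : ℕ} (hn : 2 ≤ n) {c : ℝ}
    (h : ∀ z, (radialPoly (angularParam n 0) c).IsRoot z → 3 ≤ |z.re|) : CouplingBound n c := by
  have h0 : 0 ≤ angularParam n 0 := sq_nonneg _
  refine ⟨fun hn9 => ?_, fun _ => ?_⟩
  · rw [← criticalCoupling_angularParam]
    by_contra! hc
    have hm : angularParam n 0 ≤ 49 / 4 := by
      obtain ⟨k, rfl⟩ := Nat.exists_eq_add_of_le' hn
      rw [angularParam_eq (k := k) (by omega)]
      have : (k : ℝ) ≤ 7 := by exact_mod_cast (by omega : k ≤ 7)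
      have : (0 : ℝ) ≤ k := k.cast_nonneg
      nlinarith
    obtain ⟨z, hz, hz3⟩ := exists_isRoot_of_lt_criticalCoupling h0 hm hc
    exact absurd (h z hz) (not_le.2 hz3)
  · rw [← cubicFn_nine_angularParam]
    by_contra! hc
    obtain ⟨z, hz, hz3⟩ := exists_isRoot_of_lt_cubicFn_nine h0 hc
    exact absurd (h z hz) (not_le.2 hz3)

theorem CouplingBound.three_le {n : ℕ} (hn : 2 ≤ n) {c : ℝ} (h : CouplingBound n c) (ℓ : ℕ)
    {z : ℂ} (hz : (radialPoly (angularParam n ℓ) c).IsRoot z) : 3 ≤ |z.re| := by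
  obtain ⟨j, rfl⟩ := Nat.exists_eq_add_of_le' hn
  have e0 : angularParam (j + 2) 0 = (j : ℝ) ^ 2 / 4 := angularParam_eq (by omega)
  have e1 : angularParam (j + 2) ℓ = ((j + 2 * ℓ : ℕ) : ℝ) ^ 2 / 4 := angularParam_eq (by omega)
  have hj : (0 : ℝ) ≤ j := j.cast_nonneg
  have hjk : (j : ℝ) ≤ (j + 2 * ℓ : ℕ) := by exact_mod_cast (by omega)
  have hmm : angularParam (j + 2) 0 ≤ angularParam (j + 2) ℓ := by
    rw [e0, e1]; gcongr
  rcases le_or_gt j 7 with hj7 | hj7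
  · have hc := h.1 (by omega)
    rw [← criticalCoupling_angularParam] at hc
    rcases le_or_gt (j + 2 * ℓ) 7 with hk | hk
    · have hm : angularParam (j + 2) ℓ ≤ 49 / 4 := by
        rw [e1]
        have : ((j + 2 * ℓ : ℕ) : ℝ) ≤ 7 := by exact_mod_cast hk
        nlinarith
      exact three_le_abs_re_of_criticalCoupling_le (sq_nonneg _) hm
        ((criticalCoupling_antitone hmm hm).trans hc) hz
    · by_contra! h3
      have hm : 16 ≤ angularParam (j + 2) ℓ := by
        rw [e1]
        have : (8 : ℝ) ≤ ((j + 2 * ℓ : ℕ) : ℝ) := by exact_mod_cast hk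
        nlinarith
      obtain ⟨u, hu, hcu⟩ := exists_cubicFn_eq_of_sixteen_le hm hz h3
      have hm0 : angularParam (j + 2) 0 ≤ 49 / 4 := by
        rw [e0]
        have : (j : ℝ) ≤ 7 := by exact_mod_cast hj7
        nlinarith
      have h5 := cubicFn_lt_of_lt_nine (by linarith : 0 ≤ angularParam (j + 2) ℓ) hu
      linarith [le_criticalCoupling hm0]
  · have hc := h.2 (by omega)
    rw [← cubicFn_nine_angularParam] at hc
    have hm0 : 16 ≤ angularParam (j + 2) 0 := by
      rw [e0]
      have : (8 : ℝ) ≤ (j : ℝ) := by exact_mod_cast hj7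
      nlinarith
    by_contra! h3
    obtain ⟨u, hu, hcu⟩ := exists_cubicFn_eq_of_sixteen_le (hm0.trans hmm) hz h3
    have h4 := cubicFn_lt_cubicFn_nine (hm0.trans hmm) hu
    suffices cubicFn (angularParam (j + 2) ℓ) 9 ≤ cubicFn (angularParam (j + 2) 0) 9 by linarith
    rcases Nat.eq_zero_or_pos ℓ with rfl | hℓ
    · exact le_rfl
    rcases Nat.lt_or_ge 8 j with hj8 | hj8
    · refine cubicFn_nine_antitone ?_ hmm
      rw [e0]
      have : (9 : ℝ) ≤ (j : ℝ) := by exact_mod_cast hj8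
      nlinarith
    · obtain rfl : j = 8 := by omega
      have hm : 25 ≤ angularParam (8 + 2) ℓ := by
        rw [e1]
        have : (10 : ℝ) ≤ ((8 + 2 * ℓ : ℕ) : ℝ) := by exact_mod_cast (by omega)
        nlinarith
      refine (cubicFn_nine_antitone (by norm_num) hm).trans ?_
      rw [cubicFn_nine, cubicFn_nine, e0]
      norm_num

theorem radialPoly_ne_zero (m c : ℝ) : radialPoly m c ≠ 0 := by
  intro h
  have key : ∀ x : ℝ, (C (c : ℂ) - ((X + 2) ^ 2 - C (m : ℂ)) * (X ^ 2 - C (m : ℂ)) *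
      ((X - 2) ^ 2 - C (m : ℂ)) : ℂ[X]).eval (x : ℂ) =
      ((c - ((x + 2) ^ 2 - m) * (x ^ 2 - m) * ((x - 2) ^ 2 - m) : ℝ) : ℂ) := by
    intro x; simp
  have key2 : ∀ x : ℝ, c - ((x + 2) ^ 2 - m) * (x ^ 2 - m) * ((x - 2) ^ 2 - m) = 0 := by
    intro x
    have h1 := key x
    rw [show (C (c : ℂ) - ((X + 2) ^ 2 - C (m : ℂ)) * (X ^ 2 - C (m : ℂ)) *
      ((X - 2) ^ 2 - C (m : ℂ)) : ℂ[X]) = 0 from h] at h1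
    simpa using (Complex.ofReal_injective (by simpa using h1)).symm
  refine one_ne_zero (α := ℝ) ?_
  linear_combination (key2 3 - 6 * key2 2 + 15 * key2 1 - 20 * key2 0 + 15 * key2 (-1)
    - 6 * key2 (-2) + key2 (-3)) / (-720)

theorem radialPoly_comp_neg (m c : ℝ) : (radialPoly m c).comp (-X) = radialPoly m c := by
  simp [radialPoly]; ring

theorem radialPoly_map_star (m c : ℝ) :
    (radialPoly m c).map (starRingEnd ℂ) = radialPoly m c := by
  simp [radialPoly]

end CharacteristicPolynomial

section TestFunctions

open Filter Topology
open scoped ContDiff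

/-- The Euclidean space `ℝⁿ`. -/
abbrev Euc (n : ℕ) : Type := EuclideanSpace ℝ (Fin n)

variable {n : ℕ}

/-- The space `C₀^∞(ℝⁿ \ {0})`. -/
def testFunctions (n : ℕ) : Submodule ℂ (Euc n → ℂ) where
  carrier := {φ | ContDiff ℝ ∞ φ ∧ HasCompactSupport φ ∧ (0 : Euc n) ∉ tsupport φ}
  add_mem' {f g} hf hg := by
    refine ⟨ContDiff.add hf.1 hg.1, hf.2.1.add hg.2.1, fun h => ?_⟩
    exact (tsupport_add f g h).elim hf.2.2 hg.2.2
  zero_mem' := ⟨contDiff_const, HasCompactSupport.zero, by simp [tsupport]⟩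
  smul_mem' c f hf := by
    refine ⟨contDiff_const.smul hf.1, hf.2.1.mono (Function.support_const_smul_subset c f),
      fun h => hf.2.2 (closure_mono (Function.support_const_smul_subset c f) h)⟩

theorem testFunctions_of_tsupport {f g : Euc n → ℂ} (hf : ContDiff ℝ ∞ f)
    (hg : g ∈ testFunctions n) (h : tsupport f ⊆ tsupport g) : f ∈ testFunctions n :=
  ⟨hf, hg.2.1.mono' ((subset_tsupport f).trans h), fun h0 => hg.2.2 (h h0)⟩

theorem conj_mem_testFunctions {f : Euc n → ℂ} (hf : f ∈ testFunctions n) :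
    (fun x => star (f x)) ∈ testFunctions n :=
  testFunctions_of_tsupport ((Complex.conjCLE : ℂ ≃L[ℝ] ℂ).contDiff.comp hf.1) hf
    (closure_mono fun x hx => by simpa using hx)

theorem mul_mem_testFunctions {f g : Euc n → ℂ} (hf : f ∈ testFunctions n)
    (hg : ContDiffOn ℝ ∞ g {0}ᶜ) : (fun x => g x * f x) ∈ testFunctions n := by
  refine testFunctions_of_tsupport ?_ hf (tsupport_mul_subset_right)
  rw [contDiff_iff_contDiffAt]
  intro x
  by_cases hx : x = 0
  · have h0 : f =ᶠ[𝓝 x] 0 := notMem_tsupport_iff_eventuallyEq.1 (hx ▸ hf.2.2)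
    exact contDiffAt_const (c := (0 : ℂ)) |>.congr_of_eventuallyEq
      (h0.mono fun y hy => by simp [hy])
  · exact (hg.contDiffAt (isOpen_compl_singleton.mem_nhds hx)).mul hf.1.contDiffAt

/-- The partial derivative of a function on `ℝⁿ`. -/
def partialDeriv (i : Fin n) (f : Euc n → ℂ) (x : Euc n) : ℂ :=
  fderiv ℝ f x (EuclideanSpace.single i (1 : ℝ))

theorem partialDeriv_congr {f g : Euc n → ℂ} {x : Euc n} (h : f =ᶠ[𝓝 x] g) (i : Fin n) :
    partialDeriv i f =ᶠ[𝓝 x] partialDeriv i g :=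
  h.fderiv.mono fun y hy => by rw [partialDeriv, hy, partialDeriv]

theorem partialDeriv_add {f g : Euc n → ℂ} {x : Euc n} (hf : DifferentiableAt ℝ f x)
    (hg : DifferentiableAt ℝ g x) (i : Fin n) :
    partialDeriv i (f + g) x = partialDeriv i f x + partialDeriv i g x := by
  simp [partialDeriv, fderiv_add hf hg]

theorem partialDeriv_smul (c : ℂ) (f : Euc n → ℂ) (i : Fin n) :
    partialDeriv i (c • f) = c • partialDeriv i f := by
  ext x
  rcases eq_or_ne c 0 with rfl | hc
  · simp [partialDeriv]
  · by_cases hf : DifferentiableAt ℝ f x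
    · simp [partialDeriv, fderiv_const_smul hf c]
    · have h2 : ¬ DifferentiableAt ℝ (c • f) x := fun h => hf <| by
        have := h.const_smul c⁻¹
        rwa [inv_smul_smul₀ hc] at this
      simp [partialDeriv, fderiv_zero_of_not_differentiableAt hf,
        fderiv_zero_of_not_differentiableAt h2]

theorem partialDeriv_star {f : Euc n → ℂ} (i : Fin n) :
    partialDeriv i (fun x => star (f x)) = fun x => star (partialDeriv i f x) := by
  ext x
  have h := (Complex.conjCLE : ℂ ≃L[ℝ] ℂ).comp_fderiv (f := f) (x := x)
  have h2 : (fun x => star (f x)) = (Complex.conjCLE : ℂ ≃L[ℝ] ℂ) ∘ f := rfl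
  rw [partialDeriv, h2, h]
  rfl

theorem partialDeriv_mem {f : Euc n → ℂ} (hf : f ∈ testFunctions n) (i : Fin n) :
    partialDeriv i f ∈ testFunctions n :=
  testFunctions_of_tsupport ((hf.1.fderiv_right (m := ∞) le_rfl).clm_apply contDiff_const) hf
    (tsupport_fderiv_apply_subset ℝ _)

theorem laplacian_eq (f : Euc n → ℂ) :
    laplacian f = ∑ i, partialDeriv i (partialDeriv i f) := by
  ext x
  rw [Finset.sum_apply]
  rfl

theorem laplacian_congr {f g : Euc n → ℂ} {x : Euc n} (h : f =ᶠ[𝓝 x] g) :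
    laplacian f =ᶠ[𝓝 x] laplacian g := by
  rw [laplacian_eq, laplacian_eq]
  have : ∀ᶠ y in 𝓝 x, ∀ i, partialDeriv i (partialDeriv i f) y =
      partialDeriv i (partialDeriv i g) y :=
    eventually_all.2 fun i => partialDeriv_congr (partialDeriv_congr h i) i
  filter_upwards [this] with y hy
  simp [hy]

theorem negLap_congr {f g : Euc n → ℂ} {x : Euc n} (h : f =ᶠ[𝓝 x] g) :
    negLap f =ᶠ[𝓝 x] negLap g :=
  (laplacian_congr h).mono fun y hy => by simp [negLap, hy]

theorem negLap_mem {f : Euc n → ℂ} (hf : f ∈ testFunctions n) : negLap f ∈ testFunctions n := by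
  have h : negLap f = -∑ i, partialDeriv i (partialDeriv i f) := by
    rw [← laplacian_eq]; rfl
  rw [h]
  exact neg_mem (sum_mem fun i _ => partialDeriv_mem (partialDeriv_mem hf i) i)

theorem negLap_add {f g : Euc n → ℂ} (hf : f ∈ testFunctions n) (hg : g ∈ testFunctions n) :
    negLap (f + g) = negLap f + negLap g := by
  have h1 : ∀ {f g : Euc n → ℂ}, f ∈ testFunctions n → g ∈ testFunctions n → ∀ i,
      partialDeriv i (f + g) = partialDeriv i f + partialDeriv i g := fun hf hg i =>
    funext fun x => partialDeriv_add (hf.1.differentiable (by simp) x)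
      (hg.1.differentiable (by simp) x) i
  ext x
  simp only [negLap, laplacian_eq, Pi.add_apply, h1 hf hg,
    h1 (partialDeriv_mem hf _) (partialDeriv_mem hg _), Finset.sum_apply, Finset.sum_add_distrib]
  ring

theorem negLap_smul (c : ℂ) (f : Euc n → ℂ) : negLap (c • f) = c • negLap f := by
  ext x
  simp [negLap, laplacian_eq, partialDeriv_smul, Finset.mul_sum]

theorem negLap_star (f : Euc n → ℂ) :
    negLap (fun x => star (f x)) = fun x => star (negLap f x) := by
  ext x
  simp only [negLap, laplacian_eq, Finset.sum_apply, partialDeriv_star, star_neg, star_sum]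

theorem integrable_mul_testFunctions {f g : Euc n → ℂ} (hf : f ∈ testFunctions n)
    (hg : g ∈ testFunctions n) : Integrable (fun x => f x * g x) :=
  (hf.1.continuous.mul hg.1.continuous).integrable_of_hasCompactSupport hf.2.1.mul_right

theorem integral_mul_partialDeriv {f g : Euc n → ℂ} (hf : f ∈ testFunctions n)
    (hg : g ∈ testFunctions n) (i : Fin n) :
    ∫ x, f x * partialDeriv i g x = -∫ x, partialDeriv i f x * g x :=
  integral_mul_fderiv_eq_neg_fderiv_mul_of_integrable
    (integrable_mul_testFunctions (partialDeriv_mem hf i) hg)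
    (integrable_mul_testFunctions hf (partialDeriv_mem hg i))
    (integrable_mul_testFunctions hf hg)
    (fun x _ => hf.1.differentiable (by simp) x) (fun x _ => hg.1.differentiable (by simp) x)

theorem integral_mul_negLap {f g : Euc n → ℂ} (hf : f ∈ testFunctions n)
    (hg : g ∈ testFunctions n) : ∫ x, f x * negLap g x = ∫ x, negLap f x * g x := by
  simp only [negLap, laplacian_eq, Finset.sum_apply, mul_neg, neg_mul, Finset.mul_sum,
    Finset.sum_mul, integral_neg]
  rw [integral_finsetSum, integral_finsetSum]
  · congr 1
    refine Finset.sum_congr rfl fun i _ => ?_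
    rw [integral_mul_partialDeriv hf (partialDeriv_mem hg i),
      integral_mul_partialDeriv (partialDeriv_mem hf i) hg, neg_neg]
  · exact fun i _ => integrable_mul_testFunctions (partialDeriv_mem (partialDeriv_mem hf i) i) hg
  · exact fun i _ => integrable_mul_testFunctions hf (partialDeriv_mem (partialDeriv_mem hg i) i)

/-- The differential expression `(-Δ)³ + c|x|⁻⁶`. -/
def formalT (n : ℕ) (c : ℝ) (φ : Euc n → ℂ) (x : Euc n) : ℂ :=
  negLap^[3] φ x + ((c * (‖x‖ ^ 6)⁻¹ : ℝ) : ℂ) * φ x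

variable {c : ℝ}

theorem formalT_eq (φ : Euc n → ℂ) : formalT n c φ =
    negLap (negLap (negLap φ)) + fun x => ((c * (‖x‖ ^ 6)⁻¹ : ℝ) : ℂ) * φ x := rfl

theorem formalT_congr {f g : Euc n → ℂ} {x : Euc n} (h : f =ᶠ[𝓝 x] g) :
    formalT n c f x = formalT n c g x := by
  rw [formalT_eq, formalT_eq]
  simp [(negLap_congr (negLap_congr (negLap_congr h))).eq_of_nhds, h.eq_of_nhds]

theorem contDiffOn_potential :
    ContDiffOn ℝ ∞ (fun x : Euc n => ((c * (‖x‖ ^ 6)⁻¹ : ℝ) : ℂ)) {0}ᶜ := by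
  refine Complex.ofRealCLM.contDiff.comp_contDiffOn ?_
  intro x hx
  refine (contDiffAt_const.mul (ContDiffAt.inv ((contDiffAt_norm ℝ hx).pow 6) ?_)).contDiffWithinAt
  exact pow_ne_zero _ (norm_ne_zero_iff.2 hx)

theorem formalT_mem {f : Euc n → ℂ} (hf : f ∈ testFunctions n) :
    formalT n c f ∈ testFunctions n :=
  add_mem (negLap_mem (negLap_mem (negLap_mem hf))) (mul_mem_testFunctions hf contDiffOn_potential)

theorem formalT_add {f g : Euc n → ℂ} (hf : f ∈ testFunctions n) (hg : g ∈ testFunctions n) :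
    formalT n c (f + g) = formalT n c f + formalT n c g := by
  simp only [formalT_eq, negLap_add hf hg, negLap_add (negLap_mem hf) (negLap_mem hg),
    negLap_add (negLap_mem (negLap_mem hf)) (negLap_mem (negLap_mem hg))]
  ext x
  simp; ring

theorem formalT_smul (a : ℂ) (f : Euc n → ℂ) : formalT n c (a • f) = a • formalT n c f := by
  simp only [formalT_eq, negLap_smul]
  ext x
  simp; ring

theorem formalT_star (f : Euc n → ℂ) :
    formalT n c (fun x => star (f x)) = fun x => star (formalT n c f x) := by
  simp only [formalT_eq, negLap_star]
  ext x
  simp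

theorem integral_mul_formalT {f g : Euc n → ℂ} (hf : f ∈ testFunctions n)
    (hg : g ∈ testFunctions n) : ∫ x, f x * formalT n c g x = ∫ x, formalT n c f x * g x := by
  simp only [formalT_eq, Pi.add_apply, mul_add, add_mul]
  rw [integral_add, integral_add, integral_mul_negLap hf (negLap_mem (negLap_mem hg)),
    integral_mul_negLap (negLap_mem hf) (negLap_mem hg),
    integral_mul_negLap (negLap_mem (negLap_mem hf)) hg]
  · congr 2
    ext x
    ring
  · exact integrable_mul_testFunctions (negLap_mem (negLap_mem (negLap_mem hf))) hg
  · exact integrable_mul_testFunctions (mul_mem_testFunctions hf contDiffOn_potential) hg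
  · exact integrable_mul_testFunctions hf (negLap_mem (negLap_mem (negLap_mem hg)))
  · exact integrable_mul_testFunctions hf (mul_mem_testFunctions hg contDiffOn_potential)

end TestFunctions

section OperatorOnTestFunctions

open Filter Topology
open scoped ContDiff InnerProductSpace

variable {n : ℕ} {c : ℝ}

/-- The Hilbert space `L²(ℝⁿ)`. -/
abbrev L2Euc (n : ℕ) : Type := Lp ℂ 2 (volume : Measure (Euc n))

theorem memLp_testFunctions {f : Euc n → ℂ} (hf : f ∈ testFunctions n) : MemLp f 2 volume :=
  hf.1.continuous.memLp_of_hasCompactSupport hf.2.1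

/-- The element of `L²(ℝⁿ)` represented by a test function. -/
def testLp : testFunctions n →ₗ[ℂ] L2Euc n where
  toFun f := (memLp_testFunctions f.2).toLp f
  map_add' f g := MemLp.toLp_add (memLp_testFunctions f.2) (memLp_testFunctions g.2)
  map_smul' a f := MemLp.toLp_const_smul a (memLp_testFunctions f.2)

theorem testLp_coe (f : testFunctions n) : (testLp f : Euc n → ℂ) =ᵐ[volume] f :=
  MemLp.coeFn_toLp (memLp_testFunctions f.2)

theorem eq_testLp {u : L2Euc n} {f : testFunctions n}
    (h : (u : Euc n → ℂ) =ᵐ[volume] f) : u = testLp f :=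
  Lp.ext (h.trans (testLp_coe f).symm)

/-- The differential expression acting on test functions. -/
def testT (c : ℝ) : testFunctions n →ₗ[ℂ] testFunctions n where
  toFun f := ⟨formalT n c f, formalT_mem f.2⟩
  map_add' f g := Subtype.ext (formalT_add f.2 g.2)
  map_smul' a f := Subtype.ext (formalT_smul a (f : Euc n → ℂ))

theorem mem_graphOf {p : L2Euc n × L2Euc n} : p ∈ graphOf n (formalT n c) ↔
    ∃ f : testFunctions n, p.1 = testLp f ∧ p.2 = testLp (testT c f) := by
  constructor
  · intro hp
    refine Submodule.span_induction ?_ ?_ ?_ ?_ hp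
    · rintro p ⟨φ, h1, h2, h3, h4, h5⟩
      exact ⟨⟨φ, h1, h2, h3⟩, eq_testLp h4, eq_testLp (f := testT c ⟨φ, h1, h2, h3⟩) h5⟩
    · exact ⟨0, by simp, by simp⟩
    · rintro p q _ _ ⟨f, hf1, hf2⟩ ⟨g, hg1, hg2⟩
      exact ⟨f + g, by simp [hf1, hg1], by simp [hf2, hg2]⟩
    · rintro a p _ ⟨f, hf1, hf2⟩
      exact ⟨a • f, by simp [hf1], by simp [hf2]⟩
  · rintro ⟨f, h1, h2⟩
    refine Submodule.subset_span ⟨f, f.2.1, f.2.2.1, f.2.2.2, ?_, ?_⟩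
    · rw [h1]; exact testLp_coe f
    · rw [h2]; exact testLp_coe (testT c f)

theorem snd_eq_zero_of_mem_graphOf (p : L2Euc n × L2Euc n) (hp : p ∈ graphOf n (formalT n c))
    (h0 : p.1 = 0) : p.2 = 0 := by
  obtain ⟨f, h1, h2⟩ := mem_graphOf.1 hp
  have hf : (f : Euc n → ℂ) = 0 := by
    refine (Continuous.ae_eq_iff_eq volume f.2.1.continuous continuous_const).1 ?_
    refine (testLp_coe f).symm.trans ?_
    rw [← h1, h0]
    exact Lp.coeFn_zero ..
  obtain rfl : f = 0 := Subtype.ext hf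
  simp [h2]

theorem graph_T3op : (T3op n c).graph = graphOf n (formalT n c) :=
  Submodule.toLinearPMap_graph_eq _ snd_eq_zero_of_mem_graphOf

theorem T3op_eq_testLp (x : (T3op n c).domain) :
    ∃ f : testFunctions n, (x : L2Euc n) = testLp f ∧ T3op n c x = testLp (testT c f) :=
  mem_graphOf.1 (graph_T3op (n := n) (c := c) ▸ (T3op n c).mem_graph x)

theorem exists_T3op_eq_testLp (f : testFunctions n) :
    ∃ x : (T3op n c).domain, (x : L2Euc n) = testLp f ∧ T3op n c x = testLp (testT c f) := by
  have h : (testLp f, testLp (testT c f)) ∈ (T3op n c).graph := by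
    rw [graph_T3op]; exact mem_graphOf.2 ⟨f, rfl, rfl⟩
  obtain ⟨x, h1, h2⟩ := (LinearPMap.mem_graph_iff _).1 h
  exact ⟨x, h1, h2⟩

theorem inner_testLp_right (u : L2Euc n) (f : testFunctions n) :
    ⟪u, testLp f⟫_ℂ = ∫ x, star ((u : Euc n → ℂ) x) * (f : Euc n → ℂ) x := by
  rw [L2.inner_def]
  refine integral_congr_ae ?_
  filter_upwards [testLp_coe f] with x hx
  rw [hx, RCLike.inner_apply, mul_comm]
  rfl

theorem T3op_symmetric (x y : (T3op n c).domain) :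
    ⟪T3op n c x, (y : L2Euc n)⟫_ℂ = ⟪(x : L2Euc n), T3op n c y⟫_ℂ := by
  obtain ⟨f, hf1, hf2⟩ := T3op_eq_testLp x
  obtain ⟨g, hg1, hg2⟩ := T3op_eq_testLp y
  rw [hf1, hf2, hg1, hg2, inner_testLp_right, inner_testLp_right]
  have h := integral_mul_formalT (c := c) (conj_mem_testFunctions f.2) g.2
  rw [formalT_star] at h
  calc _ = ∫ x, star (formalT n c f x) * (g : Euc n → ℂ) x := by
        refine integral_congr_ae ?_
        filter_upwards [testLp_coe (testT c f)] with x hx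
        rw [hx]; rfl
    _ = _ := h.symm
    _ = _ := by
        refine integral_congr_ae ?_
        filter_upwards [testLp_coe f] with x hx
        rw [hx]; rfl

end OperatorOnTestFunctions

section LogRadialFunctions

open Filter Topology
open scoped ContDiff InnerProductSpace

variable {n : ℕ}

/-- The function on `ℝⁿ` defined by a polynomial. -/
def polyFn (p : MvPolynomial (Fin n) ℂ) (x : Euc n) : ℂ :=
  MvPolynomial.eval (fun i => (x i : ℂ)) p

theorem contDiff_coord (i : Fin n) : ContDiff ℝ ∞ fun x : Euc n => (x i : ℂ) :=
  Complex.ofRealCLM.contDiff.comp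
    (EuclideanSpace.proj i : Euc n →L[ℝ] ℝ).contDiff

theorem partialDeriv_coord (i j : Fin n) (x : Euc n) :
    partialDeriv i (fun x : Euc n => (x j : ℂ)) x = if j = i then 1 else 0 := by
  have h : HasFDerivAt (fun x : Euc n => (x j : ℂ)) (Complex.ofRealCLM.comp
      (EuclideanSpace.proj j : Euc n →L[ℝ] ℝ)) x :=
    (Complex.ofRealCLM.comp
      (EuclideanSpace.proj j : Euc n →L[ℝ] ℝ)).hasFDerivAt
  rw [partialDeriv, h.fderiv]
  simp
  split_ifs <;> simp

theorem polyFn_C (a : ℂ) : polyFn (MvPolynomial.C a : MvPolynomial (Fin n) ℂ) = fun _ => a := by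
  ext; simp [polyFn]

theorem polyFn_add (p q : MvPolynomial (Fin n) ℂ) : polyFn (p + q) = polyFn p + polyFn q := by
  ext; simp [polyFn]

theorem polyFn_mul (p q : MvPolynomial (Fin n) ℂ) :
    polyFn (p * q) = fun x => polyFn p x * polyFn q x := by
  ext; simp [polyFn]

theorem polyFn_X (i : Fin n) :
    polyFn (MvPolynomial.X i : MvPolynomial (Fin n) ℂ) = fun x => (x i : ℂ) := by
  ext; simp [polyFn]

theorem contDiff_polyFn (p : MvPolynomial (Fin n) ℂ) : ContDiff ℝ ∞ (polyFn p) := by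
  induction p using MvPolynomial.induction_on with
  | C a => rw [polyFn_C]; exact contDiff_const
  | add p q hp hq => rw [polyFn_add]; exact hp.add hq
  | mul_X p i hp => rw [polyFn_mul, polyFn_X]; exact hp.mul (contDiff_coord i)

theorem partialDeriv_mul {f g : Euc n → ℂ} {x : Euc n} (hf : DifferentiableAt ℝ f x)
    (hg : DifferentiableAt ℝ g x) (i : Fin n) :
    partialDeriv i (fun x => f x * g x) x =
      partialDeriv i f x * g x + f x * partialDeriv i g x := by
  simp [partialDeriv, fderiv_fun_mul hf hg]
  ring

theorem partialDeriv_polyFn (i : Fin n) (p : MvPolynomial (Fin n) ℂ) (x : Euc n) :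
    partialDeriv i (polyFn p) x = polyFn (MvPolynomial.pderiv i p) x := by
  induction p using MvPolynomial.induction_on with
  | C a =>
    rw [polyFn_C]
    simp [partialDeriv, polyFn]
  | add p q hp hq =>
    rw [polyFn_add, partialDeriv_add ((contDiff_polyFn p).differentiable (by simp) x)
      ((contDiff_polyFn q).differentiable (by simp) x), hp, hq]
    simp [polyFn]
  | mul_X p j hp =>
    rw [polyFn_mul, polyFn_X, partialDeriv_mul ((contDiff_polyFn p).differentiable (by simp) x)
      ((contDiff_coord j).differentiable (by simp) x), hp, partialDeriv_coord]
    by_cases hij : j = i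
    · subst hij; simp [polyFn]; ring
    · simp [polyFn, hij, MvPolynomial.pderiv_X_of_ne hij]; ring

/-- The function `x ↦ p(x) G(log ‖x‖)` on `ℝⁿ \ {0}`, extended by zero. -/
def logLift (p : MvPolynomial (Fin n) ℂ) (G : ℝ → ℂ) (x : Euc n) : ℂ :=
  if x = 0 then 0 else polyFn p x * G (Real.log ‖x‖)

theorem logLift_of_ne (p : MvPolynomial (Fin n) ℂ) (G : ℝ → ℂ) {x : Euc n} (hx : x ≠ 0) :
    logLift p G x = polyFn p x * G (Real.log ‖x‖) := if_neg hx

theorem hasFDerivAt_log_norm {x : Euc n} (hx : x ≠ 0) :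
    HasFDerivAt (fun y : Euc n => Real.log ‖y‖) ((‖x‖ ^ 2)⁻¹ • innerSL ℝ x) x := by
  have h := ((hasStrictFDerivAt_norm_sq x).hasFDerivAt.log (by positivity)).const_mul (1 / 2 : ℝ)
  have e : (fun y : Euc n => (1 / 2 : ℝ) * Real.log (‖y‖ ^ 2)) = fun y => Real.log ‖y‖ := by
    ext y; rw [Real.log_pow]; push_cast; ring
  rw [e] at h
  refine h.congr_fderiv ?_
  ext v
  simp
  ring

theorem contDiffAt_log_norm {x : Euc n} (hx : x ≠ 0) :
    ContDiffAt ℝ ∞ (fun y : Euc n => Real.log ‖y‖) x :=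
  (contDiffAt_norm ℝ hx).log (norm_ne_zero_iff.2 hx)

theorem eventually_ne_zero {x : Euc n} (hx : x ≠ 0) : ∀ᶠ y in 𝓝 x, y ≠ 0 :=
  isOpen_compl_singleton.mem_nhds hx

theorem contDiffAt_logLift (p : MvPolynomial (Fin n) ℂ) (G : SmoothFn) {x : Euc n} (hx : x ≠ 0) :
    ContDiffAt ℝ ∞ (logLift p G) x := by
  have h : ContDiffAt ℝ ∞ (fun y => polyFn p y * (G : ℝ → ℂ) (Real.log ‖y‖)) x :=
    (contDiff_polyFn p).contDiffAt.mul (G.contDiff.contDiffAt.comp x (contDiffAt_log_norm hx))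
  exact h.congr_of_eventuallyEq ((eventually_ne_zero hx).mono fun y hy => logLift_of_ne p G hy)

theorem logLift_mem (p : MvPolynomial (Fin n) ℂ) {G : SmoothFn}
    (hG : HasCompactSupport (G : ℝ → ℂ)) : logLift p G ∈ testFunctions n := by
  obtain ⟨R, hR⟩ := hG.isBounded.subset_closedBall 0
  have h0 : logLift p G =ᶠ[𝓝 0] 0 := by
    filter_upwards [Metric.ball_mem_nhds (0 : Euc n) (Real.exp_pos (-R))] with x hx
    by_cases hx0 : x = 0
    · simp [hx0, logLift]
    rw [logLift_of_ne p G hx0, image_eq_zero_of_notMem_tsupport (f := (G : ℝ → ℂ)), mul_zero]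
    · rfl
    · intro h
      have h1 := hR h
      rw [mem_closedBall_zero_iff, Real.norm_eq_abs, abs_le] at h1
      have h2 : Real.log ‖x‖ < -R := by
        rw [Real.log_lt_iff_lt_exp (norm_pos_iff.2 hx0)]
        simpa using hx
      linarith [h1.1]
  refine ⟨?_, ?_, notMem_tsupport_iff_eventuallyEq.2 h0⟩
  · rw [contDiff_iff_contDiffAt]
    intro x
    by_cases hx : x = 0
    · subst hx
      exact contDiffAt_const (c := (0 : ℂ)) |>.congr_of_eventuallyEq h0
    · exact contDiffAt_logLift p G hx
  · refine HasCompactSupport.intro (isCompact_closedBall (0 : Euc n) (Real.exp R)) fun x hx => ?_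
    by_cases hx0 : x = 0
    · simp [hx0, logLift]
    rw [logLift_of_ne p G hx0, image_eq_zero_of_notMem_tsupport (f := (G : ℝ → ℂ)), mul_zero]
    intro h
    have h1 := hR h
    rw [mem_closedBall_zero_iff, Real.norm_eq_abs, abs_le] at h1
    refine hx ?_
    rw [mem_closedBall_zero_iff, ← Real.log_le_iff_le_exp (norm_pos_iff.2 hx0)]
    exact h1.2

theorem exp_neg_two_log_norm {x : Euc n} (hx : x ≠ 0) :
    (expFn (-2) : ℝ → ℂ) (Real.log ‖x‖) = (((‖x‖ ^ 2)⁻¹ : ℝ) : ℂ) := by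
  rw [expFn_apply, show (-2 : ℂ) * (Real.log ‖x‖ : ℂ) = ((-2 * Real.log ‖x‖ : ℝ) : ℂ) by
    push_cast; ring, ← Complex.ofReal_exp]
  congr 1
  rw [show -2 * Real.log ‖x‖ = -(Real.log (‖x‖ ^ 2)) by rw [Real.log_pow]; push_cast; ring,
    Real.exp_neg, Real.exp_log (by positivity)]

theorem partialDeriv_logLift (p : MvPolynomial (Fin n) ℂ) (G : SmoothFn) (i : Fin n)
    {x : Euc n} (hx : x ≠ 0) : partialDeriv i (logLift p G) x =
      logLift (MvPolynomial.pderiv i p) G x +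
        logLift (MvPolynomial.X i * p) (expFn (-2) * smoothDeriv G : SmoothFn) x := by
  have e : logLift p G =ᶠ[𝓝 x] fun y => polyFn p y * (G : ℝ → ℂ) (Real.log ‖y‖) :=
    (eventually_ne_zero hx).mono fun y hy => logLift_of_ne p G hy
  have hG : HasFDerivAt (fun y : Euc n => (G : ℝ → ℂ) (Real.log ‖y‖)) _ x :=
    (G.hasDerivAt _).hasFDerivAt.comp x (hasFDerivAt_log_norm hx)
  rw [(partialDeriv_congr e i).eq_of_nhds, partialDeriv_mul
    ((contDiff_polyFn p).differentiable (by simp) x) hG.differentiableAt, partialDeriv_polyFn,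
    logLift_of_ne _ _ hx, logLift_of_ne _ _ hx]
  congr 1
  rw [partialDeriv, hG.fderiv]
  have h1 : inner ℝ x (EuclideanSpace.single i (1 : ℝ)) = x i := by
    rw [real_inner_comm, EuclideanSpace.inner_single_left]; simp
  have h2 : ((expFn (-2) * smoothDeriv G : SmoothFn) : ℝ → ℂ) (Real.log ‖x‖) =
      (((‖x‖ ^ 2)⁻¹ : ℝ) : ℂ) * (smoothDeriv G : ℝ → ℂ) (Real.log ‖x‖) := by
    rw [← exp_neg_two_log_norm hx]; rfl
  rw [h2]
  simp [h1, polyFn]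
  ring

theorem partialDeriv_congr_set {f g : Euc n → ℂ} (h : ∀ x ≠ 0, f x = g x) (i : Fin n)
    {x : Euc n} (hx : x ≠ 0) : partialDeriv i f x = partialDeriv i g x :=
  (partialDeriv_congr ((eventually_ne_zero hx).mono h) i).eq_of_nhds

/-- A homogeneous harmonic polynomial of degree `ℓ`. -/
structure IsSolidHarmonic (p : MvPolynomial (Fin n) ℂ) (ℓ : ℕ) : Prop where
  isHomogeneous : p.IsHomogeneous ℓ
  sum_pderiv : ∑ i, MvPolynomial.pderiv i (MvPolynomial.pderiv i p) = 0

theorem laplacian_logLift {p : MvPolynomial (Fin n) ℂ} {ℓ : ℕ} (hp : IsSolidHarmonic p ℓ)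
    (G : SmoothFn) {x : Euc n} (hx : x ≠ 0) : laplacian (logLift p G) x =
      logLift p (expFn (-2) * (smoothDeriv (smoothDeriv G) +
        ((2 * ℓ + n - 2 : ℂ)) • smoothDeriv G) : SmoothFn) x := by
  set G₁ : SmoothFn := expFn (-2) * smoothDeriv G with hG₁
  set G₂ : SmoothFn := expFn (-2) * smoothDeriv G₁ with hG₂
  have key : ∀ i, partialDeriv i (partialDeriv i (logLift p G)) x =
      polyFn (MvPolynomial.pderiv i (MvPolynomial.pderiv i p)) x * (G : ℝ → ℂ) (Real.log ‖x‖) +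
      (2 * polyFn (MvPolynomial.X i * MvPolynomial.pderiv i p) x + polyFn p x) *
        (G₁ : ℝ → ℂ) (Real.log ‖x‖) +
      (x i : ℂ) ^ 2 * polyFn p x * (G₂ : ℝ → ℂ) (Real.log ‖x‖) := by
    intro i
    have h1 : partialDeriv i (partialDeriv i (logLift p G)) x = partialDeriv i
        (logLift (MvPolynomial.pderiv i p) G + logLift (MvPolynomial.X i * p) G₁) x :=
      partialDeriv_congr_set (fun y hy => partialDeriv_logLift p G i hy) i hx
    rw [h1, partialDeriv_add ((contDiffAt_logLift _ _ hx).differentiableAt (by simp))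
      ((contDiffAt_logLift _ _ hx).differentiableAt (by simp)), partialDeriv_logLift _ _ _ hx,
      partialDeriv_logLift _ _ _ hx]
    simp only [logLift_of_ne _ _ hx, ← hG₁, ← hG₂]
    simp [polyFn]
    ring
  have hsq : ∑ i, (x i : ℂ) ^ 2 = ((‖x‖ ^ 2 : ℝ) : ℂ) := by
    rw [EuclideanSpace.real_norm_sq_eq]; push_cast; rfl
  have hharm : ∑ i, polyFn (MvPolynomial.pderiv i (MvPolynomial.pderiv i p)) x = 0 := by
    have := congrArg (fun q => polyFn q x) hp.sum_pderiv
    simpa [polyFn] using this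
  have heuler : ∑ i, polyFn (MvPolynomial.X i * MvPolynomial.pderiv i p) x = ℓ * polyFn p x := by
    have := congrArg (fun q => polyFn q x) hp.isHomogeneous.sum_X_mul_pderiv
    simpa [polyFn] using this
  have hexp := exp_neg_two_log_norm hx
  have hx2 : ((‖x‖ ^ 2 : ℝ) : ℂ) * (expFn (-2) : ℝ → ℂ) (Real.log ‖x‖) = 1 := by
    rw [hexp, ← Complex.ofReal_mul, mul_inv_cancel₀ (by positivity), Complex.ofReal_one]
  have hG1' : smoothDeriv G₁ =
      expFn (-2) * (smoothDeriv (smoothDeriv G) + (-2 : ℂ) • smoothDeriv G) := by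
    rw [hG₁, smoothDeriv_mul, smoothDeriv_expFn]
    simp only [mul_add, smul_mul_assoc, mul_smul_comm]
    ring
  rw [laplacian_eq, Finset.sum_apply, Finset.sum_congr rfl fun i _ => key i]
  simp only [Finset.sum_add_distrib, ← Finset.sum_mul, ← Finset.mul_sum, hharm, heuler, hsq]
  rw [logLift_of_ne _ _ hx, hG₂, hG1', hG₁]
  simp only [Finset.sum_const, Finset.card_univ, Fintype.card_fin, nsmul_eq_mul]
  simp only [MulMemClass.coe_mul, AddMemClass.coe_add, Pi.mul_apply, Pi.add_apply,
    Subalgebra.coe_smul, Pi.smul_apply, smul_eq_mul]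
  generalize (expFn (-2) : ℝ → ℂ) (Real.log ‖x‖) = e at *
  linear_combination polyFn p x * e *
    ((smoothDeriv (smoothDeriv G) : ℝ → ℂ) (Real.log ‖x‖) -
      2 * (smoothDeriv G : ℝ → ℂ) (Real.log ‖x‖)) * hx2

/-- The angular exponent on spherical harmonics of degree `ℓ` in dimension `n`. -/
def angularExp (n ℓ : ℕ) : ℝ := (ℓ : ℝ) + ((n : ℝ) - 2) / 2

theorem negLap_logLift {p : MvPolynomial (Fin n) ℂ} {ℓ : ℕ} (hp : IsSolidHarmonic p ℓ) (a : ℂ)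
    (f : SmoothFn) {x : Euc n} (hx : x ≠ 0) : negLap (logLift p (expFn a * f : SmoothFn)) x =
      logLift p (expFn (a - 2) * diffOp (Polynomial.C ((angularExp n ℓ : ℂ) ^ 2) -
        (Polynomial.X + Polynomial.C (a + angularExp n ℓ)) ^ 2) f : SmoothFn) x := by
  have h1 : smoothDeriv (smoothDeriv (expFn a * f)) + ((2 * ℓ + n - 2 : ℂ)) •
      smoothDeriv (expFn a * f) = expFn a * diffOp (-(Polynomial.C ((angularExp n ℓ : ℂ) ^ 2) -
        (Polynomial.X + Polynomial.C (a + angularExp n ℓ)) ^ 2)) f := by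
    have h2 : (-(Polynomial.C ((angularExp n ℓ : ℂ) ^ 2) -
        (Polynomial.X + Polynomial.C (a + angularExp n ℓ)) ^ 2)) =
        (Polynomial.X * Polynomial.X + Polynomial.C (2 * ℓ + n - 2 : ℂ) * Polynomial.X).comp
          (Polynomial.X + Polynomial.C a) := by
      rw [show (2 * ℓ + n - 2 : ℂ) = 2 * angularExp n ℓ by unfold angularExp; push_cast; ring]
      have hC : (Polynomial.C (2 : ℂ)) = 2 := rfl
      simp [hC]
      ring
    rw [h2, ← diffOp_expFn_mul, diffOp_add, diffOp_mul, diffOp_mul, diffOp_C, diffOp_X, diffOp_X]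
  rw [negLap, laplacian_logLift hp _ hx, h1, ← mul_assoc, expFn_mul, logLift_of_ne _ _ hx,
    logLift_of_ne _ _ hx, show -2 + a = a - 2 by ring, diffOp_neg]
  simp

theorem negLap_congr_set {f g : Euc n → ℂ} (h : ∀ x ≠ 0, f x = g x)
    {x : Euc n} (hx : x ≠ 0) : negLap f x = negLap g x :=
  (negLap_congr ((eventually_ne_zero hx).mono h)).eq_of_nhds

theorem formalT_logLift {p : MvPolynomial (Fin n) ℂ} {ℓ : ℕ} (hp : IsSolidHarmonic p ℓ) (c : ℝ)
    (f : SmoothFn) {x : Euc n} (hx : x ≠ 0) :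
    formalT n c (logLift p (expFn (2 - angularExp n ℓ) * f : SmoothFn)) x =
      logLift p (expFn (-4 - angularExp n ℓ) * diffOp (radialPoly (angularParam n ℓ) c) f :
        SmoothFn) x := by
  rw [formalT_eq, Pi.add_apply, negLap_congr_set (fun y hy => negLap_congr_set
    (fun z hz => negLap_logLift hp _ f hz) hy) hx, negLap_congr_set
    (fun y hy => negLap_logLift hp _ _ hy) hx, negLap_logLift hp _ _ hx, ← diffOp_mul,
    ← diffOp_mul, logLift_of_ne _ _ hx, logLift_of_ne _ _ hx, logLift_of_ne _ _ hx]
  have h6 : (expFn (-6) : ℝ → ℂ) (Real.log ‖x‖) = (((‖x‖ ^ 6)⁻¹ : ℝ) : ℂ) := by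
    have h := exp_neg_two_log_norm hx
    have e : expFn (-6) = expFn (-2) * expFn (-2) * expFn (-2) := by
      rw [expFn_mul, expFn_mul]; norm_num
    rw [e]
    simp only [MulMemClass.coe_mul, Pi.mul_apply, h]
    rw [← Complex.ofReal_mul, ← Complex.ofReal_mul]
    congr 1
    field_simp
  set E := expFn (2 - angularExp n ℓ) with hE
  have hE2 : expFn (-4 - angularExp n ℓ) = expFn (-6) * E := by
    rw [hE, expFn_mul]; congr 1; ring
  have hE3 : expFn (2 - angularExp n ℓ - 2 - 2 - 2 : ℂ) = expFn (-6) * E := by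
    rw [hE, expFn_mul]; congr 1; ring
  have hP : radialPoly (angularParam n ℓ) c =
      (Polynomial.C ((angularExp n ℓ : ℂ) ^ 2) - (Polynomial.X +
        Polynomial.C (2 - (angularExp n ℓ : ℂ) - 2 - 2 + angularExp n ℓ)) ^ 2) *
      ((Polynomial.C ((angularExp n ℓ : ℂ) ^ 2) - (Polynomial.X +
        Polynomial.C (2 - (angularExp n ℓ : ℂ) - 2 + angularExp n ℓ)) ^ 2) *
      (Polynomial.C ((angularExp n ℓ : ℂ) ^ 2) - (Polynomial.X +
        Polynomial.C (2 - (angularExp n ℓ : ℂ) + angularExp n ℓ)) ^ 2)) + Polynomial.C (c : ℂ) := by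
    have hm : ((angularParam n ℓ : ℝ) : ℂ) = (angularExp n ℓ : ℂ) ^ 2 := by
      unfold angularParam angularExp; push_cast; rfl
    rw [radialPoly, hm,
      show (2 - angularExp n ℓ - 2 - 2 + angularExp n ℓ : ℂ) = -2 by ring,
      show (2 - angularExp n ℓ - 2 + angularExp n ℓ : ℂ) = 0 by ring,
      show (2 - angularExp n ℓ + angularExp n ℓ : ℂ) = 2 by ring]
    have hC : (Polynomial.C (2 : ℂ)) = 2 := rfl
    simp [hC]
    ring
  rw [hP, diffOp_add, diffOp_C, hE2, hE3, ← mul_assoc]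
  simp only [MulMemClass.coe_mul, AddMemClass.coe_add, Pi.mul_apply, Pi.add_apply,
    Subalgebra.coe_smul, Pi.smul_apply, smul_eq_mul, h6, mul_assoc]
  push_cast
  ring

end LogRadialFunctions

section LogPolarCoordinates

open Filter Topology
open scoped ContDiff InnerProductSpace ENNReal

variable {n : ℕ}

/-- The surface measure of the unit sphere in `ℝⁿ`. -/
def sphereMass (n : ℕ) : ℝ≥0∞ := (volume : Measure (Euc n)).toSphere Set.univ

theorem sphereMass_ne_top : sphereMass n ≠ ⊤ := measure_ne_top _ _

theorem sphereMass_ne_zero (hn : n ≠ 0) : sphereMass n ≠ 0 := by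
  have : Nonempty (Fin n) := ⟨⟨0, Nat.pos_of_ne_zero hn⟩⟩
  have : Nontrivial (Euc n) := inferInstance
  rw [sphereMass, Measure.measure_univ_ne_zero]
  exact Measure.toSphere_ne_zero _

theorem measurable_log_norm : Measurable fun x : Euc n => Real.log ‖x‖ :=
  Real.measurable_log.comp measurable_norm

theorem lintegral_log_norm (hn : n ≠ 0) {G : ℝ → ℝ≥0∞} (hG : Measurable G) :
    ∫⁻ x : Euc n, G (Real.log ‖x‖) =
      sphereMass n * ∫⁻ t, ENNReal.ofReal (Real.exp (n * t)) * G t := by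
  have : Nonempty (Fin n) := ⟨⟨0, Nat.pos_of_ne_zero hn⟩⟩
  have : Nontrivial (Euc n) := inferInstance
  have hm : Measurable fun r : Set.Ioi (0 : ℝ) => G (Real.log r) :=
    hG.comp (Real.measurable_log.comp measurable_subtype_coe)
  calc ∫⁻ x : Euc n, G (Real.log ‖x‖)
      = ∫⁻ x : ({(0)}ᶜ : Set (Euc n)), G (Real.log ‖x.1‖)
          ∂((volume : Measure (Euc n)).comap Subtype.val) := by
        rw [lintegral_subtype_comap (measurableSet_singleton _).compl
          fun x : Euc n ↦ G (Real.log ‖x‖), restrict_compl_singleton]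
    _ = ∫⁻ y : Metric.sphere (0 : Euc n) 1 × Set.Ioi (0 : ℝ), G (Real.log y.2)
          ∂((volume : Measure (Euc n)).toSphere.prod
          (Measure.volumeIoiPow (Module.finrank ℝ (Euc n) - 1))) := by
        simpa using (Measure.measurePreserving_homeomorphUnitSphereProd
          (volume : Measure (Euc n))).lintegral_comp (hm.comp measurable_snd)
    _ = sphereMass n * ∫⁻ r : Set.Ioi (0 : ℝ), G (Real.log r) ∂(Measure.volumeIoiPow (n - 1)) := by
        rw [lintegral_prod (fun y : Metric.sphere (0 : Euc n) 1 × Set.Ioi (0 : ℝ) =>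
          G (Real.log y.2)) (hm.comp measurable_snd).aemeasurable]
        dsimp only
        rw [lintegral_const, mul_comm, finrank_euclideanSpace_fin]
        rfl
    _ = sphereMass n * ∫⁻ r in Set.Ioi (0 : ℝ), ENNReal.ofReal (r ^ (n - 1)) *
          G (Real.log r) := by
        rw [Measure.volumeIoiPow, lintegral_withDensity_eq_lintegral_mul _ (by fun_prop) hm]
        congr 1
        exact lintegral_subtype_comap measurableSet_Ioi
          fun r : ℝ => ENNReal.ofReal (r ^ (n - 1)) * G (Real.log r)
    _ = _ := by
        rw [← Real.range_exp, ← Set.image_univ, lintegral_image_eq_lintegral_abs_deriv_mul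
          MeasurableSet.univ (fun t _ => (Real.hasDerivAt_exp t).hasDerivWithinAt)
          Real.exp_injective.injOn]
        rw [setLIntegral_univ]
        congr 2 with t
        rw [Real.log_exp, ← mul_assoc, abs_of_pos (Real.exp_pos t),
          ← ENNReal.ofReal_mul (Real.exp_pos t).le, ← Real.exp_nat_mul, ← Real.exp_add,
          Nat.cast_pred (Nat.pos_of_ne_zero hn)]
        ring_nf

theorem map_log_norm (hn : n ≠ 0) : (volume : Measure (Euc n)).map (fun x => Real.log ‖x‖) =
    sphereMass n • volume.withDensity fun t : ℝ => ENNReal.ofReal (Real.exp (n * t)) := by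
  ext s hs
  rw [Measure.map_apply measurable_log_norm hs, Measure.smul_apply, withDensity_apply _ hs,
    smul_eq_mul, ← lintegral_indicator hs]
  have h := lintegral_log_norm hn (G := s.indicator 1) (measurable_one.indicator hs)
  rw [show (fun x : Euc n => s.indicator (1 : ℝ → ℝ≥0∞) (Real.log ‖x‖)) =
    ((fun x : Euc n => Real.log ‖x‖) ⁻¹' s).indicator 1 from rfl,
    lintegral_indicator_one (measurable_log_norm hs)] at h
  rw [h]
  congr 2 with t
  by_cases ht : t ∈ s <;> simp [ht]

theorem quasiMeasurePreserving_log_norm (hn : n ≠ 0) :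
    Measure.QuasiMeasurePreserving (fun x : Euc n => Real.log ‖x‖) volume volume := by
  refine ⟨measurable_log_norm, ?_⟩
  rw [map_log_norm hn]
  exact (withDensity_absolutelyContinuous _ _).smul_left _

theorem lintegral_log_norm₀ (hn : n ≠ 0) {G : ℝ → ℝ≥0∞} (hG : AEMeasurable G) :
    ∫⁻ x : Euc n, G (Real.log ‖x‖) =
      sphereMass n * ∫⁻ t, ENNReal.ofReal (Real.exp (n * t)) * G t := by
  have h1 : ∫⁻ x : Euc n, G (Real.log ‖x‖) = ∫⁻ x : Euc n, hG.mk G (Real.log ‖x‖) :=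
    lintegral_congr_ae ((quasiMeasurePreserving_log_norm hn).ae_eq_comp hG.ae_eq_mk)
  rw [h1, lintegral_log_norm hn hG.measurable_mk]
  congr 1
  refine lintegral_congr_ae ?_
  filter_upwards [hG.ae_eq_mk] with t ht
  rw [ht]

theorem integral_log_norm (hn : n ≠ 0) {G : ℝ → ℂ} (hG : Continuous G) :
    ∫ x : Euc n, G (Real.log ‖x‖) =
      (sphereMass n).toReal * ∫ t : ℝ, (Real.exp (n * t) : ℂ) * G t := by
  rw [← integral_map (φ := fun x : Euc n => Real.log ‖x‖) measurable_log_norm.aemeasurable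
    hG.aestronglyMeasurable, map_log_norm hn, integral_smul_measure,
    integral_withDensity_eq_integral_toReal_smul (by fun_prop) (by simp)]
  simp [ENNReal.toReal_ofReal (Real.exp_pos _).le]

theorem ae_ne_zero (hn : n ≠ 0) : ∀ᵐ x : Euc n, x ≠ 0 := by
  have : Nonempty (Fin n) := ⟨⟨0, Nat.pos_of_ne_zero hn⟩⟩
  have : Nontrivial (Euc n) := inferInstance
  exact compl_mem_ae_iff.2 (measure_singleton _)

end LogPolarCoordinates

section RadialLift

open Filter Topology
open scoped ContDiff InnerProductSpace ENNReal

variable {n ℓ : ℕ} {p : MvPolynomial (Fin n) ℂ}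

theorem exists_norm_polyFn_le (hp : p.IsHomogeneous ℓ) :
    ∃ K : ℝ, 0 ≤ K ∧ ∀ x, ‖polyFn p x‖ ≤ K * ‖x‖ ^ ℓ := by
  refine ⟨∑ d ∈ p.support, ‖p.coeff d‖, by positivity, fun x => ?_⟩
  rw [polyFn, MvPolynomial.eval_eq, Finset.sum_mul]
  refine (norm_sum_le _ _).trans (Finset.sum_le_sum fun d hd => ?_)
  have hdeg : d.degree = ℓ := by
    by_contra h
    exact (MvPolynomial.mem_support_iff.1 hd) (hp.coeff_eq_zero h)
  rw [norm_mul, norm_prod]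
  refine mul_le_mul_of_nonneg_left ?_ (norm_nonneg _)
  rw [← hdeg, Finsupp.degree_apply, ← Finset.prod_pow_eq_pow_sum]
  refine Finset.prod_le_prod (fun _ _ => norm_nonneg _) fun i _ => ?_
  rw [norm_pow, Complex.norm_real]
  exact pow_le_pow_left₀ (norm_nonneg _) (PiLp.norm_apply_le x i) _

/-- The function `p(x) |x|^(-ℓ - n/2) f(log |x|)` on `ℝⁿ`. -/
def radialFn (p : MvPolynomial (Fin n) ℂ) (ℓ : ℕ) (f : ℝ → ℂ) : Euc n → ℂ :=
  logLift p fun t => (expFn (-(angularExp n ℓ + 1)) : ℝ → ℂ) t * f t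

theorem norm_expFn_log {a : ℝ} (t : ℝ) : ‖(expFn (a : ℂ) : ℝ → ℂ) t‖ = Real.exp (a * t) := by
  rw [norm_expFn]; simp

theorem exists_norm_radialFn_le (hp : p.IsHomogeneous ℓ) : ∃ K : ℝ, 0 ≤ K ∧ ∀ (f : ℝ → ℂ) (x),
    x ≠ 0 → ‖radialFn p ℓ f x‖ ^ 2 ≤
      K ^ 2 * (Real.exp (-n * Real.log ‖x‖) * ‖f (Real.log ‖x‖)‖ ^ 2) := by
  obtain ⟨K, hK, h⟩ := exists_norm_polyFn_le hp
  refine ⟨K, hK, fun f x hx => ?_⟩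
  have hpos := norm_pos_iff.2 hx
  have e : (-(angularExp n ℓ + 1) : ℂ) = ((-(angularExp n ℓ + 1) : ℝ) : ℂ) := by push_cast; rfl
  have e2 : Real.exp (-n * Real.log ‖x‖) =
      (‖x‖ ^ ℓ * Real.exp (-(angularExp n ℓ + 1) * Real.log ‖x‖)) ^ 2 := by
    rw [← Real.exp_log (pow_pos hpos ℓ), ← Real.exp_add, ← Real.exp_nat_mul, Real.log_pow]
    congr 1
    unfold angularExp
    push_cast
    ring
  rw [radialFn, logLift_of_ne _ _ hx, norm_mul, norm_mul, e, norm_expFn_log, e2, ← mul_pow,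
    ← mul_pow]
  refine pow_le_pow_left₀ (by positivity) ?_ 2
  calc _ ≤ (K * ‖x‖ ^ ℓ) * (Real.exp (-(angularExp n ℓ + 1) * Real.log ‖x‖) *
        ‖f (Real.log ‖x‖)‖) := mul_le_mul_of_nonneg_right (h x) (by positivity)
    _ = _ := by ring

theorem radialFn_add (f g : ℝ → ℂ) :
    radialFn p ℓ (f + g) = radialFn p ℓ f + radialFn p ℓ g := by
  ext x
  by_cases hx : x = 0
  · simp [hx, radialFn, logLift]
  · simp [radialFn, logLift_of_ne _ _ hx]; ring

theorem radialFn_smul (a : ℂ) (f : ℝ → ℂ) :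
    radialFn p ℓ (a • f) = a • radialFn p ℓ f := by
  ext x
  by_cases hx : x = 0
  · simp [hx, radialFn, logLift]
  · simp [radialFn, logLift_of_ne _ _ hx]; ring

theorem radialFn_congr_ae (hn : n ≠ 0) {f g : ℝ → ℂ} (h : f =ᵐ[volume] g) :
    radialFn p ℓ f =ᵐ[volume] radialFn p ℓ g := by
  filter_upwards [(quasiMeasurePreserving_log_norm hn).ae h] with x hx
  by_cases hx0 : x = 0
  · simp [hx0, radialFn, logLift]
  · simp only [radialFn, logLift_of_ne _ _ hx0, hx]

theorem aestronglyMeasurable_radialFn (hn : n ≠ 0) {f : ℝ → ℂ} (hf : AEStronglyMeasurable f) :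
    AEStronglyMeasurable (radialFn p ℓ f) := by
  have h : AEStronglyMeasurable fun x : Euc n => polyFn p x *
      ((expFn (-(angularExp n ℓ + 1)) : ℝ → ℂ) (Real.log ‖x‖) * f (Real.log ‖x‖)) :=
    (contDiff_polyFn p).continuous.aestronglyMeasurable.mul
      (((expFn _).continuous.measurable.comp measurable_log_norm).aestronglyMeasurable.mul
        (hf.comp_quasiMeasurePreserving (quasiMeasurePreserving_log_norm hn)))
  refine h.congr ?_
  filter_upwards [ae_ne_zero hn] with x hx
  rw [radialFn, logLift_of_ne _ _ hx]

theorem lintegral_radialFn_le (hn : n ≠ 0) (hp : p.IsHomogeneous ℓ) : ∃ K : ℝ, 0 ≤ K ∧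
    ∀ f : ℝ → ℂ, AEStronglyMeasurable f → ∫⁻ x, ‖radialFn p ℓ f x‖ₑ ^ 2 ≤
      ENNReal.ofReal (K ^ 2) * ∫⁻ t, ‖f t‖ₑ ^ 2 := by
  obtain ⟨K, hK, h⟩ := exists_norm_radialFn_le hp
  refine ⟨K * Real.sqrt (sphereMass n).toReal, by positivity, fun f hf => ?_⟩
  have e : ∀ z : ℂ, ‖z‖ₑ ^ 2 = ENNReal.ofReal (‖z‖ ^ 2) := fun z => by
    rw [ENNReal.ofReal_pow (norm_nonneg _), ofReal_norm]
  calc ∫⁻ x, ‖radialFn p ℓ f x‖ₑ ^ 2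
      ≤ ∫⁻ x : Euc n, ENNReal.ofReal (K ^ 2) * (fun t : ℝ =>
          ENNReal.ofReal (Real.exp (-n * t)) * ‖f t‖ₑ ^ 2) (Real.log ‖x‖) := by
        refine lintegral_mono_ae ?_
        filter_upwards [ae_ne_zero hn] with x hx
        rw [e, e, ← ENNReal.ofReal_mul (by positivity), ← ENNReal.ofReal_mul (by positivity)]
        exact ENNReal.ofReal_le_ofReal (h f x hx)
    _ = ENNReal.ofReal (K ^ 2) * (sphereMass n * ∫⁻ t, ‖f t‖ₑ ^ 2) := by
        rw [lintegral_const_mul' _ _ ENNReal.ofReal_ne_top, lintegral_log_norm₀ hn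
          (G := fun t => ENNReal.ofReal (Real.exp (-n * t)) * ‖f t‖ₑ ^ 2)
          (AEMeasurable.mul (by fun_prop) (hf.enorm.pow_const 2))]
        congr 3 with t
        rw [← mul_assoc, ← ENNReal.ofReal_mul (by positivity), ← Real.exp_add]
        simp
    _ = _ := by
        rw [mul_pow, Real.sq_sqrt ENNReal.toReal_nonneg, ENNReal.ofReal_mul (by positivity),
          ENNReal.ofReal_toReal sphereMass_ne_top, mul_assoc]

theorem eLpNorm_two_sq {α : Type*} [MeasurableSpace α] {μ : Measure α} (f : α → ℂ) :
    eLpNorm f 2 μ ^ 2 = ∫⁻ x, ‖f x‖ₑ ^ 2 ∂μ := by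
  have h := eLpNorm_nnreal_pow_eq_lintegral (f := f) (μ := μ) (p := 2) (by norm_num)
  simpa using h

theorem eLpNorm_radialFn_le (hn : n ≠ 0) (hp : p.IsHomogeneous ℓ) : ∃ K : ℝ, 0 ≤ K ∧
    ∀ f : ℝ → ℂ, AEStronglyMeasurable f →
      eLpNorm (radialFn p ℓ f) 2 volume ≤ ENNReal.ofReal K * eLpNorm f 2 volume := by
  obtain ⟨K, hK, h⟩ := lintegral_radialFn_le hn hp
  refine ⟨K, hK, fun f hf => ?_⟩
  rw [← ENNReal.pow_le_pow_left_iff two_ne_zero, mul_pow, eLpNorm_two_sq, eLpNorm_two_sq,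
    ← ENNReal.ofReal_pow hK]
  exact h f hf

theorem memLp_radialFn (hn : n ≠ 0) (hp : p.IsHomogeneous ℓ) {f : ℝ → ℂ} (hf : MemLp f 2) :
    MemLp (radialFn p ℓ f) 2 := by
  obtain ⟨K, hK, h⟩ := eLpNorm_radialFn_le hn hp
  exact ⟨aestronglyMeasurable_radialFn hn hf.1,
    (h f hf.1).trans_lt (ENNReal.mul_lt_top ENNReal.ofReal_lt_top hf.2)⟩

/-- The bounded operator `L²(ℝ) → L²(ℝⁿ)` induced by `radialFn`. -/
def radialLift (hn : n ≠ 0) (hp : p.IsHomogeneous ℓ) :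
    Lp ℂ 2 (volume : Measure ℝ) →L[ℂ] L2Euc n :=
  LinearMap.mkContinuousOfExistsBound
    { toFun := fun f => (memLp_radialFn hn hp (Lp.memLp f)).toLp
      map_add' := fun f g => by
        rw [← MemLp.toLp_add, MemLp.toLp_eq_toLp_iff, ← radialFn_add]
        exact radialFn_congr_ae hn (Lp.coeFn_add f g)
      map_smul' := fun a f => by
        rw [RingHom.id_apply, ← MemLp.toLp_const_smul, MemLp.toLp_eq_toLp_iff, ← radialFn_smul]
        exact radialFn_congr_ae hn (Lp.coeFn_smul a f) }
    (by
      obtain ⟨K, hK, h⟩ := eLpNorm_radialFn_le hn hp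
      refine ⟨K, fun f => ?_⟩
      change ‖(memLp_radialFn hn hp (Lp.memLp f)).toLp‖ ≤ _
      rw [Lp.norm_toLp, Lp.norm_def, ← ENNReal.toReal_ofReal hK, ← ENNReal.toReal_mul]
      exact ENNReal.toReal_mono (ENNReal.mul_ne_top ENNReal.ofReal_ne_top (Lp.eLpNorm_ne_top f))
        (h f (Lp.aestronglyMeasurable f)))

theorem radialLift_toLp (hn : n ≠ 0) (hp : p.IsHomogeneous ℓ) {f : ℝ → ℂ} (hf : MemLp f 2) :
    radialLift hn hp hf.toLp = (memLp_radialFn hn hp hf).toLp :=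
  (MemLp.toLp_eq_toLp_iff (memLp_radialFn hn hp (Lp.memLp _)) (memLp_radialFn hn hp hf)).2
    (radialFn_congr_ae hn hf.coeFn_toLp)

theorem radialFn_mem (p : MvPolynomial (Fin n) ℂ) (ℓ : ℕ) (f : SmoothFn)
    (hf : HasCompactSupport (f : ℝ → ℂ)) : radialFn p ℓ f ∈ testFunctions n :=
  logLift_mem p (G := expFn (-(angularExp n ℓ + 1)) * f) hf.mul_left

theorem memLp_of_hasCompactSupport {f : SmoothFn} (hf : HasCompactSupport (f : ℝ → ℂ)) :
    MemLp (f : ℝ → ℂ) 2 := f.continuous.memLp_of_hasCompactSupport hf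

theorem radialLift_eq_testLp (hn : n ≠ 0) (hp : p.IsHomogeneous ℓ) {f : SmoothFn}
    (hf : HasCompactSupport (f : ℝ → ℂ)) :
    radialLift hn hp (memLp_of_hasCompactSupport hf).toLp = testLp ⟨_, radialFn_mem p ℓ f hf⟩ := by
  rw [radialLift_toLp]
  exact eq_testLp (MemLp.coeFn_toLp _)

theorem radialFn_mul_expFn (a : ℂ) (f : SmoothFn) : radialFn p ℓ (expFn a * f : SmoothFn) =
    logLift p (expFn (a - 1 - angularExp n ℓ) * f : SmoothFn) := by
  rw [radialFn]
  congr 1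
  ext t
  change (expFn _ * (expFn a * f) : SmoothFn).1 t = _
  rw [← mul_assoc, expFn_mul, show (-(angularExp n ℓ + 1) + a : ℂ) = a - 1 - angularExp n ℓ by ring]

theorem formalT_radialFn (hp : IsSolidHarmonic p ℓ) (c : ℝ) (f : SmoothFn) {x : Euc n}
    (hx : x ≠ 0) : formalT n c (radialFn p ℓ (expFn 3 * f : SmoothFn)) x =
      radialFn p ℓ (expFn (-3) * diffOp (radialPoly (angularParam n ℓ) c) f : SmoothFn) x := by
  rw [radialFn_mul_expFn, radialFn_mul_expFn, show (3 - 1 - angularExp n ℓ : ℂ) =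
    2 - angularExp n ℓ by ring, formalT_logLift hp c f hx]
  congr 4
  ring

theorem testLp_testT_radialFn (hn : n ≠ 0) (hp : IsSolidHarmonic p ℓ) (c : ℝ) {f : SmoothFn}
    (hf : HasCompactSupport (f : ℝ → ℂ)) :
    testLp (testT c ⟨_, radialFn_mem p ℓ (expFn 3 * f) hf.mul_left⟩) =
      testLp ⟨_, radialFn_mem p ℓ
        (expFn (-3) * diffOp (radialPoly (angularParam n ℓ) c) f)
        (diffOp_hasCompactSupport _ hf).mul_left⟩ := by
  refine eq_testLp ((testLp_coe _).trans ?_)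
  filter_upwards [ae_ne_zero hn] with x hx
  exact formalT_radialFn hp c f hx

end RadialLift

section DeficiencyVectors

open scoped ContDiff InnerProductSpace ENNReal

variable {n ℓ : ℕ} {p : MvPolynomial (Fin n) ℂ} {c : ℝ} {u : L2Euc n} {ν : ℂ}

theorem inner_radialFn (hn : n ≠ 0) (hp : p.IsHomogeneous ℓ) (u : L2Euc n) {f : SmoothFn}
    (hf : HasCompactSupport (f : ℝ → ℂ)) :
    ⟪u, testLp ⟨_, radialFn_mem p ℓ f hf⟩⟫_ℂ =
      ∫ t, star ((radialLift hn hp).adjoint u t) * (f : ℝ → ℂ) t := by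
  rw [← radialLift_eq_testLp hn hp hf, ← ContinuousLinearMap.adjoint_inner_left, L2.inner_def]
  refine integral_congr_ae ?_
  filter_upwards [(memLp_of_hasCompactSupport hf).coeFn_toLp] with t ht
  rw [ht, RCLike.inner_apply, mul_comm]
  rfl

theorem weakSolution_of_orthogonal (hn : n ≠ 0) (hp : IsSolidHarmonic p ℓ)
    (h : ∀ f : testFunctions n, ⟪u, testLp (testT c f)⟫_ℂ = ν * ⟪u, testLp f⟫_ℂ) :
    WeakSolution (radialPoly (angularParam n ℓ) c) ν
      fun t => star ((radialLift hn hp.isHomogeneous).adjoint u t) := by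
  intro φ hφ
  have h1 := h ⟨_, radialFn_mem p ℓ (expFn 3 * φ) hφ.mul_left⟩
  rw [testLp_testT_radialFn hn hp c hφ] at h1
  have h2 := inner_radialFn hn hp.isHomogeneous u
    (f := expFn (-3) * diffOp (radialPoly (angularParam n ℓ) c) φ)
    (diffOp_hasCompactSupport _ hφ).mul_left
  have h3 := inner_radialFn hn hp.isHomogeneous u (f := expFn 3 * φ) hφ.mul_left
  simp only [MulMemClass.coe_mul, Pi.mul_apply] at h2 h3
  rw [← h2, ← h3]
  exact h1

theorem inner_radialFn_eq_zero (hn : 2 ≤ n) (hc : CouplingBound n c) (hν : star ν = -ν)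
    (hν0 : ν ≠ 0)
    (h : ∀ f : testFunctions n, ⟪u, testLp (testT c f)⟫_ℂ = ν * ⟪u, testLp f⟫_ℂ)
    (hp : IsSolidHarmonic p ℓ) {f : SmoothFn} (hf : HasCompactSupport (f : ℝ → ℂ)) :
    ⟪u, testLp ⟨_, radialFn_mem p ℓ f hf⟩⟫_ℂ = 0 := by
  have hn0 : n ≠ 0 := by omega
  have hw := WeakSolution.ae_eq_zero (radialPoly_ne_zero _ _) (radialPoly_comp_neg _ _)
    (radialPoly_map_star _ _) (fun z hz => hc.three_le hn ℓ hz) hν hν0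
    (MemLp.star (Lp.memLp _)) (weakSolution_of_orthogonal hn0 hp h)
  rw [inner_radialFn hn0 hp.isHomogeneous u hf, integral_eq_zero_of_ae]
  filter_upwards [hw] with t ht
  change star ((radialLift hn0 hp.isHomogeneous).adjoint u t) = 0 at ht
  rw [ht, zero_mul]
  rfl

end DeficiencyVectors

section HarmonicDecomposition

open MvPolynomial

variable {n : ℕ}

/-- The Laplacian of a polynomial. -/
def polyLaplacian : MvPolynomial (Fin n) ℂ →ₗ[ℂ] MvPolynomial (Fin n) ℂ :=
  ∑ i, (pderiv i : Derivation ℂ (MvPolynomial (Fin n) ℂ) _).toLinearMap ∘ₗ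
    (pderiv i : Derivation ℂ (MvPolynomial (Fin n) ℂ) _).toLinearMap

theorem polyLaplacian_apply (p : MvPolynomial (Fin n) ℂ) :
    polyLaplacian p = ∑ i, pderiv i (pderiv i p) := by
  simp [polyLaplacian]

/-- The squared radius as a polynomial. -/
def radiusSq (n : ℕ) : MvPolynomial (Fin n) ℂ := ∑ i, X i ^ 2

theorem radiusSq_isHomogeneous : (radiusSq n).IsHomogeneous 2 :=
  IsHomogeneous.sum _ _ _ fun i _ => by simpa using (isHomogeneous_X ℂ i).pow 2

theorem pderiv_radiusSq (i : Fin n) : pderiv i (radiusSq n) = 2 * X i := by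
  have h : ∀ j, pderiv i (X j ^ 2 : MvPolynomial (Fin n) ℂ) = if j = i then 2 * X i else 0 := by
    intro j
    rw [pderiv_pow]
    split_ifs with hj
    · subst hj; simp
    · simp [pderiv_X_of_ne hj]
  rw [radiusSq, map_sum, Finset.sum_congr rfl fun j _ => h j]
  simp

theorem polyLaplacian_radiusSq_pow_mul (m : ℕ) {h : MvPolynomial (Fin n) ℂ} {ℓ : ℕ}
    (hh : IsSolidHarmonic h ℓ) : polyLaplacian (radiusSq n ^ (m + 1) * h) =
      (2 * (m + 1) * (2 * m + n + 2 * ℓ) : ℂ) • (radiusSq n ^ m * h) := by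
  have hC : (C (2 : ℂ) : MvPolynomial (Fin n) ℂ) = 2 := rfl
  have key : ∀ i, pderiv i (pderiv i (radiusSq n ^ (m + 1) * h)) =
      (2 * (m + 1) : MvPolynomial (Fin n) ℂ) * ((X i * pderiv i (radiusSq n ^ m)) * h +
        radiusSq n ^ m * h +
        2 * radiusSq n ^ m * (X i * pderiv i h)) +
        radiusSq n ^ (m + 1) * pderiv i (pderiv i h) := by
    intro i
    have h1 : pderiv i (radiusSq n ^ (m + 1)) =
        (2 * (m + 1) : MvPolynomial (Fin n) ℂ) * (radiusSq n ^ m * X i) := by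
      rw [pderiv_pow, pderiv_radiusSq]; push_cast; ring
    have h2 : pderiv i (2 * (m + 1) : MvPolynomial (Fin n) ℂ) = 0 := by
      have : (2 * (m + 1) : MvPolynomial (Fin n) ℂ) = C (2 * (m + 1) : ℂ) := by simp [hC]
      rw [this, pderiv_C]
    simp only [pderiv_mul, map_add, h1, h2, pderiv_X_self]
    ring
  have e1 := (radiusSq_isHomogeneous (n := n).pow m).sum_X_mul_pderiv
  have e2 := hh.isHomogeneous.sum_X_mul_pderiv
  rw [polyLaplacian_apply, Finset.sum_congr rfl fun i _ => key i, Finset.sum_add_distrib,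
    ← Finset.mul_sum, ← Finset.mul_sum, Finset.sum_add_distrib, Finset.sum_add_distrib,
    ← Finset.sum_mul, ← Finset.mul_sum, ← Finset.mul_sum, e1, e2, hh.sum_pderiv, smul_eq_C_mul]
  simp [hC]
  ring

/-- The span of the products of powers of the squared radius with solid harmonics, in degree `d`. -/
def harmonicSpan (n d : ℕ) : Submodule ℂ (MvPolynomial (Fin n) ℂ) :=
  Submodule.span ℂ {q | ∃ (j ℓ : ℕ) (h : MvPolynomial (Fin n) ℂ), IsSolidHarmonic h ℓ ∧
    2 * j + ℓ = d ∧ q = radiusSq n ^ j * h}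

theorem isHomogeneous_of_mem_harmonicSpan {d : ℕ} {q : MvPolynomial (Fin n) ℂ}
    (hq : q ∈ harmonicSpan n d) : q.IsHomogeneous d := by
  refine (Submodule.span_le (p := homogeneousSubmodule (Fin n) ℂ d)).2 ?_ hq
  rintro q ⟨j, ℓ, h, hh, rfl, rfl⟩
  exact (radiusSq_isHomogeneous.pow j).mul hh.isHomogeneous

theorem exists_polyLaplacian_eq (hn : n ≠ 0) {d : ℕ} {q : MvPolynomial (Fin n) ℂ}
    (hq : q ∈ harmonicSpan n d) : ∃ q' ∈ harmonicSpan n (d + 2), polyLaplacian q' = q := by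
  refine Submodule.span_induction ?_ ?_ ?_ ?_ hq
  · rintro q ⟨j, ℓ, h, hh, rfl, rfl⟩
    have h0 : (2 * (j + 1) * (2 * j + n + 2 * ℓ) : ℂ) ≠ 0 := by
      have : 2 * (j + 1) * (2 * j + n + 2 * ℓ) ≠ 0 := by positivity
      exact_mod_cast this
    refine ⟨(2 * (j + 1) * (2 * j + n + 2 * ℓ) : ℂ)⁻¹ • (radiusSq n ^ (j + 1) * h),
      Submodule.smul_mem _ _ (Submodule.subset_span ⟨j + 1, ℓ, h, hh, by ring, rfl⟩), ?_⟩
    rw [map_smul, polyLaplacian_radiusSq_pow_mul j hh, smul_smul, inv_mul_cancel₀ h0, one_smul]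
  · exact ⟨0, zero_mem _, map_zero _⟩
  · rintro a b _ _ ⟨a', ha, ha'⟩ ⟨b', hb, hb'⟩
    exact ⟨a' + b', add_mem ha hb, by rw [map_add, ha', hb']⟩
  · rintro t a _ ⟨a', ha, ha'⟩
    exact ⟨t • a', Submodule.smul_mem _ _ ha, by rw [map_smul, ha']⟩

theorem pderiv_of_isHomogeneous_zero {p : MvPolynomial (Fin n) ℂ} (hp : p.IsHomogeneous 0)
    (i : Fin n) : pderiv i p = 0 := by
  rw [totalDegree_eq_zero_iff_eq_C.1 (Nat.le_zero.1 hp.totalDegree_le), pderiv_C]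

theorem isSolidHarmonic_of_mem {p : MvPolynomial (Fin n) ℂ} {d : ℕ} (hp : p.IsHomogeneous d)
    (h : polyLaplacian p = 0) : p ∈ harmonicSpan n d :=
  Submodule.subset_span ⟨0, d, p, ⟨hp, by rw [← polyLaplacian_apply, h]⟩, by ring, by simp⟩

theorem mem_harmonicSpan (hn : n ≠ 0) {d : ℕ} : ∀ {p : MvPolynomial (Fin n) ℂ},
    p.IsHomogeneous d → p ∈ harmonicSpan n d := by
  induction d using Nat.strong_induction_on with
  | _ d ih =>
    intro p hp
    match d, hp, ih with
    | 0, hp, _ =>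
      refine isSolidHarmonic_of_mem hp ?_
      simp [polyLaplacian_apply, pderiv_of_isHomogeneous_zero hp]
    | 1, hp, _ =>
      refine isSolidHarmonic_of_mem hp ?_
      rw [polyLaplacian_apply]
      exact Finset.sum_eq_zero fun i _ => pderiv_of_isHomogeneous_zero hp.pderiv i
    | d + 2, hp, ih =>
      have h1 : (polyLaplacian p).IsHomogeneous d := by
        rw [polyLaplacian_apply]
        exact IsHomogeneous.sum _ _ _ fun i _ => (hp.pderiv (i := i)).pderiv
      obtain ⟨q, hq, hqp⟩ := exists_polyLaplacian_eq hn (ih d (by omega) h1)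
      have h2 := isSolidHarmonic_of_mem (hp.sub (isHomogeneous_of_mem_harmonicSpan hq))
        (by rw [map_sub, hqp, sub_self])
      have := add_mem h2 hq
      rwa [sub_add_cancel] at this

end HarmonicDecomposition

section Cutoff

open scoped ContDiff

theorem exists_cutoff (M : ℝ) : ∃ χ : SmoothFn, HasCompactSupport (χ : ℝ → ℂ) ∧
    (∀ t, |t| ≤ M → (χ : ℝ → ℂ) t = 1) ∧ ∀ t, |M| + 2 ≤ |t| → (χ : ℝ → ℂ) t = 0 := by
  have hM : 0 < |M| + 1 := by positivity
  let b : ContDiffBump (0 : ℝ) := ⟨|M| + 1, |M| + 2, hM, by linarith⟩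
  refine ⟨⟨fun t => (b t : ℂ), Complex.ofRealCLM.contDiff.comp b.contDiff⟩,
    b.hasCompactSupport.comp_left Complex.ofReal_zero, fun t ht => ?_, fun t ht => ?_⟩
  · have h : b t = 1 := b.one_of_mem_closedBall (by
      rw [mem_closedBall_zero_iff, Real.norm_eq_abs]
      change |t| ≤ |M| + 1
      linarith [le_abs_self M])
    simp [h]
  · have h : b t = 0 := b.zero_of_le_dist (by simpa [Real.dist_eq] using ht)
    simp [h]

variable {n : ℕ}

theorem exists_abs_log_norm_le {K : Set (Euc n)} (hK : IsCompact K) (h0 : (0 : Euc n) ∉ K) :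
    ∃ M, ∀ x ∈ K, |Real.log ‖x‖| ≤ M :=
  hK.exists_bound_of_continuousOn fun _ hx =>
    (contDiffAt_log_norm (ne_of_mem_of_not_mem hx h0)).continuousAt.continuousWithinAt

end Cutoff

section Completeness

open MvPolynomial
open scoped ContDiff InnerProductSpace

variable {n : ℕ} {u : L2Euc n}

theorem inner_logLift_solidHarmonic (hu : ∀ (ℓ : ℕ) (p : MvPolynomial (Fin n) ℂ),
      IsSolidHarmonic p ℓ → ∀ (f : SmoothFn) (hf : HasCompactSupport (f : ℝ → ℂ)),
      ⟪u, testLp ⟨_, radialFn_mem p ℓ f hf⟩⟫_ℂ = 0) {ℓ : ℕ} {p : MvPolynomial (Fin n) ℂ}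
    (hp : IsSolidHarmonic p ℓ) {G : SmoothFn} (hG : HasCompactSupport (G : ℝ → ℂ)) :
    ⟪u, testLp ⟨_, logLift_mem p hG⟩⟫_ℂ = 0 := by
  have h := hu ℓ p hp (expFn (angularExp n ℓ + 1) * G) hG.mul_left
  convert h using 5
  rw [radialFn_mul_expFn, show (angularExp n ℓ + 1 - 1 - angularExp n ℓ : ℂ) = 0 by ring,
    expFn_zero, one_mul]

theorem polyFn_radiusSq (x : Euc n) : polyFn (radiusSq n) x = ((‖x‖ ^ 2 : ℝ) : ℂ) := by
  rw [EuclideanSpace.real_norm_sq_eq]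
  simp [polyFn, radiusSq]

theorem logLift_radiusSq_pow_mul (j : ℕ) (p : MvPolynomial (Fin n) ℂ) (G : SmoothFn) :
    logLift (radiusSq n ^ j * p) G = logLift p (expFn (2 * j) * G : SmoothFn) := by
  ext x
  by_cases hx : x = 0
  · simp [hx, logLift]
  have h : polyFn (radiusSq n ^ j) x = (expFn (2 * j) : ℝ → ℂ) (Real.log ‖x‖) := by
    have h1 : polyFn (radiusSq n ^ j) x = polyFn (radiusSq n) x ^ j := by simp [polyFn]
    have h2 : (2 * j : ℂ) * (Real.log ‖x‖ : ℂ) = ((j * Real.log (‖x‖ ^ 2) : ℝ) : ℂ) := by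
      rw [Real.log_pow]; push_cast; ring
    rw [h1, polyFn_radiusSq, expFn_apply, h2, ← Complex.ofReal_exp, Real.exp_nat_mul,
      Real.exp_log (by positivity)]
    norm_cast
  rw [logLift_of_ne _ _ hx, logLift_of_ne _ _ hx, polyFn_mul]
  simp only [h, MulMemClass.coe_mul, Pi.mul_apply]
  ring

/-- The lift as a linear function of the polynomial. -/
def logLiftLin {G : SmoothFn} (hG : HasCompactSupport (G : ℝ → ℂ)) :
    MvPolynomial (Fin n) ℂ →ₗ[ℂ] testFunctions n where
  toFun p := ⟨_, logLift_mem p hG⟩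
  map_add' p q := Subtype.ext <| by
    ext x
    by_cases hx : x = 0 <;> simp [hx, logLift, polyFn, add_mul]
  map_smul' a p := Subtype.ext <| by
    ext x
    by_cases hx : x = 0 <;> simp [hx, logLift, polyFn, mul_assoc]

theorem inner_logLift_eq_zero (hn : n ≠ 0) (hu : ∀ (ℓ : ℕ) (p : MvPolynomial (Fin n) ℂ),
      IsSolidHarmonic p ℓ → ∀ (f : SmoothFn) (hf : HasCompactSupport (f : ℝ → ℂ)),
      ⟪u, testLp ⟨_, radialFn_mem p ℓ f hf⟩⟫_ℂ = 0) {G : SmoothFn}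
    (hG : HasCompactSupport (G : ℝ → ℂ)) (p : MvPolynomial (Fin n) ℂ) :
    ⟪u, testLp (logLiftLin hG p)⟫_ℂ = 0 := by
  let N : Submodule ℂ (MvPolynomial (Fin n) ℂ) :=
    LinearMap.ker ((innerSL ℂ u).toLinearMap ∘ₗ testLp ∘ₗ logLiftLin hG)
  have h1 : ∀ d, harmonicSpan n d ≤ N := by
    intro d
    refine Submodule.span_le.2 ?_
    rintro q ⟨j, ℓ, h, hh, rfl, rfl⟩
    change ⟪u, testLp (logLiftLin hG _)⟫_ℂ = 0
    have := inner_logLift_solidHarmonic hu hh (G := expFn (2 * j) * G) hG.mul_left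
    convert this using 3
    exact Subtype.ext (logLift_radiusSq_pow_mul j h G)
  change p ∈ N
  rw [← MvPolynomial.sum_homogeneousComponent p]
  exact Submodule.sum_mem _ fun d _ =>
    h1 d (mem_harmonicSpan hn (homogeneousComponent_isHomogeneous d p))

theorem exists_polynomial_approx {g : Euc n → ℝ} (hg : Continuous g) (R : ℝ) {ε : ℝ}
    (hε : 0 < ε) : ∃ p : MvPolynomial (Fin n) ℂ, ∀ x, ‖x‖ ≤ R → ‖(g x : ℂ) - polyFn p x‖ ≤ ε := by
  have : CompactSpace (Metric.closedBall (0 : Euc n) R) :=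
    isCompact_iff_compactSpace.1 (isCompact_closedBall _ _)
  let coord : Fin n → C(Metric.closedBall (0 : Euc n) R, ℝ) :=
    fun i => ⟨fun x => x.1 i, by fun_prop⟩
  let A := (MvPolynomial.aeval coord : MvPolynomial (Fin n) ℝ →ₐ[ℝ] _).range
  have hA : A.SeparatesPoints := by
    intro x y hxy
    obtain ⟨i, hi⟩ : ∃ i, x.1 i ≠ y.1 i := by
      by_contra! h
      exact hxy (Subtype.ext (PiLp.ext h))
    exact ⟨_, ⟨coord i, ⟨X i, by simp⟩, rfl⟩, hi⟩
  obtain ⟨⟨_, q, rfl⟩, hq⟩ :=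
    ContinuousMap.exists_mem_subalgebra_near_continuousMap_of_separatesPoints
    A hA ⟨fun x => g x.1, by fun_prop⟩ ε hε
  refine ⟨MvPolynomial.map Complex.ofRealHom q, fun x hx => ?_⟩
  let y : Metric.closedBall (0 : Euc n) R := ⟨x, by simpa using hx⟩
  have h1 := (ContinuousMap.norm_coe_le_norm _ y).trans hq.le
  have h2 : (MvPolynomial.aeval coord q) y = MvPolynomial.eval (fun i => x i) q := by
    clear hq h1
    induction q using MvPolynomial.induction_on with
    | C a => simp
    | add p q hp hq => simp_all
    | mul_X p i hp => simp_all [coord, y]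
  have h3 : polyFn (MvPolynomial.map Complex.ofRealHom q) x =
      ((MvPolynomial.eval (fun i => x i) q : ℝ) : ℂ) := by
    rw [polyFn, MvPolynomial.eval_map]
    exact (MvPolynomial.eval₂_comp _ _ _).symm
  rw [h3, ← Complex.ofReal_sub, Complex.norm_real, norm_sub_rev, ← h2]
  exact h1

theorem eq_zero_of_inner_radialFn (hn : n ≠ 0) (hu : ∀ (ℓ : ℕ) (p : MvPolynomial (Fin n) ℂ),
      IsSolidHarmonic p ℓ → ∀ (f : SmoothFn) (hf : HasCompactSupport (f : ℝ → ℂ)),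
      ⟪u, testLp ⟨_, radialFn_mem p ℓ f hf⟩⟫_ℂ = 0) : u = 0 := by
  have hloc : LocallyIntegrable (fun x => star (u x)) :=
    (MemLp.star (Lp.memLp u)).locallyIntegrable (by norm_num)
  have hint : ∀ f : testFunctions n, Integrable fun x => star (u x) * (f : Euc n → ℂ) x :=
    fun f => (MemLp.star (Lp.memLp u)).integrable_mul (memLp_testFunctions f.2)
  have h := isOpen_compl_singleton.ae_eq_zero_of_integral_contDiff_smul_eq_zero
    (U := ({0}ᶜ : Set (Euc n))) (hloc.locallyIntegrableOn _) fun g hg hgc hgU => by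
    obtain ⟨M, hM⟩ := exists_abs_log_norm_le hgc (fun h => hgU h rfl)
    obtain ⟨χ, hχ, hχ1, hχ0⟩ := exists_cutoff M
    set K := ∫ x, ‖star (u x) * logLift 1 χ x‖ with hK
    have hg' : (fun x => (g x : ℂ)) ∈ testFunctions n := by
      refine ⟨Complex.ofRealCLM.contDiff.comp hg, hgc.comp_left Complex.ofReal_zero, fun h => ?_⟩
      exact hgU (tsupport_comp_subset Complex.ofReal_zero g h) rfl
    have key : ∀ ε > 0, ‖∫ x, star (u x) * (g x : ℂ)‖ ≤ ε * K := by
      intro ε hε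
      obtain ⟨p, hp⟩ := exists_polynomial_approx hg.continuous (Real.exp (|M| + 2)) hε
      have h0 := inner_logLift_eq_zero hn hu hχ p
      rw [inner_testLp_right] at h0
      rw [← sub_zero (∫ x, _), ← h0, ← integral_sub (hint ⟨_, hg'⟩) (hint _), hK,
        ← integral_const_mul]
      refine norm_integral_le_of_norm_le ((hint ⟨_, logLift_mem 1 hχ⟩).norm.const_mul ε) ?_
      filter_upwards [ae_ne_zero hn] with x hx
      have e : star (u x) * (g x : ℂ) - star (u x) * logLift p χ x =
          ((g x : ℂ) - polyFn p x) * (star (u x) * logLift 1 χ x) := by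
        rw [logLift_of_ne _ _ hx, logLift_of_ne _ _ hx]
        by_cases hgx : g x = 0
        · simp [hgx, polyFn]; ring
        · rw [hχ1 _ (hM x (subset_tsupport g hgx))]
          simp [polyFn]; ring
      change ‖star (u x) * (g x : ℂ) - star (u x) * logLift p χ x‖ ≤ _
      rw [e, norm_mul]
      by_cases hxR : ‖x‖ ≤ Real.exp (|M| + 2)
      · exact mul_le_mul_of_nonneg_right (hp x hxR) (norm_nonneg _)
      · have : logLift 1 χ x = 0 := by
          rw [logLift_of_ne _ _ hx, hχ0, mul_zero]
          rw [not_le, ← Real.lt_log_iff_exp_lt (norm_pos_iff.2 hx)] at hxR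
          exact hxR.le.trans (le_abs_self _)
        simp [this]
    have hz : ∫ x, star (u x) * (g x : ℂ) = 0 := by
      by_contra hne
      have hpos := norm_pos_iff.2 hne
      have hK0 : 0 ≤ K := integral_nonneg fun _ => norm_nonneg _
      have := key (‖∫ x, star (u x) * (g x : ℂ)‖ / (2 * (K + 1))) (by positivity)
      rw [div_mul_eq_mul_div, le_div_iff₀ (by positivity)] at this
      nlinarith
    rw [← hz]
    congr 1 with x
    rw [Complex.real_smul, mul_comm]
  refine Lp.ext ?_
  filter_upwards [h, ae_ne_zero hn, Lp.coeFn_zero ℂ 2 volume] with x hx hx0 hz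
  rw [hz]
  simpa using hx hx0

end Completeness

section Sufficiency

open scoped InnerProductSpace

variable {n : ℕ} {c : ℝ}

theorem T3op_domain_dense (hn : 2 ≤ n) : Dense ((T3op n c).domain : Set (L2Euc n)) := by
  rw [Submodule.dense_iff_topologicalClosure_eq_top,
    Submodule.topologicalClosure_eq_top_iff, Submodule.eq_bot_iff]
  intro u hu
  refine eq_zero_of_inner_radialFn (by omega) fun ℓ p _ f hf => ?_
  obtain ⟨x, hx, -⟩ := exists_T3op_eq_testLp (c := c) ⟨_, radialFn_mem p ℓ f hf⟩
  rw [← hx, ← inner_conj_symm, hu x x.2, map_zero]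

theorem eq_zero_of_deficiency (hn : 2 ≤ n) (hc : CouplingBound n c) {ν : ℂ}
    (hν : star ν = -ν) (hν0 : ν ≠ 0) {u : L2Euc n}
    (hu : ∀ x : (T3op n c).domain, ⟪u, T3op n c x - ν • (x : L2Euc n)⟫_ℂ = 0) : u = 0 := by
  refine eq_zero_of_inner_radialFn (by omega) fun ℓ p hp f hf => ?_
  refine inner_radialFn_eq_zero hn hc hν hν0 (fun f => ?_) hp hf
  obtain ⟨x, hx, hTx⟩ := exists_T3op_eq_testLp (c := c) f
  have := hu x
  rwa [hx, hTx, inner_sub_right, inner_smul_right, sub_eq_zero] at this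

theorem CouplingBound.essentiallySelfAdjoint (hn : 2 ≤ n) (hc : CouplingBound n c) :
    EssentiallySelfAdjoint (T3op n c) := by
  refine essentiallySelfAdjoint_of_symmetric (T3op_domain_dense hn) T3op_symmetric
    (fun u hu => eq_zero_of_deficiency hn hc (ν := -Complex.I) (by simp) (by simp) fun x => ?_)
    (fun u hu => eq_zero_of_deficiency hn hc (ν := Complex.I) (by simp) (by simp) hu)
  rw [neg_smul, sub_neg_eq_add]
  exact hu x

end Sufficiency

section AdjointDomain

open Filter Topology
open scoped ContDiff InnerProductSpace

variable {n ℓ : ℕ} {p : MvPolynomial (Fin n) ℂ} {c : ℝ}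

theorem integral_radialFn_mul_formalT (hn : n ≠ 0) (hp : IsSolidHarmonic p ℓ) (f : SmoothFn)
    {φ : Euc n → ℂ} (hφ : φ ∈ testFunctions n) :
    ∫ x, radialFn p ℓ (expFn 3 * f : SmoothFn) x * formalT n c φ x =
      ∫ x, radialFn p ℓ (expFn (-3) * diffOp (radialPoly (angularParam n ℓ) c) f : SmoothFn) x *
        φ x := by
  obtain ⟨M, hM⟩ := exists_abs_log_norm_le hφ.2.1 hφ.2.2
  obtain ⟨χ, hχ, hχ1, -⟩ := exists_cutoff (M + 1)
  have hloc : ∀ x ∈ tsupport φ, (χ * f : SmoothFn).1 =ᶠ[𝓝 (Real.log ‖x‖)] f.1 := by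
    intro x hx
    have : ∀ᶠ t : ℝ in 𝓝 (Real.log ‖x‖), |t| < M + 1 :=
      continuous_abs.continuousAt.eventually_lt_const (by linarith [hM x hx])
    filter_upwards [this] with t ht
    simp [hχ1 t ht.le]
  have hmem := radialFn_mem p ℓ (expFn 3 * (χ * f)) (hχ.mul_right.mul_left)
  have h := integral_mul_formalT (c := c) hmem hφ
  refine Eq.trans ?_ (h.trans ?_)
  · congr 1 with x
    by_cases hx : x ∈ tsupport φ
    · have h0 : x ≠ 0 := fun h => hφ.2.2 (h ▸ hx)
      have e := (hloc x hx).eq_of_nhds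
      simp only [radialFn, logLift_of_ne _ _ h0, MulMemClass.coe_mul, Pi.mul_apply] at e ⊢
      rw [e]
    · rw [formalT_congr (notMem_tsupport_iff_eventuallyEq.1 hx)]
      have e : formalT n c (fun _ => 0) = 0 := congrArg Subtype.val (map_zero (testT c))
      change _ * formalT n c (fun _ => 0) x = _ * formalT n c (fun _ => 0) x
      simp [e]
  · refine integral_congr_ae ?_
    filter_upwards [ae_ne_zero hn] with x h0
    by_cases hx : x ∈ tsupport φ
    · have e := (diffOp_eventuallyEq (radialPoly (angularParam n ℓ) c) (hloc x hx)).eq_of_nhds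
      rw [formalT_radialFn hp c _ h0]
      simp only [radialFn, logLift_of_ne _ _ h0, MulMemClass.coe_mul, Pi.mul_apply] at e ⊢
      rw [e]
    · simp [image_eq_zero_of_notMem_tsupport hx]

/-- The conditions under which `expFn 3 * f` lifts to a vector in the domain of the adjoint. -/
def RadialDomain (P : Polynomial ℂ) (f : SmoothFn) : Prop :=
  MemLp (expFn 3 * f : SmoothFn).1 2 ∧ MemLp (expFn (-3) * diffOp P f : SmoothFn).1 2

theorem exists_mem_adjoint_domain (hn : 2 ≤ n) (hp : IsSolidHarmonic p ℓ) {f : SmoothFn}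
    (hf : RadialDomain (radialPoly (angularParam n ℓ) c) f) :
    ∃ x : (T3op n c).adjoint.domain,
      ((x : L2Euc n) : Euc n → ℂ) =ᵐ[volume] radialFn p ℓ (expFn 3 * f : SmoothFn) ∧
      (((T3op n c).adjoint x : L2Euc n) : Euc n → ℂ) =ᵐ[volume]
        radialFn p ℓ (expFn (-3) * diffOp (radialPoly (angularParam n ℓ) c) f : SmoothFn) := by
  have hn0 : n ≠ 0 := by omega
  have h1 := memLp_radialFn hn0 hp.isHomogeneous hf.1
  have h2 := memLp_radialFn hn0 hp.isHomogeneous hf.2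
  have key : ∀ y : (T3op n c).domain,
      ⟪h2.toLp, (y : L2Euc n)⟫_ℂ = ⟪h1.toLp, T3op n c y⟫_ℂ := by
    intro y
    obtain ⟨φ, hy, hTy⟩ := T3op_eq_testLp y
    have h := integral_radialFn_mul_formalT (c := c) hn0 hp f (conj_mem_testFunctions φ.2)
    rw [formalT_star] at h
    rw [hy, hTy, inner_testLp_right, inner_testLp_right]
    have h' := congrArg star h
    simp only [Complex.star_def, ← integral_conj] at h'
    refine Eq.trans ?_ (h'.symm.trans ?_)
    · refine integral_congr_ae ?_
      filter_upwards [h2.coeFn_toLp] with x hx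
      rw [hx]
      simp
    · refine integral_congr_ae ?_
      filter_upwards [h1.coeFn_toLp] with x hx
      rw [hx]
      simp [testT]
  have hd := T3op_domain_dense (c := c) hn
  have hmem : h1.toLp ∈ (T3op n c).adjoint.domain :=
    LinearPMap.mem_adjoint_domain_of_exists _ ⟨_, key⟩
  refine ⟨⟨_, hmem⟩, h1.coeFn_toLp, ?_⟩
  rw [LinearPMap.adjoint_apply_eq hd ⟨_, hmem⟩ key]
  exact h2.coeFn_toLp

theorem isSolidHarmonic_one : IsSolidHarmonic (1 : MvPolynomial (Fin n) ℂ) 0 :=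
  ⟨MvPolynomial.isHomogeneous_one _ _, by simp⟩

theorem integral_star_radialFn_mul (hn : n ≠ 0) (f g : SmoothFn) :
    ∫ x : Euc n, star (radialFn 1 0 f x) * radialFn 1 0 g x =
      (sphereMass n).toReal * ∫ t, star (f.1 t) * g.1 t := by
  have h := integral_log_norm hn (G := fun t => Complex.exp (-n * t) * (star (f.1 t) * g.1 t))
    (by have := f.continuous; have := g.continuous; fun_prop)
  refine Eq.trans (integral_congr_ae ?_) (h.trans ?_)
  · filter_upwards [ae_ne_zero hn] with x hx
    have e : (-n * Real.log ‖x‖ : ℂ) = -(angularExp n 0 + 1) * Real.log ‖x‖ +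
        -(angularExp n 0 + 1) * Real.log ‖x‖ := by
      simp [angularExp]; ring
    simp only [radialFn, logLift_of_ne _ _ hx, expFn_apply, e, Complex.exp_add]
    simp [polyFn, ← Complex.exp_conj]
    ring
  · congr 2 with t
    rw [← mul_assoc, Complex.ofReal_exp, ← Complex.exp_add]
    simp

theorem RadialDomain.conj {P : Polynomial ℂ} (hP : P.map (starRingEnd ℂ) = P) {f : SmoothFn}
    (hf : RadialDomain P f) : RadialDomain P (conjFn f) := by
  refine ⟨hf.1.congr_norm (SmoothFn.continuous _).aestronglyMeasurable (.of_forall fun t => ?_),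
    hf.2.congr_norm (SmoothFn.continuous _).aestronglyMeasurable (.of_forall fun t => ?_)⟩
  · simp [conjFn_apply]
  · simp [diffOp_conjFn, conjFn_apply, hP]

theorem integral_diffOp_mul_of_essentiallySelfAdjoint (hn : 2 ≤ n)
    (h : EssentiallySelfAdjoint (T3op n c)) {f g : SmoothFn}
    (hf : RadialDomain (radialPoly (angularParam n 0) c) f)
    (hg : RadialDomain (radialPoly (angularParam n 0) c) g) :
    ∫ t, (diffOp (radialPoly (angularParam n 0) c) f : ℝ → ℂ) t * (g : ℝ → ℂ) t =
      ∫ t, (f : ℝ → ℂ) t * (diffOp (radialPoly (angularParam n 0) c) g : ℝ → ℂ) t := by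
  have hn0 : n ≠ 0 := by omega
  set P := radialPoly (angularParam n 0) c with hP
  have hPs : P.map (starRingEnd ℂ) = P := radialPoly_map_star _ _
  obtain ⟨x, hx, hTx⟩ := exists_mem_adjoint_domain hn isSolidHarmonic_one (hf.conj hPs)
  obtain ⟨y, hy, hTy⟩ := exists_mem_adjoint_domain hn isSolidHarmonic_one hg
  have hs := adjoint_symmetric_of_isSelfAdjoint h.2 x y
  have hin : ∀ (v w : L2Euc n) (F G : SmoothFn), (v : Euc n → ℂ) =ᵐ[volume] radialFn 1 0 F →
      (w : Euc n → ℂ) =ᵐ[volume] radialFn 1 0 G →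
      ⟪v, w⟫_ℂ = (sphereMass n).toReal * ∫ t, star (F.1 t) * G.1 t := by
    intro v w F G hv hw
    rw [← integral_star_radialFn_mul hn0, L2.inner_def]
    refine integral_congr_ae ?_
    filter_upwards [hv, hw] with x hx hx'
    rw [hx, hx', RCLike.inner_apply, mul_comm]
    rfl
  rw [hin _ _ _ _ hTx hy, hin _ _ _ _ hx hTy] at hs
  have hm : ((sphereMass n).toReal : ℂ) ≠ 0 := by
    exact_mod_cast (ENNReal.toReal_pos (sphereMass_ne_zero hn0) sphereMass_ne_top).ne'
  have hs' := mul_left_cancel₀ hm hs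
  have e : ∀ t : ℝ, Complex.exp (-(3 * t)) * Complex.exp (3 * t) = 1 := fun t => by
    rw [← Complex.exp_add]; simp
  rw [diffOp_conjFn, ← hP, hPs] at hs'
  refine Eq.trans ?_ (hs'.trans ?_)
  · congr 1 with t
    simp [conjFn_apply, expFn_apply, ← Complex.exp_conj, Complex.conj_ofNat]
    linear_combination -(diffOp P f).1 t * g.1 t * e t
  · congr 1 with t
    simp [conjFn_apply, expFn_apply, ← Complex.exp_conj, Complex.conj_ofNat]
    linear_combination f.1 t * (diffOp P g).1 t * e t

end AdjointDomain

section Monomials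

open Polynomial
open scoped ContDiff

/-- The function `t ↦ t ^ j`. -/
def powFn (j : ℕ) : SmoothFn :=
  ⟨fun t => (t : ℂ) ^ j, show ContDiff ℝ ∞ fun t : ℝ => (t : ℂ) ^ j from
    Complex.ofRealCLM.contDiff.pow j⟩

theorem powFn_apply (j : ℕ) (t : ℝ) : (powFn j : ℝ → ℂ) t = (t : ℂ) ^ j := rfl

theorem smoothDeriv_powFn_succ (j : ℕ) : smoothDeriv (powFn (j + 1)) = (j + 1 : ℂ) • powFn j :=
  smoothDeriv_eq fun t => by
    have h : HasDerivAt (fun t : ℝ => (t : ℂ) ^ (j + 1)) _ t :=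
      (Complex.ofRealCLM.hasDerivAt (x := t)).pow (j + 1)
    refine h.congr_deriv ?_
    simp [powFn_apply]

theorem diffOp_X_pow_powFn (j : ℕ) : diffOp (X ^ j) (powFn j) = (j.factorial : ℂ) • 1 := by
  induction j with
  | zero => exact SmoothFn.ext' fun t => by simp [powFn_apply]
  | succ j ih =>
    rw [pow_succ, diffOp_mul, diffOp_X, smoothDeriv_powFn_succ, map_smul, ih, smul_smul,
      Nat.factorial_succ]
    push_cast
    rfl

theorem diffOp_one_right (P : ℂ[X]) : diffOp P 1 = P.eval 0 • (1 : SmoothFn) := by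
  rw [← expFn_zero, diffOp_expFn]

theorem diffOp_X_pow_mul_powFn (j : ℕ) (Q : ℂ[X]) :
    diffOp (X ^ j * Q) (powFn j) = (j.factorial * Q.eval 0 : ℂ) • 1 := by
  rw [mul_comm, diffOp_mul, diffOp_X_pow_powFn, map_smul, diffOp_one_right, smul_smul]

end Monomials

section Steps

open Polynomial Filter Topology Set
open scoped ContDiff

/-- A smooth function equal to `1` for `t ≤ s` and to `0` for `s + 1 ≤ t`. -/
def stepFn (s : ℝ) : SmoothFn :=
  ⟨fun t => ((1 - Real.smoothTransition (t - s) : ℝ) : ℂ), Complex.ofRealCLM.contDiff.comp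
    (contDiff_const.sub (Real.smoothTransition.contDiff.comp (contDiff_id.sub contDiff_const)))⟩

theorem stepFn_apply (s t : ℝ) :
    (stepFn s : ℝ → ℂ) t = ((1 - Real.smoothTransition (t - s) : ℝ) : ℂ) := rfl

theorem stepFn_of_le {s t : ℝ} (h : t ≤ s) : (stepFn s : ℝ → ℂ) t = 1 := by
  simp [stepFn_apply, Real.smoothTransition.zero_of_nonpos (sub_nonpos.2 h)]

theorem stepFn_of_ge {s t : ℝ} (h : s + 1 ≤ t) : (stepFn s : ℝ → ℂ) t = 0 := by
  simp [stepFn_apply, Real.smoothTransition.one_of_one_le (le_sub_iff_add_le'.2 h)]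

theorem norm_stepFn_le (s t : ℝ) : ‖(stepFn s : ℝ → ℂ) t‖ ≤ 1 := by
  rw [stepFn_apply, Complex.norm_real, Real.norm_eq_abs, abs_le]
  have h1 := Real.smoothTransition.nonneg (t - s)
  have h2 := Real.smoothTransition.le_one (t - s)
  constructor <;> linarith

theorem diffOp_stepFn_mul_of_lt (P : ℂ[X]) (e : SmoothFn) {s t : ℝ} (h : t < s) :
    (diffOp P (stepFn s * e) : ℝ → ℂ) t = (diffOp P e : ℝ → ℂ) t := by
  refine (diffOp_eventuallyEq P ?_).eq_of_nhds
  filter_upwards [Iio_mem_nhds h] with r hr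
  simp [stepFn_of_le (le_of_lt hr)]

theorem diffOp_stepFn_mul_of_gt (P : ℂ[X]) (e : SmoothFn) {s t : ℝ} (h : s + 1 < t) :
    (diffOp P (stepFn s * e) : ℝ → ℂ) t = 0 := by
  have := (diffOp_eventuallyEq P (f := stepFn s * e) (g := 0) (t := t) ?_).eq_of_nhds
  · simpa using this
  · filter_upwards [Ioi_mem_nhds h] with r hr
    simp [stepFn_of_ge (le_of_lt hr)]

theorem hasCompactSupport_diffOp_stepFn_mul {P : ℂ[X]} {e : SmoothFn} (he : diffOp P e = 0)
    (s : ℝ) : HasCompactSupport (diffOp P (stepFn s * e) : ℝ → ℂ) := by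
  refine HasCompactSupport.of_support_subset_isCompact (isCompact_Icc (a := s) (b := s + 1)) ?_
  intro t ht
  by_contra h
  refine ht ?_
  rw [mem_Icc, not_and_or, not_le, not_le] at h
  rcases h with h | h
  · rw [diffOp_stepFn_mul_of_lt P e h, he]; rfl
  · exact diffOp_stepFn_mul_of_gt P e h

theorem memLp_of_exp_decay {f : ℝ → ℂ} (hf : Continuous f) {δ s : ℝ} (hδ : 0 < δ)
    (hs : ∀ t, s ≤ t → f t = 0)
    (hO : (fun t => f (-t)) =O[atTop] fun t => Real.exp (-δ * t)) : MemLp f 2 := by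
  rw [memLp_two_iff_integrable_sq_norm hf.aestronglyMeasurable]
  have hc : Continuous fun t => ‖f t‖ ^ 2 := by fun_prop
  have h1 : IntegrableOn (fun t => ‖f (-t)‖ ^ 2) (Ioi (-s)) := by
    refine integrable_of_isBigO_exp_neg (b := 2 * δ) (by positivity) (by fun_prop) ?_
    refine (hO.norm_left.pow 2).congr_right fun t => ?_
    rw [← Real.exp_nat_mul]
    congr 1
    push_cast
    ring
  have h2 : IntegrableOn (fun t => ‖f t‖ ^ 2) (Iic s) := by
    rw [integrableOn_Iic_iff_integrableOn_Iio, ← (Measure.measurePreserving_neg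
      (volume : Measure ℝ)).integrableOn_comp_preimage (Homeomorph.neg ℝ).measurableEmbedding]
    simpa [Function.comp_def] using h1
  rw [← integrableOn_univ, ← Iic_union_Ioi (a := s), integrableOn_union]
  refine ⟨h2, integrableOn_zero.congr_fun (fun t ht => ?_) measurableSet_Ioi⟩
  simp [hs t (le_of_lt ht)]

theorem memLp_expFn_mul_stepFn (z : ℂ) (hz : 0 < z.re) (j : ℕ) (s : ℝ) :
    MemLp (expFn z * (stepFn s * powFn j) : SmoothFn).1 2 := by
  refine memLp_of_exp_decay (SmoothFn.continuous _) (half_pos hz) (s := s + 1) (fun t ht => ?_) ?_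
  · simp [stepFn_of_ge ht]
  · have h := (isLittleO_pow_exp_pos_mul_atTop j (half_pos hz)).isBigO
    have h2 : (fun t : ℝ => (expFn z * (stepFn s * powFn j) : SmoothFn).1 (-t)) =O[atTop]
        fun t => Real.exp (-z.re * t) * t ^ j := by
      refine Asymptotics.IsBigO.of_bound 1 (.of_forall fun t => ?_)
      simp only [MulMemClass.coe_mul, Pi.mul_apply, norm_mul, norm_expFn, powFn_apply, norm_pow,
        Complex.norm_real, one_mul, norm_neg, Real.norm_eq_abs, Real.abs_exp]
      rw [mul_neg, neg_mul]
      refine mul_le_mul_of_nonneg_left ?_ (Real.exp_pos _).le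
      exact mul_le_of_le_one_left (by positivity) (norm_stepFn_le _ _)
    refine h2.trans ((Asymptotics.isBigO_refl _ _).mul h |>.congr_right fun t => ?_)
    rw [← Real.exp_add]
    congr 1
    ring

theorem radialDomain_stepFn_mul {P : ℂ[X]} {z : ℂ} (hz : -3 < z.re) {j : ℕ}
    (he : diffOp P (expFn z * powFn j) = 0) (s : ℝ) :
    RadialDomain P (stepFn s * (expFn z * powFn j)) := by
  refine ⟨?_, memLp_of_hasCompactSupport
    (hasCompactSupport_diffOp_stepFn_mul he s).mul_left⟩
  have := memLp_expFn_mul_stepFn (3 + z) (by simp; linarith) j s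
  convert this using 2
  rw [← expFn_mul]
  ring

theorem integral_smoothDeriv_stepFn (s : ℝ) :
    ∫ t, (smoothDeriv (stepFn s) : ℝ → ℂ) t = -1 := by
  have hc : HasCompactSupport (smoothDeriv (stepFn s) : ℝ → ℂ) := by
    have := hasCompactSupport_diffOp_stepFn_mul (P := X) (e := 1) (by simp [diffOp_one_right]) s
    simpa using this
  have h := integral_of_hasDerivAt_of_tendsto (m := 1) (n := 0) (stepFn s).hasDerivAt
    ((SmoothFn.continuous _).integrable_of_hasCompactSupport hc)
    (tendsto_const_nhds.congr' <| (eventually_le_atBot s).mono fun t ht => (stepFn_of_le ht).symm)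
    (tendsto_const_nhds.congr' <|
      (eventually_ge_atTop (s + 1)).mono fun t ht => (stepFn_of_ge ht).symm)
  simpa using h

end Steps

section Necessity

open Polynomial

theorem diffOp_expFn_mul_powFn_eq_zero {P S : ℂ[X]} {z : ℂ} {j : ℕ}
    (hS : P.comp (X + C z) = X ^ (j + 1) * S) : diffOp P (expFn z * powFn j) = 0 := by
  rw [diffOp_expFn_mul, hS, pow_succ, mul_assoc, diffOp_X_pow_mul_powFn]
  simp

theorem hasCompactSupport_smoothDeriv_stepFn (s : ℝ) :
    HasCompactSupport (smoothDeriv (stepFn s) : ℝ → ℂ) := by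
  have h := hasCompactSupport_diffOp_stepFn_mul (P := X) (e := 1) (by simp [diffOp_one_right]) s
  rwa [mul_one, diffOp_X] at h

theorem integral_diffOp_stepFn_mul_ne_zero {P S : ℂ[X]} {z : ℂ} {j : ℕ}
    (hS : P.comp (X + C z) = X ^ (j + 1) * S) (hS0 : S.eval 0 ≠ 0) (s : ℝ) :
    ∫ t, (diffOp P (stepFn s * (expFn z * powFn 0)) : ℝ → ℂ) t *
      (expFn (-z) * powFn j : SmoothFn).1 t ≠ 0 := by
  have h := integral_diffOp_mul (X ^ j * S) (y := powFn j) (hasCompactSupport_smoothDeriv_stepFn s)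
  have e : (X ^ j * S).comp (-X) = X ^ j * ((-1) ^ j * S.comp (-X)) := by
    rw [mul_comp, pow_comp, X_comp, neg_pow]; ring
  have h2 : ∀ t, (diffOp P (stepFn s * (expFn z * powFn 0)) : ℝ → ℂ) t *
      (expFn (-z) * powFn j : SmoothFn).1 t =
      (diffOp (X ^ j * S) (smoothDeriv (stepFn s)) : ℝ → ℂ) t * (powFn j : ℝ → ℂ) t := by
    intro t
    have e1 : powFn 0 = 1 := SmoothFn.ext' fun t => by simp [powFn_apply]
    have e2 : (expFn z : ℝ → ℂ) t * (expFn (-z) : ℝ → ℂ) t = 1 := by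
      rw [expFn_apply, expFn_apply, ← Complex.exp_add]; simp
    rw [e1, mul_one, mul_comm (stepFn s), diffOp_expFn_mul, hS, pow_succ, mul_right_comm,
      diffOp_mul, diffOp_X]
    simp only [MulMemClass.coe_mul, Pi.mul_apply]
    linear_combination (diffOp (X ^ j * S) (smoothDeriv (stepFn s))).1 t * (powFn j).1 t * e2
  simp_rw [h2]
  rw [h, e, diffOp_X_pow_mul_powFn]
  simp only [SetLike.val_smul, OneMemClass.coe_one, Pi.smul_apply, Pi.one_apply, smul_eq_mul,
    mul_one]
  rw [integral_mul_const, integral_smoothDeriv_stepFn]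
  simp [hS0, Nat.factorial_ne_zero]

theorem couplingBound_of_essentiallySelfAdjoint {n : ℕ} (hn : 2 ≤ n) {c : ℝ}
    (h : EssentiallySelfAdjoint (T3op n c)) : CouplingBound n c := by
  refine couplingBound_of_three_le hn fun z hz => ?_
  by_contra! hlt
  obtain ⟨hz1, hz2⟩ := abs_lt.1 hlt
  set P := radialPoly (angularParam n 0) c with hP
  have hP0 : P ≠ 0 := radialPoly_ne_zero _ _
  obtain ⟨R, hR, hRz⟩ := exists_eq_pow_rootMultiplicity_mul_and_not_dvd P hP0 z
  obtain ⟨j, hj⟩ := Nat.exists_eq_succ_of_ne_zero ((rootMultiplicity_pos hP0).2 hz).ne'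
  rw [hj] at hR
  set S := R.comp (X + C z)
  have hS : P.comp (X + C z) = X ^ (j + 1) * S := by
    rw [hR]; simp [S]
  have hS0 : S.eval 0 ≠ 0 := by
    simpa [S, dvd_iff_isRoot] using hRz
  have hS1 : P.comp (X + C z) = X ^ (0 + 1) * (X ^ j * S) := by rw [hS]; ring
  have hS2 : P.comp (X + C (-z)) = X ^ (j + 1) * ((-1) ^ (j + 1) * S.comp (-X)) := by
    have h1 : P.comp (X + C (-z)) = (P.comp (X + C z)).comp (-X) := by
      have hPe : P.comp (-X) = P := radialPoly_comp_neg _ _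
      nth_rewrite 1 [← hPe]
      rw [comp_assoc, comp_assoc]
      congr 1
      simp [add_comm]
    rw [h1, hS, mul_comp, pow_comp, X_comp, neg_pow]
    ring
  have ha := diffOp_expFn_mul_powFn_eq_zero hS1
  have hb := diffOp_expFn_mul_powFn_eq_zero hS2
  have key := integral_diffOp_mul_of_essentiallySelfAdjoint hn h
    (radialDomain_stepFn_mul hz1 ha 0)
    (radialDomain_stepFn_mul (by rw [Complex.neg_re]; linarith) hb 2)
  rw [← hP] at key
  refine integral_diffOp_stepFn_mul_ne_zero hS hS0 0 (Eq.trans ?_ (key.trans ?_))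
  · congr 1 with t
    rcases le_or_gt t 2 with ht | ht
    · simp [stepFn_of_le ht]
    · rw [diffOp_stepFn_mul_of_gt P _ (by linarith), zero_mul, zero_mul]
  · refine integral_eq_zero_of_ae (.of_forall fun t => ?_)
    rcases lt_or_ge t 2 with ht | ht
    · simp [diffOp_stepFn_mul_of_lt P _ ht, hb]
    · simp [stepFn_of_ge (show (0 : ℝ) + 1 ≤ t by linarith)]

end Necessity

theorem stmt11 (n : ℕ) (hn : 2 ≤ n) (c : ℝ) :
    EssentiallySelfAdjoint (T3op n c) ↔
      ((n ≤ 9 →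
        (64/27) * (7112 + 504 * (n : ℝ) - 126 * (n : ℝ) ^ 2 +
          (236 + 12 * (n : ℝ) - 3 * (n : ℝ) ^ 2) *
            Real.sqrt (964 + 60 * (n : ℝ) - 15 * (n : ℝ) ^ 2)) ≤ c) ∧
       (10 ≤ n →
        -(((n : ℝ) + 8) * ((n : ℝ) + 4) * (n : ℝ) * ((n : ℝ) - 4) * ((n : ℝ) - 8) *
          ((n : ℝ) - 12)) / 64 ≤ c)) := by
  exact ⟨couplingBound_of_essentiallySelfAdjoint hn, CouplingBound.essentiallySelfAdjoint hn⟩
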